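/- arXiv:1110.6239 — 2 statements merged into one kernel-verified Lean document; each statement's English description precedes it below -/
import Mathlib

section
/- Let (A, m) be a noetherian local ring with infinite residue field, M a finitely generated A-module of Krull dimension d > 0, J an m-primary ideal, and I_1, ..., I_s ideals of A. Set I = I_1···I_s and assume ht((I + Ann_A M)/Ann_A M) = h > 0, and that k_0, k_1, ..., k_s are non-negative integers with k_0 + k_1 + ··· + k_s = d − 1 and k_1 + ··· + k_s < h. If x_1, ..., x_d is a Rees superficial sequence of (I_1, ..., I_s, J) with respect to M of the type (k_1, ..., k_s, k_0+1) that is a system of parameters for M, then e_A(J^{[k_0+1]}, I_1^{[k_1]}, ..., I_s^{[k_s]}, M) = e_A(x_1, ..., x_d, M). -/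
/-!
Let `q = (x₁, …, x_d)`, let `K` be the family of all the ideals, `J` among them, and let `deg S` be
the multidegree of a set `S` of indices of the `x_j`. For a large exponent `n` and a natural number
`m ≫ n`, put `R_S = K ^ (n - deg S) M` and `Q_S = q ^ (m - |S|) M`, and let `C_S` be `R_S` with the
power of `J` removed. Then `C_S ∩ Q_S ⊆ R_S`, so that

`ℓ(M / Q_S) = ℓ(C_S / R_S) + ℓ(R_S / (Q_S ∩ R_S)) + ℓ(M / (Q_S + C_S))`.

Take the alternating sum over `S`. On the left it is a `d`-th difference of the Hilbert–Samuel
polynomial, which is `e_A(x₁, …, x_d, M)`. Pairing `S` with `S ∪ {j}` for some `x_j ∈ J` turns the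
first sum on the right into a mixed difference of order `d - 1` of the polynomial defining the
mixed multiplicities. The second sum vanishes because `(R_S)` and `(Q_S ∩ R_S)` are Koszul complexes
which are exact in high degrees: a Rees superficial sequence is a joint reduction, and the
multigraded Artin–Rees lemma applies. The third vanishes because `dim M / C_S ≤ k₀` by the height
condition, while `k₀ + 1` of the `x_j` lie in `J`.
-/

open IsLocalRing

section MixedMultDefs

variable (A : Type*) [CommRing A]

/-- The length of an `A`-module `M`, defined as the height of `⊤` in the lattice of
submodules of `M` (i.e. the supremum of lengths of chains of submodules). -/
noncomputable def modLength (M : Type*) [AddCommGroup M] [Module A M] : ℕ∞ :=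
  Order.height (⊤ : Submodule A M)

/-- The length of a module as a natural number (`0` if the length is infinite). -/
noncomputable def lenNat (M : Type*) [AddCommGroup M] [Module A M] : ℕ :=
  (modLength A M).toNat

/-- The height of an ideal: the infimum of the heights of the prime ideals containing it. -/
noncomputable def idealHeight (I : Ideal A) : ℕ∞ :=
  ⨅ (p : PrimeSpectrum A) (_ : I ≤ p.asIdeal), Order.height p

/-- The Krull dimension of a module `M`, i.e. the Krull dimension of `A / Ann_A M`. -/
noncomputable def modDim (M : Type*) [AddCommGroup M] [Module A M] : WithBot ℕ∞ :=
  ringKrullDim (A ⧸ Module.annihilator A M)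

/-- `x` is a Rees superficial element of the family of ideals `I = (I 0, …, I (t-1))` with
respect to `M`, as an element of the ideal `I i`:  `x ∈ I i` and
`xM ∩ I_1^{n_1} ⋯ I_i^{n_i + 1} ⋯ I_t^{n_t} M = x I_1^{n_1} ⋯ I_i^{n_i} ⋯ I_t^{n_t} M`
for all sufficiently large `n i` and arbitrary other exponents. -/
def IsReesSuperficial (M : Type*) [AddCommGroup M] [Module A M] {t : ℕ}
    (I : Fin t → Ideal A) (i : Fin t) (x : A) : Prop :=
  x ∈ I i ∧ ∃ N : ℕ, ∀ n : Fin t → ℕ, N ≤ n i →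
    (Ideal.span {x} • (⊤ : Submodule A M)) ⊓
        ((∏ j, I j ^ (n j + if j = i then 1 else 0)) • (⊤ : Submodule A M)) =
      Ideal.span {x} • ((∏ j, I j ^ (n j)) • (⊤ : Submodule A M))

/-- `x 0, …, x (t-1)` is a Rees superficial sequence of the family `I` with respect to `M`,
where the assignment `c` records to which ideal each element of the sequence belongs:
`x i` is a Rees superficial element of `I`, as an element of `I (c i)`, with respect to
`M / (x 0, …, x (i-1)) M`. -/
def IsReesSuperficialSeq (M : Type*) [AddCommGroup M] [Module A M] {t s : ℕ}
    (I : Fin s → Ideal A) (x : Fin t → A) (c : Fin t → Fin s) : Prop :=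
  ∀ i : Fin t,
    IsReesSuperficial A
      (M ⧸ ((Ideal.span (x '' {j | (j : ℕ) < (i : ℕ)})) • (⊤ : Submodule A M)))
      I (c i) (x i)

/-- The assignment `c` has type `(k 0, …, k (s-1))`: for each `i`, exactly `k i` members of
the sequence are assigned to the ideal indexed by `i`. -/
def OfTypeCount {t s : ℕ} (c : Fin t → Fin s) (k : Fin s → ℕ) : Prop :=
  ∀ i : Fin s, (Finset.univ.filter fun j => c j = i).card = k i

/-- The ideal generated by the members of the sequence `x` assigned (by `c`) to index `i`. -/
def jrIdeal {t s : ℕ} (x : Fin t → A) (c : Fin t → Fin s) (i : Fin s) : Ideal A :=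
  Ideal.span (x '' {j | c j = i})

/-- The defining equation of a joint reduction:  all members of the sequence lie in their
assigned ideals, and `I_1^{n_1+1} ⋯ I_s^{n_s+1} M = Σ_i (𝔍_i) I_1^{n_1+1} ⋯ I_i^{n_i} ⋯
I_s^{n_s+1} M` for all sufficiently large `n_1, …, n_s`, where `𝔍_i` consists of the
members of the sequence assigned to `I i`. -/
def IsJointReductionEq (M : Type*) [AddCommGroup M] [Module A M] {t s : ℕ}
    (I : Fin s → Ideal A) (x : Fin t → A) (c : Fin t → Fin s) : Prop :=
  (∀ j, x j ∈ I (c j)) ∧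
  ∃ N : ℕ, ∀ n : Fin s → ℕ, (∀ i, N ≤ n i) →
    ((∏ i, I i ^ (n i + 1)) • (⊤ : Submodule A M)) =
      ∑ i : Fin s, jrIdeal A x c i •
        ((∏ j, I j ^ (n j + if j = i then 0 else 1)) • (⊤ : Submodule A M))

/-- A joint reduction of the family `I` with respect to `M` of type `k`. -/
def IsJointReduction (M : Type*) [AddCommGroup M] [Module A M] {t s : ℕ}
    (I : Fin s → Ideal A) (x : Fin t → A) (c : Fin t → Fin s) (k : Fin s → ℕ) : Prop :=
  IsJointReductionEq A M I x c ∧ OfTypeCount c k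

/-- `x 1, …, x d` is a system of parameters for `M`:  `d = dim M`, the `x j` lie in the
maximal ideal, and `M / (x 1, …, x d) M` has finite length. -/
def IsSOP [IsLocalRing A] (M : Type*) [AddCommGroup M] [Module A M] {d : ℕ}
    (x : Fin d → A) : Prop :=
  modDim A M = (d : ℕ∞) ∧ (∀ j, x j ∈ maximalIdeal A) ∧
    IsFiniteLength A (M ⧸ ((Ideal.span (Set.range x)) • (⊤ : Submodule A M)))

/-- `e` is the Hilbert–Samuel multiplicity of the ideal `q` on the `d`-dimensional module
`M`: the function `n ↦ ℓ_A(M / q^n M)` is eventually given by a polynomial of degree at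
most `d` with `n^d`-coefficient `e / d!`. -/
def IsHSMult (M : Type*) [AddCommGroup M] [Module A M] (q : Ideal A) (d : ℕ) (e : ℕ) :
    Prop :=
  ∃ P : Polynomial ℚ, P.natDegree ≤ d ∧
    (∃ N : ℕ, ∀ n : ℕ, N ≤ n →
      IsFiniteLength A (M ⧸ (q ^ n • (⊤ : Submodule A M))) ∧
      (lenNat A (M ⧸ (q ^ n • (⊤ : Submodule A M))) : ℚ) = P.eval (n : ℚ)) ∧
    (e : ℚ) = P.coeff d * (Nat.factorial d : ℚ)

/-- The subquotient `J^{n_0} I_1^{n_1} ⋯ I_s^{n_s} M / J^{n_0+1} I_1^{n_1} ⋯ I_s^{n_s} M`. -/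
abbrev mixedSub (M : Type*) [AddCommGroup M] [Module A M] {s : ℕ} (J : Ideal A)
    (I : Fin s → Ideal A) (n : Fin (s + 1) → ℕ) : Submodule A M :=
  (J ^ (n 0) * ∏ i : Fin s, I i ^ (n i.succ)) • (⊤ : Submodule A M)

/-- continued -/
abbrev mixedPiece (M : Type*) [AddCommGroup M] [Module A M] {s : ℕ} (J : Ideal A)
    (I : Fin s → Ideal A) (n : Fin (s + 1) → ℕ) :=
  ↥(mixedSub A M J I n) ⧸
    (Submodule.comap (mixedSub A M J I n).subtype
      ((J ^ (n 0 + 1) * ∏ i : Fin s, I i ^ (n i.succ)) • (⊤ : Submodule A M)))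

/-- `e` is the mixed multiplicity `e_A(J^{[k_0+1]}, I_1^{[k_1]}, …, I_s^{[k_s]}; M)`:
the function `(n_0, …, n_s) ↦ ℓ_A(J^{n_0} I_1^{n_1} ⋯ I_s^{n_s} M / J^{n_0+1} I_1^{n_1}
⋯ I_s^{n_s} M)` is, for all sufficiently large `n_0, …, n_s`, given by a polynomial of
total degree at most `k_0 + k_1 + ⋯ + k_s` whose coefficient of
`n_0^{k_0} n_1^{k_1} ⋯ n_s^{k_s}` is `e / (k_0! k_1! ⋯ k_s!)`. -/
def IsMixedMult (M : Type*) [AddCommGroup M] [Module A M] {s : ℕ} (J : Ideal A)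
    (I : Fin s → Ideal A) (k0 : ℕ) (k : Fin s → ℕ) (e : ℕ) : Prop :=
  ∃ P : MvPolynomial (Fin (s + 1)) ℚ, P.totalDegree ≤ k0 + ∑ i, k i ∧
    (∃ N : ℕ, ∀ n : Fin (s + 1) → ℕ, (∀ i, N ≤ n i) →
      IsFiniteLength A (mixedPiece A M J I n) ∧
      (lenNat A (mixedPiece A M J I n) : ℚ) =
        MvPolynomial.eval (fun i => (n i : ℚ)) P) ∧
    (e : ℚ) = MvPolynomial.coeff (Finsupp.equivFunOnFinite.symm (Fin.cons k0 k)) P *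
      ((Nat.factorial k0 * ∏ i, Nat.factorial (k i) : ℕ) : ℚ)

/-- `e` is the mixed multiplicity `e_A(I_1^{[k_1]}, …, I_s^{[k_s]}; M)` of a family of
`m`-primary ideals: the function `(n_1, …, n_s) ↦ ℓ_A(M / I_1^{n_1} ⋯ I_s^{n_s} M)` is, for
all sufficiently large `n_1, …, n_s`, given by a polynomial of total degree at most
`k_1 + ⋯ + k_s` whose coefficient of `n_1^{k_1} ⋯ n_s^{k_s}` is `e / (k_1! ⋯ k_s!)`. -/
def IsMixedMultPrimary (M : Type*) [AddCommGroup M] [Module A M] {s : ℕ}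
    (I : Fin s → Ideal A) (k : Fin s → ℕ) (e : ℕ) : Prop :=
  ∃ P : MvPolynomial (Fin s) ℚ, P.totalDegree ≤ ∑ i, k i ∧
    (∃ N : ℕ, ∀ n : Fin s → ℕ, (∀ i, N ≤ n i) →
      IsFiniteLength A (M ⧸ ((∏ i, I i ^ (n i)) • (⊤ : Submodule A M))) ∧
      (lenNat A (M ⧸ ((∏ i, I i ^ (n i)) • (⊤ : Submodule A M))) : ℚ) =
        MvPolynomial.eval (fun i => (n i : ℚ)) P) ∧
    (e : ℚ) = MvPolynomial.coeff (Finsupp.equivFunOnFinite.symm k) P *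
      ((∏ i, Nat.factorial (k i) : ℕ) : ℚ)

/-- The submodule `(0_M : I^∞) = ⋃_n (0_M : I^n)` of `M`. -/
def satSub (M : Type*) [AddCommGroup M] [Module A M] (I : Ideal A) : Submodule A M :=
  ⨆ n : ℕ, Submodule.torsionBySet A M ((I ^ n : Ideal A) : Set A)

/-- A polynomial function on an `A`-module `V` with values in the residue field of `A`:
an element of the subalgebra of functions generated by the linear ones. -/
def IsPolyFun [IsLocalRing A] (V : Type*) [AddCommGroup V] [Module A V]
    (f : V → ResidueField A) : Prop :=
  f ∈ Algebra.adjoin A {g : V → ResidueField A | ∃ l : V →ₗ[A] ResidueField A, g = ⇑l}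

/-- A Zariski open subset of an `A`-module `V` (for `V` a finite-dimensional vector space
over the residue field, this is the usual Zariski topology): the complement of the common
zero locus of a set of polynomial functions. -/
def IsZariskiOpen [IsLocalRing A] (V : Type*) [AddCommGroup V] [Module A V]
    (U : Set V) : Prop :=
  ∃ S : Set (V → ResidueField A), (∀ f ∈ S, IsPolyFun A V f) ∧
    U = {v | ∃ f ∈ S, f v ≠ 0}

end MixedMultDefs

namespace MixedMultiplicity

section RelativeLength

variable {A M N : Type*} [CommRing A] [AddCommGroup M] [Module A M] [AddCommGroup N] [Module A N]

/-- The length of `X / (X ∩ Y)`; it is used for `Y ≤ X`, as the length of the subquotient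
`X / Y`. -/
noncomputable def relLength (X Y : Submodule A M) : ℕ∞ :=
  Module.length A (X ⧸ Y.submoduleOf X)

lemma relLength_eq_length_of_surjective {X Y : Submodule A M} (f : X →ₗ[A] N)
    (hf : Function.Surjective f) (hker : ∀ v : X, f v = 0 ↔ (v : M) ∈ Y) :
    relLength X Y = Module.length A N := by
  have hY : Y.submoduleOf X = LinearMap.ker f := by
    ext v
    exact (hker v).symm
  rw [relLength, hY]
  exact (f.quotKerEquivOfSurjective hf).length_eq

lemma relLength_top (Y : Submodule A M) : relLength ⊤ Y = Module.length A (M ⧸ Y) :=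
  relLength_eq_length_of_surjective (Y.mkQ ∘ₗ (⊤ : Submodule A M).subtype)
    (Y.mkQ_surjective.comp fun v => ⟨⟨v, trivial⟩, rfl⟩) fun v => by simp

lemma relLength_sup (X Y : Submodule A M) : relLength (X ⊔ Y) Y = relLength X (X ⊓ Y) :=
  (LinearMap.quotientInfEquivSupQuotient X Y).length_eq.symm

lemma relLength_mono {X X' Y Y' : Submodule A M} (hX : X ≤ X') (hY : Y' ⊓ X ≤ Y) :
    relLength X Y ≤ relLength X' Y' := by
  have hle : Y'.submoduleOf X ≤ Y.submoduleOf X := fun v hv => hY ⟨hv, v.2⟩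
  refine (Module.length_le_of_surjective (Submodule.factor hle)
    (Submodule.factor_surjective hle)).trans
    (Module.length_le_of_injective ((Y'.submoduleOf X).mapQ (Y'.submoduleOf X')
      (Submodule.inclusion hX) fun v hv => hv) ?_)
  rw [← LinearMap.ker_eq_bot]
  exact Submodule.ker_liftQ_eq_bot _ _ _ fun v hv =>
    show (v : M) ∈ Y' from (Submodule.Quotient.mk_eq_zero (Y'.submoduleOf X')).1 hv

lemma relLength_add {X Y Z : Submodule A M} (hYX : Y ≤ X) (hZY : Z ≤ Y) :
    relLength X Z = relLength Y Z + relLength X Y := by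
  let f : Y →ₗ[A] X ⧸ Z.submoduleOf X := (Z.submoduleOf X).mkQ ∘ₗ Submodule.inclusion hYX
  have hYZ : relLength Y Z = Module.length A (LinearMap.range f) :=
    relLength_eq_length_of_surjective f.rangeRestrict f.surjective_rangeRestrict fun v => by
      rw [← LinearMap.mem_ker, LinearMap.ker_rangeRestrict, LinearMap.mem_ker]
      exact Submodule.Quotient.mk_eq_zero _
  have hXY : relLength X Y = Module.length A ((X ⧸ Z.submoduleOf X) ⧸ LinearMap.range f) := by
    refine relLength_eq_length_of_surjective ((LinearMap.range f).mkQ ∘ₗ (Z.submoduleOf X).mkQ)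
      ((Submodule.mkQ_surjective _).comp (Submodule.mkQ_surjective _)) fun v => ?_
    rw [LinearMap.comp_apply, Submodule.mkQ_apply, Submodule.Quotient.mk_eq_zero,
      LinearMap.range_comp, Submodule.range_inclusion, ← Submodule.mem_comap,
      Submodule.comap_map_mkQ]
    have hle : Z.submoduleOf X ≤ Y.comap X.subtype := Submodule.comap_mono hZY
    rw [sup_eq_right.2 hle]
    rfl
  rw [hYZ, hXY, relLength,
    Module.length_eq_add_of_exact (LinearMap.range f).subtype (LinearMap.range f).mkQ
      (Submodule.subtype_injective _) (Submodule.mkQ_surjective _)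
      (LinearMap.exact_subtype_mkQ _)]

lemma relLength_map_add_inf_ker (f : M →ₗ[A] N) {X Y : Submodule A M} (h : Y ≤ X) :
    relLength X Y = relLength (X ⊓ LinearMap.ker f) (Y ⊓ LinearMap.ker f) +
      relLength (X.map f) (Y.map f) := by
  have hker : relLength ((X ⊓ LinearMap.ker f) ⊔ Y) Y =
      relLength (X ⊓ LinearMap.ker f) (Y ⊓ LinearMap.ker f) := by
    rw [relLength_sup, inf_right_comm, inf_eq_right.2 h]
  have hmap : relLength X ((X ⊓ LinearMap.ker f) ⊔ Y) = relLength (X.map f) (Y.map f) := by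
    refine (relLength_eq_length_of_surjective
      (((Y.map f).submoduleOf (X.map f)).mkQ ∘ₗ f.submoduleMap X)
      ((Submodule.mkQ_surjective _).comp (f.submoduleMap_surjective X)) fun v => ?_)
    have hv : (v : M) ∈ Y ⊔ LinearMap.ker f ↔ (v : M) ∈ (X ⊓ LinearMap.ker f) ⊔ Y := by
      rw [sup_comm _ Y, inf_comm, ← sup_inf_assoc_of_le _ h, Submodule.mem_inf, and_iff_left v.2]
    rw [LinearMap.comp_apply, Submodule.mkQ_apply, Submodule.Quotient.mk_eq_zero, ← hv,
      ← Submodule.comap_map_eq]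
    rfl
  rw [relLength_add (sup_le inf_le_left h) le_sup_right, hker, hmap]

lemma relLength_top_smul_quotient (C : Submodule A M) (q : Ideal A) :
    relLength (⊤ : Submodule A (M ⧸ C)) (q • ⊤) = relLength (⊤ : Submodule A M) (q • ⊤ ⊔ C) := by
  have hq : q • (⊤ : Submodule A (M ⧸ C)) = (q • ⊤ ⊔ C : Submodule A M).map C.mkQ := by
    rw [Submodule.map_sup, Submodule.map_smul'', Submodule.map_top, Submodule.range_mkQ,
      Submodule.mkQ_map_self, sup_bot_eq]
  rw [hq, relLength_top, relLength_top]
  exact (Submodule.quotientQuotientEquivQuotient C _ le_sup_right).length_eq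

/-- The length of `X / (X ∩ Y)` as an integer, with value `0` if this length is infinite. -/
noncomputable def relLengthInt (X Y : Submodule A M) : ℤ := ((relLength X Y).toNat : ℤ)

lemma relLengthInt_add {X Y Z : Submodule A M} (hYX : Y ≤ X) (hZY : Z ≤ Y)
    (h : relLength X Z ≠ ⊤) :
    relLengthInt X Z = relLengthInt Y Z + relLengthInt X Y := by
  have hadd := relLength_add hYX hZY
  rw [hadd, Ne, ENat.add_eq_top, not_or] at h
  simp only [relLengthInt, hadd, ENat.toNat_add h.1 h.2, Nat.cast_add]

lemma relLengthInt_top_eq_add_add {C R Q : Submodule A M} (hRC : R ≤ C) (hCQ : C ⊓ Q ≤ R)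
    (hQ : relLength ⊤ Q ≠ ⊤) :
    relLengthInt ⊤ Q = relLengthInt C R + relLengthInt R (Q ⊓ R) + relLengthInt ⊤ (Q ⊔ C) := by
  have hinf : C ⊓ Q = Q ⊓ R :=
    le_antisymm (le_inf inf_le_right hCQ) (le_inf (inf_le_right.trans hRC) inf_le_left)
  have hfin : relLength C (Q ⊓ R) ≠ ⊤ :=
    ne_top_of_le_ne_top hQ (relLength_mono le_top (hinf ▸ inf_comm Q C).le)
  have hsup : relLengthInt (Q ⊔ C) Q = relLengthInt C (Q ⊓ R) := by
    rw [relLengthInt, relLengthInt, sup_comm, relLength_sup, hinf]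
  rw [relLengthInt_add le_top le_sup_left hQ, hsup, relLengthInt_add hRC inf_le_right hfin]
  ring

end RelativeLength

section Koszul

variable {A M : Type*} [CommRing A] [AddCommGroup M] [Module A M]

lemma relLength_eq_of_two_periodic_exact (δ : M →ₗ[A] M) {P Q : Bool → Submodule A M}
    (hPQ : ∀ b, P b ≤ Q b) (hP : ∀ b, P b ⊓ LinearMap.ker δ = (P !b).map δ)
    (hQ : ∀ b, Q b ⊓ LinearMap.ker δ = (Q !b).map δ) :
    relLength (Q true) (P true) = relLength (Q false) (P false) := by
  rw [relLength_map_add_inf_ker δ (hPQ true), relLength_map_add_inf_ker δ (hPQ false),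
    hP, hQ, hP, hQ, add_comm, Bool.not_true, Bool.not_false]

lemma relLength_pi {κ : Type*} [Fintype κ] (P Q : κ → Submodule A M) :
    relLength (Submodule.pi Set.univ Q) (Submodule.pi Set.univ P) =
      ∑ S, relLength (Q S) (P S) := by
  have hmem : ∀ {R : κ → Submodule A M} {z : κ → M},
      z ∈ Submodule.pi Set.univ R ↔ ∀ S, z S ∈ R S := by simp [Submodule.mem_pi]
  let f : Submodule.pi Set.univ Q →ₗ[A] ((S : κ) → Q S ⧸ (P S).submoduleOf (Q S)) :=
    LinearMap.pi fun S => ((P S).submoduleOf (Q S)).mkQ ∘ₗ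
      (LinearMap.proj S ∘ₗ (Submodule.pi Set.univ Q).subtype).codRestrict _
        fun z => hmem.1 z.2 S
  simp only [relLength, ← Module.length_pi_of_fintype]
  refine relLength_eq_length_of_surjective f (fun m => ?_) fun z => ?_
  · choose g hg using fun S => Submodule.mkQ_surjective _ (m S)
    exact ⟨⟨fun S => g S, hmem.2 fun S => (g S).2⟩, funext hg⟩
  · rw [hmem, funext_iff]
    exact forall_congr' fun S => Submodule.Quotient.mk_eq_zero _

variable {ι : Type*}

/-- The submodule of the `z` with `z S ∈ P S` that are supported in the degrees of parity `b`. -/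
def parityPart (P : Finset ι → Submodule A M) (b : Bool) : Submodule A (Finset ι → M) :=
  Submodule.pi Set.univ fun S => if S.card.bodd = b then P S else ⊥

lemma mem_parityPart {P : Finset ι → Submodule A M} {b : Bool} {z : Finset ι → M} :
    z ∈ parityPart P b ↔ (∀ S, z S ∈ P S) ∧ ∀ S, S.card.bodd = (!b) → z S = 0 := by
  simp only [parityPart, Submodule.mem_pi, Set.mem_univ, true_imp_iff, ← forall_and]
  refine forall_congr' fun S => ?_
  cases hS : S.card.bodd <;> cases b <;> simp +contextual

lemma toNat_relLength_parityPart [Fintype ι] {P Q : Finset ι → Submodule A M}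
    (hfin : ∀ S, relLength (Q S) (P S) ≠ ⊤) (b : Bool) :
    ((relLength (parityPart Q b) (parityPart P b)).toNat : ℤ) =
      ∑ S : Finset ι, if S.card.bodd = b then relLengthInt (Q S) (P S) else 0 := by
  have hterm : ∀ S : Finset ι,
      relLength (if S.card.bodd = b then Q S else ⊥) (if S.card.bodd = b then P S else ⊥) =
        ((if S.card.bodd = b then (relLength (Q S) (P S)).toNat else 0 : ℕ) : ℕ∞) := by
    intro S
    split_ifs
    · exact (ENat.natCast_toNat (hfin S)).symm
    · simp [relLength]
  rw [parityPart, parityPart, relLength_pi, Finset.sum_congr rfl fun S _ => hterm S,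
    ← Nat.cast_sum, ENat.toNat_natCast, Nat.cast_sum]
  exact Finset.sum_congr rfl fun S _ => by split_ifs <;> simp [relLengthInt]

variable [LinearOrder ι]

/-- The families `P` for which the elements `z` with `z S ∈ P S` form a Koszul subcomplex. -/
def IsKoszulStable (x : ι → A) (P : Finset ι → Submodule A M) : Prop :=
  ∀ S, ∀ j ∉ S, ∀ m ∈ P (insert j S), x j • m ∈ P S

lemma IsKoszulStable.inf {x : ι → A} {P Q : Finset ι → Submodule A M}
    (hP : IsKoszulStable x P) (hQ : IsKoszulStable x Q) :
    IsKoszulStable x fun S => P S ⊓ Q S :=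
  fun S j hj m hm => ⟨hP S j hj m hm.1, hQ S j hj m hm.2⟩

/-- The coefficient of `x j • e_S` in the Koszul differential of `e_{S ∪ {j}}`: the usual sign
if `j ∉ S`, and `0` if `j ∈ S`. -/
def koszulCoeff (A : Type*) [CommRing A] (j : ι) (S : Finset ι) : A :=
  if j ∈ S then 0 else (-1) ^ (S.filter (· < j)).card

lemma koszulCoeff_of_mem {j : ι} {S : Finset ι} (hj : j ∈ S) : koszulCoeff A j S = 0 :=
  if_pos hj

lemma koszulCoeff_mul_self {j : ι} {S : Finset ι} (hj : j ∉ S) :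
    koszulCoeff A j S * koszulCoeff A j S = 1 := by
  rw [koszulCoeff, if_neg hj, ← pow_add, ← two_mul, pow_mul, neg_one_sq, one_pow]

lemma koszulCoeff_insert {i j : ι} {S : Finset ι} (hij : i ≠ j) (hj : j ∉ S) :
    koszulCoeff A i (insert j S) = (if j < i then -1 else 1) * koszulCoeff A i S := by
  simp only [koszulCoeff, Finset.mem_insert, hij, false_or, Finset.filter_insert]
  split_ifs
  · simp
  · simp
  · rw [Finset.card_insert_of_notMem (by simp [hj]), pow_succ']
  · simp

lemma koszulCoeff_insert_mul_add {i j : ι} (hij : i ≠ j) {S : Finset ι} (hj : j ∉ S) :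
    koszulCoeff A i (insert j S) * koszulCoeff A j (insert i S) +
      koszulCoeff A j S * koszulCoeff A i S = 0 := by
  by_cases hi : i ∈ S
  · simp [koszulCoeff_of_mem, hi]
  rw [koszulCoeff_insert hij hj, koszulCoeff_insert hij.symm hi]
  rcases hij.lt_or_gt with h | h
  · rw [if_neg h.not_gt, if_pos h]; ring
  · rw [if_pos h, if_neg h.not_gt]; ring

lemma koszulCoeff_mul_insert_antisymm (i j : ι) (S : Finset ι) :
    koszulCoeff A j S * koszulCoeff A i (insert j S) +
      koszulCoeff A i S * koszulCoeff A j (insert i S) = 0 := by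
  by_cases hij : i = j
  · simp [hij, koszulCoeff_of_mem]
  by_cases hi : i ∈ S
  · simp [koszulCoeff_of_mem, hi]
  by_cases hj : j ∈ S
  · simp [koszulCoeff_of_mem, hj]
  rw [koszulCoeff_insert hij hj, koszulCoeff_insert (Ne.symm hij) hi]
  rcases lt_or_gt_of_ne hij with h | h
  · rw [if_neg h.not_gt, if_pos h]; ring
  · rw [if_pos h, if_neg h.not_gt]; ring

variable [Fintype ι]

/-- The total differential of the Koszul complex of the sequence `x` on `M`; the element
`∑ z S e_S` of the complex is encoded as the function `z`. -/
def koszulD (M : Type*) [AddCommGroup M] [Module A M] (x : ι → A) :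
    (Finset ι → M) →ₗ[A] (Finset ι → M) :=
  LinearMap.pi fun S => ∑ j, (koszulCoeff A j S * x j) • LinearMap.proj (insert j S)

lemma koszulD_apply (x : ι → A) (z : Finset ι → M) (S : Finset ι) :
    koszulD M x z S = ∑ j, (koszulCoeff A j S * x j) • z (insert j S) := by
  simp [koszulD]

lemma koszulD_koszulD (x : ι → A) (z : Finset ι → M) : koszulD M x (koszulD M x z) = 0 := by
  ext S
  simp only [koszulD_apply, Finset.smul_sum, Pi.zero_apply]
  rw [← Finset.sum_product']
  refine Finset.sum_involution (fun p _ => (p.2, p.1)) ?_ ?_ (by simp) (by simp)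
  · rintro ⟨j, i⟩ _
    rw [Finset.insert_comm j i, smul_smul, smul_smul, ← add_smul]
    have hcoeff : koszulCoeff A j S * x j * (koszulCoeff A i (insert j S) * x i) +
        koszulCoeff A i S * x i * (koszulCoeff A j (insert i S) * x j) = 0 := by
      linear_combination (x j * x i) * koszulCoeff_mul_insert_antisymm (A := A) i j S
    rw [hcoeff, zero_smul]
  · rintro ⟨j, i⟩ _ hne heq
    obtain rfl : i = j := congrArg Prod.fst heq
    exact hne (by simp [koszulCoeff_of_mem])

/-- Exterior multiplication by the `j`-th basis vector of the Koszul complex, a homotopy between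
multiplication by `x j` and zero. -/
def koszulHomotopy (A : Type*) [CommRing A] {M : Type*} [AddCommGroup M] [Module A M] (j : ι)
    (z : Finset ι → M) : Finset ι → M :=
  fun S => if j ∈ S then koszulCoeff A j (S.erase j) • z (S.erase j) else 0

lemma koszulD_koszulHomotopy_of_notMem (x : ι → A) {j : ι} (z : Finset ι → M) {S : Finset ι}
    (hj : j ∉ S) : koszulD M x (koszulHomotopy A j z) S = x j • z S := by
  rw [koszulD_apply, Finset.sum_eq_single j]
  · simp only [koszulHomotopy, Finset.mem_insert_self, if_true, Finset.erase_insert hj, smul_smul]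
    rw [mul_right_comm, koszulCoeff_mul_self hj, one_mul]
  · intro i _ hij
    simp [koszulHomotopy, hj, hij.symm]
  · simp

lemma koszulD_koszulHomotopy_insert (x : ι → A) {j : ι} (z : Finset ι → M) {S : Finset ι}
    (hj : j ∉ S) :
    koszulD M x (koszulHomotopy A j z) (insert j S) + koszulCoeff A j S • koszulD M x z S =
      x j • z (insert j S) := by
  rw [koszulD_apply, koszulD_apply, Finset.smul_sum, ← Finset.sum_add_distrib,
    Finset.sum_eq_single j]
  · rw [smul_smul, ← mul_assoc, koszulCoeff_mul_self hj, one_mul,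
      koszulCoeff_of_mem (Finset.mem_insert_self j S), zero_mul, zero_smul, zero_add]
  · intro i _ hij
    have herase : (insert i (insert j S)).erase j = insert i S := by
      rw [Finset.insert_comm, Finset.erase_insert (by simp [hj, hij.symm])]
    simp only [koszulHomotopy, Finset.mem_insert, true_or, or_true, if_true, herase]
    rw [smul_smul, smul_smul, ← add_smul]
    have hcoeff : koszulCoeff A i (insert j S) * x i * koszulCoeff A j (insert i S) +
        koszulCoeff A j S * (koszulCoeff A i S * x i) = 0 := by
      linear_combination x i * koszulCoeff_insert_mul_add (A := A) hij hj
    rw [hcoeff, zero_smul]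
  · simp

lemma koszulD_koszulHomotopy (x : ι → A) (j : ι) {z : Finset ι → M} (hz : koszulD M x z = 0) :
    koszulD M x (koszulHomotopy A j z) = x j • z := by
  ext S
  by_cases hj : j ∈ S
  · have h := koszulD_koszulHomotopy_insert x z (Finset.notMem_erase j S)
    rwa [Finset.insert_erase hj, hz, Pi.zero_apply, smul_zero, add_zero] at h
  · exact koszulD_koszulHomotopy_of_notMem x z hj

/-- Exactness of the Koszul subcomplex of the elements `z` with `z S ∈ P S`. -/
def IsKoszulExact (x : ι → A) (P : Finset ι → Submodule A M) : Prop :=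
  ∀ z, (∀ S, z S ∈ P S) → koszulD M x z = 0 → ∃ w, (∀ S, w S ∈ P S) ∧ koszulD M x w = z

lemma IsKoszulStable.koszulD_mem {x : ι → A} {P : Finset ι → Submodule A M}
    (hP : IsKoszulStable x P) {z : Finset ι → M} (hz : ∀ S, z S ∈ P S) (S : Finset ι) :
    koszulD M x z S ∈ P S := by
  rw [koszulD_apply]
  refine Submodule.sum_mem _ fun j _ => ?_
  by_cases hj : j ∈ S
  · simp [koszulCoeff_of_mem hj]
  · rw [mul_smul]
    exact Submodule.smul_mem _ _ (hP S j hj _ (hz _))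

lemma koszulD_eq_zero_of_support {x : ι → A} {b : Bool} {z : Finset ι → M}
    (hz : ∀ S, S.card.bodd = b → z S = 0) {S : Finset ι} (hS : S.card.bodd = !b) :
    koszulD M x z S = 0 := by
  rw [koszulD_apply]
  refine Finset.sum_eq_zero fun j _ => ?_
  by_cases hj : j ∈ S
  · simp [koszulCoeff_of_mem hj]
  · rw [hz _ (by rw [Finset.card_insert_of_notMem hj, Nat.bodd_succ, hS, Bool.not_not]), smul_zero]

lemma parityPart_inf_ker {x : ι → A} {P : Finset ι → Submodule A M}
    (hstable : IsKoszulStable x P) (hexact : IsKoszulExact x P) (b : Bool) :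
    parityPart P b ⊓ LinearMap.ker (koszulD M x) = (parityPart P !b).map (koszulD M x) := by
  refine le_antisymm ?_ (Submodule.map_le_iff_le_comap.2 fun w hw => ?_)
  · rintro z ⟨hz, hker⟩
    rw [SetLike.mem_coe, mem_parityPart] at hz
    obtain ⟨w, hw, rfl⟩ := hexact z hz.1 hker
    let u (c : Bool) : Finset ι → M := fun S => if S.card.bodd = c then w S else 0
    have hsum : w = u (!b) + u b := by
      ext S
      cases hS : S.card.bodd <;> cases b <;> simp [u, hS]
    have hu : ∀ c, u c ∈ parityPart P c := fun c => mem_parityPart.2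
      ⟨fun S => by dsimp only [u]; split_ifs; exacts [hw S, zero_mem _],
        fun S hS => if_neg (by simp [hS])⟩
    have hD : ∀ c, ∀ S, S.card.bodd = c → koszulD M x (u c) S = 0 := fun c S hS =>
      koszulD_eq_zero_of_support (mem_parityPart.1 (hu c)).2 (by rw [hS, Bool.not_not])
    refine ⟨u !b, hu _, funext fun S => ?_⟩
    by_cases hS : S.card.bodd = b
    · conv_rhs => rw [hsum, map_add, Pi.add_apply, hD b S hS, add_zero]
    · rw [hD _ S (Bool.eq_not_of_ne hS), hz.2 S (Bool.eq_not_of_ne hS)]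
  · rw [mem_parityPart, Bool.not_not] at hw
    exact ⟨mem_parityPart.2 ⟨hstable.koszulD_mem hw.1, fun S hS =>
      koszulD_eq_zero_of_support hw.2 hS⟩, koszulD_koszulD x w⟩

theorem sum_neg_one_pow_card_mul_relLengthInt_eq_zero {x : ι → A}
    {P Q : Finset ι → Submodule A M} (hPQ : ∀ S, P S ≤ Q S)
    (hP : IsKoszulStable x P) (hQ : IsKoszulStable x Q)
    (hexP : IsKoszulExact x P) (hexQ : IsKoszulExact x Q)
    (hfin : ∀ S, relLength (Q S) (P S) ≠ ⊤) :
    ∑ S : Finset ι, (-1 : ℤ) ^ S.card * relLengthInt (Q S) (P S) = 0 := by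
  have hperiod := relLength_eq_of_two_periodic_exact (koszulD M x)
    (fun b z hz => mem_parityPart.2 ((mem_parityPart.1 hz).imp_left fun h S => hPQ S (h S)))
    (parityPart_inf_ker hP hexP) (parityPart_inf_ker hQ hexQ)
  have hsum := congrArg (fun l : ℕ∞ => (l.toNat : ℤ)) hperiod
  simp only [toNat_relLength_parityPart hfin] at hsum
  rw [eq_comm, ← sub_eq_zero, ← Finset.sum_sub_distrib] at hsum
  rw [← hsum]
  refine Finset.sum_congr rfl fun S _ => ?_
  have hsign : (-1 : ℤ) ^ S.card = if S.card.bodd then -1 else 1 := by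
    rw [neg_one_pow_eq_pow_mod_two, Nat.mod_two_of_bodd]
    cases S.card.bodd <;> simp
  rw [hsign]
  cases S.card.bodd <;> simp

end Koszul

section MultiPow

variable {A σ : Type*} [CommRing A] [Fintype σ]

/-- The product `∏ i, K i ^ n i` of powers of a family of ideals. -/
def multiPow (K : σ → Ideal A) (n : σ → ℕ) : Ideal A := ∏ i, K i ^ n i

lemma multiPow_zero (K : σ → Ideal A) : multiPow K 0 = 1 := by
  simp [multiPow]

lemma multiPow_add (K : σ → Ideal A) (m n : σ → ℕ) :
    multiPow K (m + n) = multiPow K m * multiPow K n := by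
  simp [multiPow, pow_add, Finset.prod_mul_distrib]

lemma multiPow_nsmul (K : σ → Ideal A) (n : σ → ℕ) (r : ℕ) :
    multiPow K (r • n) = multiPow K n ^ r := by
  simp [multiPow, Finset.prod_pow, pow_mul']

lemma multiPow_antitone (K : σ → Ideal A) : Antitone (multiPow K) := fun m n h => by
  rw [← add_tsub_cancel_of_le h, multiPow_add]
  exact Ideal.mul_le_left

lemma multiPow_single [DecidableEq σ] (K : σ → Ideal A) (i : σ) (e : ℕ) :
    multiPow K (Pi.single i e) = K i ^ e := by
  rw [multiPow, Finset.prod_eq_single i (fun j _ hj => by simp [hj]) (by simp), Pi.single_eq_same]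

lemma prod_le_radical_multiPow (I : σ → Ideal A) (m : σ → ℕ) :
    ∏ i, I i ≤ (multiPow I m).radical := by
  have hle : (∏ i, I i) ^ ∑ i, m i ≤ multiPow I m := by
    rw [← Finset.prod_pow]
    exact multiPow_antitone I fun i =>
      Finset.single_le_sum_of_canonicallyOrdered (Finset.mem_univ i)
  exact fun a ha => ⟨_, hle (Ideal.pow_mem_pow ha _)⟩

variable {M : Type*} [AddCommGroup M] [Module A M]

lemma multiPow_smul_multiPow_smul_le (K : σ → Ideal A) {m n p : σ → ℕ} (h : p ≤ m + n)
    (N : Submodule A M) : multiPow K m • multiPow K n • N ≤ multiPow K p • N := by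
  rw [← mul_smul, ← multiPow_add]
  exact Submodule.smul_mono_left (multiPow_antitone K h)

end MultiPow

section MultiRees

variable {A σ : Type*} [CommRing A] [Fintype σ]

/-- The multi-Rees algebra `⨁ K ^ n T ^ n` of a family of ideals, as a subalgebra of the
polynomial ring. -/
def multiRees (K : σ → Ideal A) : Subalgebra A (MvPolynomial σ A) where
  carrier := {f | ∀ m : σ →₀ ℕ, f.coeff m ∈ multiPow K m}
  mul_mem' {f g} hf hg m := by
    classical
    rw [MvPolynomial.coeff_mul]
    refine Ideal.sum_mem _ fun p hp => ?_
    rw [← Finset.HasAntidiagonal.mem_antidiagonal.1 hp, Finsupp.coe_add, multiPow_add]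
    exact Ideal.mul_mem_mul (hf _) (hg _)
  add_mem' {f g} hf hg m := by
    rw [MvPolynomial.coeff_add]
    exact Ideal.add_mem _ (hf m) (hg m)
  algebraMap_mem' a m := by
    classical
    rw [MvPolynomial.algebraMap_eq, MvPolynomial.coeff_C]
    split_ifs with h
    · simp [← h, multiPow_zero]
    · exact Ideal.zero_mem _

lemma monomial_mem_multiRees {K : σ → Ideal A} {m : σ →₀ ℕ} {a : A} (h : a ∈ multiPow K m) :
    MvPolynomial.monomial m a ∈ multiRees K := fun n => by
  classical
  rw [MvPolynomial.coeff_monomial]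
  split_ifs with hmn
  · exact hmn ▸ h
  · exact Ideal.zero_mem _

lemma multiRees_le {K : σ → Ideal A} {R : Subalgebra A (MvPolynomial σ A)}
    (hR : ∀ i, ∀ a ∈ K i, MvPolynomial.monomial (Finsupp.single i 1) a ∈ R) :
    multiRees K ≤ R := by
  classical
  let L (m : σ →₀ ℕ) : Ideal A := (Subalgebra.toSubmodule R).comap (MvPolynomial.monomial m)
  have hadd : ∀ m n : σ →₀ ℕ, multiPow K m ≤ L m → multiPow K n ≤ L n →
      multiPow K (m + n) ≤ L (m + n) := fun m n hm hn => by
    rw [multiPow_add, Ideal.mul_le]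
    intro a ha b hb
    change MvPolynomial.monomial (m + n) (a * b) ∈ R
    rw [← MvPolynomial.monomial_mul]
    exact R.mul_mem (hm ha) (hn hb)
  have hzero : multiPow K (0 : σ →₀ ℕ) ≤ L 0 := fun a _ => R.algebraMap_mem a
  have hL : ∀ m : σ →₀ ℕ, multiPow K m ≤ L m := fun m => by
    induction m using Finsupp.induction_linear with
    | zero => exact hzero
    | add m n hm hn => exact hadd m n hm hn
    | single i e =>
      induction e with
      | zero => rwa [Finsupp.single_zero]
      | succ e ih =>
        rw [Finsupp.single_add]
        refine hadd _ _ ih fun a ha => hR i a ?_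
        rwa [Finsupp.single_eq_pi_single, multiPow_single, pow_one] at ha
  intro f hf
  rw [MvPolynomial.as_sum f]
  exact Subalgebra.sum_mem _ fun m _ => hL m (hf m)

lemma multiRees_fg [IsNoetherianRing A] (K : σ → Ideal A) : (multiRees K).FG := by
  classical
  choose s hs using fun i => (IsNoetherian.noetherian (K i) : (K i).FG)
  let T : Set (MvPolynomial σ A) :=
    ⋃ i, MvPolynomial.monomial (Finsupp.single i 1) '' (s i : Set A)
  have hT : T.Finite := Set.finite_iUnion fun i => (s i).finite_toSet.image _
  refine Subalgebra.fg_def.2 ⟨T, hT, le_antisymm (Algebra.adjoin_le ?_) (multiRees_le ?_)⟩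
  · refine Set.iUnion_subset fun i => ?_
    rintro _ ⟨a, ha, rfl⟩
    refine monomial_mem_multiRees ?_
    rw [Finsupp.single_eq_pi_single, multiPow_single, pow_one, ← hs i]
    exact Submodule.subset_span ha
  · intro i a ha
    have hle : K i ≤ (Subalgebra.toSubmodule (Algebra.adjoin A T)).comap
        (MvPolynomial.monomial (Finsupp.single i 1)) := by
      rw [← hs i, Submodule.span_le]
      exact fun b hb => Algebra.subset_adjoin (Set.mem_iUnion.2 ⟨i, b, hb, rfl⟩)
    exact hle ha

instance [IsNoetherianRing A] (K : σ → Ideal A) : IsNoetherianRing (multiRees K) :=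
  have : Algebra.FiniteType A (multiRees K) :=
    (Subalgebra.fg_iff_finiteType _).1 (multiRees_fg K)
  Algebra.FiniteType.isNoetherianRing A _

end MultiRees

section ArtinRees

variable {A σ G : Type*} [CommRing A]

/-- The coefficient of the monomial `n` in a vector of polynomials. -/
noncomputable def coeffVec (n : σ →₀ ℕ) : (G → MvPolynomial σ A) →ₗ[A] (G → A) :=
  (MvPolynomial.lcoeff A n).compLeft G

lemma coeffVec_smul [DecidableEq σ] (n : σ →₀ ℕ) (f : MvPolynomial σ A)
    (F : G → MvPolynomial σ A) : coeffVec n (f • F) =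
      ∑ p ∈ Finset.HasAntidiagonal.antidiagonal n, f.coeff p.1 • coeffVec p.2 F := by
  ext g
  simp [coeffVec, MvPolynomial.coeff_mul]

lemma exists_bound_of_coeffVec_ne_zero [Finite G] (T : Finset (G → MvPolynomial σ A)) :
    ∃ B : σ →₀ ℕ, ∀ F ∈ T, ∀ n, coeffVec n F ≠ 0 → n ≤ B := by
  have hfin : (⋃ F ∈ T, ⋃ g, ((F g).support : Set (σ →₀ ℕ))).Finite :=
    T.finite_toSet.biUnion fun F _ => Set.finite_iUnion fun g => Finset.finite_toSet _
  obtain ⟨B, hB⟩ := hfin.bddAbove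
  refine ⟨B, fun F hF n hn => hB ?_⟩
  obtain ⟨g, hg⟩ := Function.ne_iff.1 hn
  exact Set.mem_biUnion hF (Set.mem_iUnion.2 ⟨g, MvPolynomial.mem_support_iff.2 hg⟩)

variable [Fintype σ]

/-- The degree `n` part `⨁ g, K ^ (n - δ g) M` of a direct sum of copies of the multigraded module
`⨁ K ^ n M` shifted by the multidegrees `δ g`. The exponents are truncated at `0`. -/
def shiftedPow (M : Type*) [AddCommGroup M] [Module A M] (K : σ → Ideal A) (δ : G → σ → ℕ)
    (n : σ → ℕ) : Submodule A (G → M) :=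
  Submodule.pi Set.univ fun g => multiPow K (n - δ g) • ⊤

lemma mem_shiftedPow {M : Type*} [AddCommGroup M] [Module A M] {K : σ → Ideal A}
    {δ : G → σ → ℕ} {n : σ → ℕ} {z : G → M} :
    z ∈ shiftedPow M K δ n ↔ ∀ g, z g ∈ multiPow K (n - δ g) • (⊤ : Submodule A M) := by
  simp [shiftedPow, Submodule.mem_pi]

lemma mem_shiftedPow_self {K : σ → Ideal A} {δ : G → σ → ℕ} {n : σ → ℕ} {z : G → A} :
    z ∈ shiftedPow A K δ n ↔ ∀ g, z g ∈ multiPow K (n - δ g) := by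
  simp [mem_shiftedPow, Ideal.mul_top]

lemma multiPow_smul_inf_shiftedPow_le {M : Type*} [AddCommGroup M] [Module A M]
    (K : σ → Ideal A) (δ : G → σ → ℕ) (Z : Submodule A (G → M)) (m n : σ → ℕ) :
    multiPow K m • (Z ⊓ shiftedPow M K δ n) ≤ Z ⊓ shiftedPow M K δ (m + n) := by
  refine Submodule.smul_le.2 fun a ha z hz => ⟨Z.smul_mem a hz.1, mem_shiftedPow.2 fun g => ?_⟩
  exact multiPow_smul_multiPow_smul_le K (add_tsub_le_assoc (a := m) (b := n) (c := δ g)) _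
    (Submodule.smul_mem_smul ha (mem_shiftedPow.1 hz.2 g))

lemma multiPow_smul_inf_shiftedPow_le_smul {M : Type*} [AddCommGroup M] [Module A M]
    (K : σ → Ideal A) (δ : G → σ → ℕ) (Z : Submodule A (G → M)) {N m : σ → ℕ} (h : N ≤ m)
    (n : σ → ℕ) : multiPow K m • (Z ⊓ shiftedPow M K δ n) ≤
      multiPow K N • (Z ⊓ shiftedPow M K δ (m + n - N)) := by
  obtain ⟨l, rfl⟩ := exists_add_of_le h
  rw [multiPow_add, mul_smul, add_assoc, add_tsub_cancel_left]
  exact Submodule.smul_mono le_rfl (multiPow_smul_inf_shiftedPow_le K δ Z l n)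

/-- The Rees module `⨁ (Z ∩ ⨁ g, K ^ (n - δ g)) T ^ n` of a submodule `Z` of a free module. -/
def reesSubmodule (K : σ → Ideal A) (δ : G → σ → ℕ) (Z : Submodule A (G → A)) :
    Submodule (multiRees K) (G → MvPolynomial σ A) where
  carrier := {F | ∀ n : σ →₀ ℕ, coeffVec n F ∈ Z ⊓ shiftedPow A K δ n}
  add_mem' hF hF' n := by
    rw [map_add]
    exact add_mem (hF n) (hF' n)
  zero_mem' n := by
    rw [map_zero]
    exact zero_mem _
  smul_mem' f F hF n := by
    classical
    rw [Subalgebra.smul_def, coeffVec_smul]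
    refine Submodule.sum_mem _ fun p hp => ?_
    rw [← Finset.HasAntidiagonal.mem_antidiagonal.1 hp]
    exact multiPow_smul_inf_shiftedPow_le K δ Z _ _ (Submodule.smul_mem_smul (f.2 _) (hF _))

lemma reesSubmodule_fg [IsNoetherianRing A] [Finite G] (K : σ → Ideal A) (δ : G → σ → ℕ)
    (Z : Submodule A (G → A)) : (reesSubmodule K δ Z).FG := by
  classical
  cases nonempty_fintype G
  let δ' (g : G) : σ →₀ ℕ := Finsupp.equivFunOnFinite.symm (δ g)
  let e (g : G) (m : σ →₀ ℕ) : G → MvPolynomial σ A := Pi.single g (MvPolynomial.monomial m 1)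
  let W := Submodule.span (multiRees K) (⋃ g, e g '' Set.Iic (δ' g))
  have hW : W.FG := Submodule.fg_span (Set.finite_iUnion fun g => (Set.finite_Iic _).image _)
  refine hW.of_le fun F hF => ?_
  rw [← Finset.univ_sum_single F]
  refine Submodule.sum_mem _ fun g _ => ?_
  rw [MvPolynomial.as_sum (F g), ← AddMonoidHom.single_apply, map_sum]
  refine Submodule.sum_mem _ fun n _ => ?_
  have hn : n - δ' g + n ⊓ δ' g = n := by
    ext i
    simp only [Finsupp.add_apply, Finsupp.tsub_apply, Finsupp.inf_apply]
    omega
  let r : multiRees K := ⟨MvPolynomial.monomial (n - δ' g) ((F g).coeff n),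
    monomial_mem_multiRees (mem_shiftedPow_self.1 (hF n).2 g)⟩
  have hr : AddMonoidHom.single (fun _ : G => MvPolynomial σ A) g
      (MvPolynomial.monomial n ((F g).coeff n)) = r • e g (n ⊓ δ' g) := by
    rw [Subalgebra.smul_def, AddMonoidHom.single_apply, ← Pi.single_smul, smul_eq_mul,
      MvPolynomial.monomial_mul, hn, mul_one]
  rw [hr]
  exact Submodule.smul_mem _ _ (Submodule.subset_span
    (Set.mem_iUnion.2 ⟨g, n ⊓ δ' g, Set.mem_Iic.2 inf_le_right, rfl⟩))

lemma monomialVec_mem_reesSubmodule {K : σ → Ideal A} {δ : G → σ → ℕ} {Z : Submodule A (G → A)}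
    {n : σ →₀ ℕ} {z : G → A} (hz : z ∈ Z ⊓ shiftedPow A K δ n) :
    (fun g => MvPolynomial.monomial n (z g)) ∈ reesSubmodule K δ Z := fun m => by
  classical
  have hcoeff : coeffVec m (fun g => MvPolynomial.monomial n (z g)) = if n = m then z else 0 := by
    ext g
    split_ifs with h <;> simp [coeffVec, MvPolynomial.coeff_monomial, h]
  rw [hcoeff]
  split_ifs with h
  · exact h ▸ hz
  · exact zero_mem _

lemma exists_inf_shiftedPow_le_smul_of_free [IsNoetherianRing A] [Finite G] (K : σ → Ideal A)
    (δ : G → σ → ℕ) (Z : Submodule A (G → A)) :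
    ∃ B : σ → ℕ, ∀ N n, B + N ≤ n →
      Z ⊓ shiftedPow A K δ n ≤ multiPow K N • (Z ⊓ shiftedPow A K δ (n - N)) := by
  classical
  obtain ⟨T, hT⟩ := reesSubmodule_fg K δ Z
  obtain ⟨B, hB⟩ := exists_bound_of_coeffVec_ne_zero T
  refine ⟨B, fun N n hn z hz => ?_⟩
  obtain ⟨n, rfl⟩ : ∃ n' : σ →₀ ℕ, ⇑n' = n := ⟨Finsupp.equivFunOnFinite.symm n, rfl⟩
  have hF := monomialVec_mem_reesSubmodule (n := n) hz
  rw [← hT] at hF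
  obtain ⟨f, -, hf⟩ := Submodule.mem_span_finset.1 hF
  have hzf : z = coeffVec n (∑ F ∈ T, f F • F) := by
    rw [hf]
    ext g
    simp [coeffVec]
  rw [hzf, map_sum]
  refine Submodule.sum_mem _ fun F hFT => ?_
  rw [Subalgebra.smul_def, coeffVec_smul]
  refine Submodule.sum_mem _ fun p hp => ?_
  by_cases h0 : coeffVec p.2 F = 0
  · rw [h0, smul_zero]
    exact zero_mem _
  have hFZ : F ∈ reesSubmodule K δ Z := hT ▸ Submodule.subset_span hFT
  have hn' : ⇑n = ⇑p.1 + ⇑p.2 := by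
    rw [← Finset.HasAntidiagonal.mem_antidiagonal.1 hp, Finsupp.coe_add]
  have hN : N ≤ ⇑p.1 := fun i => by
    have := hn i
    have := hB F hFT _ h0 i
    simp only [hn', Pi.add_apply] at *
    omega
  rw [hn']
  exact multiPow_smul_inf_shiftedPow_le_smul K δ Z hN _
    (Submodule.smul_mem_smul ((f F).2 p.1) (hFZ p.2))

variable {M : Type*} [AddCommGroup M] [Module A M]

lemma mem_smul_top_iff_exists_sum {κ : Type*} [Fintype κ] {v : κ → M}
    (hv : Submodule.span A (Set.range v) = ⊤) (I : Ideal A) (m : M) :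
    m ∈ I • (⊤ : Submodule A M) ↔ ∃ w : κ → A, (∀ i, w i ∈ I) ∧ ∑ i, w i • v i = m := by
  rw [← hv, Submodule.mem_ideal_smul_span_iff_exists_sum]
  constructor
  · rintro ⟨w, hw, rfl⟩
    exact ⟨w, hw, by rw [Finsupp.sum_fintype _ _ fun i => zero_smul A (v i)]⟩
  · rintro ⟨w, hw, rfl⟩
    exact ⟨Finsupp.equivFunOnFinite.symm w, hw, Finsupp.sum_fintype _ _ fun i => zero_smul A (v i)⟩

theorem exists_inf_shiftedPow_le_smul [IsNoetherianRing A] [Module.Finite A M] [Finite G]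
    (K : σ → Ideal A) (δ : G → σ → ℕ) (Z : Submodule A (G → M)) :
    ∃ B : σ → ℕ, ∀ N n, B + N ≤ n →
      Z ⊓ shiftedPow M K δ n ≤ multiPow K N • (Z ⊓ shiftedPow M K δ (n - N)) := by
  obtain ⟨r, v, hv⟩ := Module.Finite.exists_fin (R := A) (M := M)
  let π : (G × Fin r → A) →ₗ[A] (G → M) :=
    LinearMap.pi fun g => ∑ i, (LinearMap.proj (g, i)).smulRight (v i)
  have hπ : ∀ w g, π w g = ∑ i, w (g, i) • v i := fun w g => by
    simp only [π, LinearMap.pi_apply, LinearMap.sum_apply, LinearMap.smulRight_apply,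
      LinearMap.proj_apply]
  obtain ⟨B, hB⟩ :=
    exists_inf_shiftedPow_le_smul_of_free K (fun p : G × Fin r => δ p.1) (Z.comap π)
  refine ⟨B, fun N n hn z hz => ?_⟩
  choose w hw hwz using fun g =>
    (mem_smul_top_iff_exists_sum hv _ _).1 (mem_shiftedPow.1 hz.2 g)
  have hlift : π (fun p => w p.1 p.2) = z := funext fun g => (hπ _ g).trans (hwz g)
  have hmem := Submodule.mem_map_of_mem (f := π) (hB N n hn (x := fun p => w p.1 p.2)
    ⟨by rw [SetLike.mem_coe, Submodule.mem_comap, hlift]; exact hz.1,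
      mem_shiftedPow_self.2 fun p => hw p.1 p.2⟩)
  rw [hlift, Submodule.map_smul''] at hmem
  refine Submodule.smul_mono le_rfl ?_ hmem
  rintro _ ⟨u, hu, rfl⟩
  exact ⟨hu.1, mem_shiftedPow.2 fun g => (mem_smul_top_iff_exists_sum hv _ _).2
    ⟨fun i => u (g, i), fun i => mem_shiftedPow_self.1 hu.2 (g, i), (hπ u g).symm⟩⟩

end ArtinRees

section PowFamily

variable {A M ι σ : Type*} [CommRing A] [AddCommGroup M] [Module A M] [DecidableEq σ]

/-- The multidegree of a set `S` of indices, where the index `j` has degree `c j`. -/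
def multiDeg (c : ι → σ) (S : Finset ι) : σ → ℕ := fun i => (S.filter fun j => c j = i).card

lemma multiDeg_mono (c : ι → σ) : Monotone (multiDeg c) := fun _ _ h _ =>
  Finset.card_le_card (Finset.filter_subset_filter _ h)

lemma multiDeg_insert [DecidableEq ι] (c : ι → σ) {j : ι} {S : Finset ι} (hj : j ∉ S) :
    multiDeg c (insert j S) = multiDeg c S + Pi.single (c j) 1 := by
  ext i
  by_cases hi : c j = i
  · subst hi
    simp [multiDeg, Finset.filter_insert, hj]
  · simp [multiDeg, Finset.filter_insert, hi]

variable [Fintype σ]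

/-- The submodules `K ^ (n - deg S) M` of `M`, indexed by the basis vectors of the Koszul complex;
they form the degree `n` part of the Koszul complex of `⨁ K ^ n M`. -/
def powFamily (M : Type*) [AddCommGroup M] [Module A M] (K : σ → Ideal A) (c : ι → σ)
    (n : σ → ℕ) (S : Finset ι) : Submodule A M :=
  multiPow K (n - multiDeg c S) • ⊤

lemma monotone_powFamily (K : σ → Ideal A) (c : ι → σ) (n : σ → ℕ) :
    Monotone (powFamily M K c n) := fun _ _ h =>
  Submodule.smul_mono_left (multiPow_antitone K (tsub_le_tsub_left (multiDeg_mono c h) n))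

/-- The ideal `∑ j, x j K ^ (n - e_{c j})`. -/
def jointReductionIdeal (K : σ → Ideal A) (c : ι → σ) (x : ι → A) (n : σ → ℕ) : Ideal A :=
  ⨆ j, Ideal.span {x j} * multiPow K (n - Pi.single (c j) 1)

lemma span_mul_multiPow_le_jointReductionIdeal (K : σ → Ideal A) (c : ι → σ) (x : ι → A)
    (n : σ → ℕ) (j : ι) :
    Ideal.span {x j} * multiPow K (n - Pi.single (c j) 1) ≤ jointReductionIdeal K c x n := by
  rw [jointReductionIdeal]
  exact le_iSup_of_le j le_rfl

/-- The joint reduction equation `K ^ N = ∑ j, x j K ^ (N - e_{c j})` in the degree `N`, modulo the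
annihilator of `M`. -/
structure IsReductionInDegree (M : Type*) [AddCommGroup M] [Module A M] (K : σ → Ideal A)
    (c : ι → σ) (x : ι → A) (N : σ → ℕ) : Prop where
  one_le : ∀ j, 1 ≤ N (c j)
  le : multiPow K N ≤ jointReductionIdeal K c x N ⊔ Module.annihilator A M

variable [LinearOrder ι]

lemma isKoszulStable_powFamily {K : σ → Ideal A} {c : ι → σ} {x : ι → A}
    (hx : ∀ j, x j ∈ K (c j)) (n : σ → ℕ) : IsKoszulStable x (powFamily M K c n) := by
  intro S j hj m hm
  have hxj : x j ∈ multiPow K (Pi.single (c j) 1) := by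
    rw [multiPow_single, pow_one]
    exact hx j
  refine multiPow_smul_multiPow_smul_le K ?_ _ (Submodule.smul_mem_smul hxj hm)
  rw [multiDeg_insert c hj, ← tsub_tsub]
  exact le_add_tsub

lemma isKoszulStable_span_pow (x : ι → A) (n : ℕ) :
    IsKoszulStable x fun S =>
      Ideal.span (Set.range x) ^ (n - S.card) • (⊤ : Submodule A M) := by
  intro S j hj m hm
  simp only [Finset.card_insert_of_notMem hj] at hm
  have h := Submodule.smul_mem_smul (Ideal.subset_span (Set.mem_range_self (f := x) j)) hm
  rw [← mul_smul, ← pow_succ'] at h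
  exact Submodule.smul_mono_left (Ideal.pow_le_pow_right (by omega)) h

lemma koszulHomotopy_mem_powFamily_inf {K : σ → Ideal A} {c : ι → σ} {n N : σ → ℕ} {j : ι}
    (hN : 1 ≤ N (c j)) {Ω : Finset ι → Submodule A M} (hΩ : Monotone Ω) {b : A}
    (hb : b ∈ multiPow K (N - Pi.single (c j) 1)) {z : Finset ι → M}
    (hz : ∀ S, z S ∈ powFamily M K c (n - N) S ⊓ Ω S) (S : Finset ι) :
    b • koszulHomotopy A j z S ∈ powFamily M K c n S ⊓ Ω S := by
  rw [koszulHomotopy]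
  split_ifs with hj
  swap
  · rw [smul_zero]
    exact zero_mem _
  rw [smul_comm]
  have hdeg : multiDeg c S = multiDeg c (S.erase j) + Pi.single (c j) 1 := by
    rw [← multiDeg_insert c (Finset.notMem_erase j S), Finset.insert_erase hj]
  refine Submodule.smul_mem _ _ ⟨?_, Submodule.smul_mem _ _ (hΩ (S.erase_subset j) (hz _).2)⟩
  refine multiPow_smul_multiPow_smul_le K ?_ _ (Submodule.smul_mem_smul hb (hz (S.erase j)).1)
  rw [hdeg]
  intro i
  simp only [Pi.add_apply, Pi.sub_apply, Pi.single_apply]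
  split_ifs with hi
  · subst hi
    omega
  · omega

end PowFamily

section KoszulExact

variable {A M ι σ : Type*} [CommRing A] [AddCommGroup M] [Module A M] [LinearOrder ι] [Fintype ι]
  [DecidableEq σ] [Fintype σ]

theorem exists_isKoszulExact_powFamily_inf [IsNoetherianRing A] [Module.Finite A M]
    {K : σ → Ideal A} {c : ι → σ} {x : ι → A} {N : σ → ℕ} (hred : IsReductionInDegree M K c x N)
    {Ω : Finset ι → Submodule A M} (hΩ : Monotone Ω) :
    ∃ B : σ → ℕ, ∀ n, B ≤ n → IsKoszulExact x fun S => powFamily M K c n S ⊓ Ω S := by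
  obtain ⟨B, hB⟩ := exists_inf_shiftedPow_le_smul K (multiDeg c)
    (LinearMap.ker (koszulD M x) ⊓ Submodule.pi Set.univ Ω)
  refine ⟨B + N, fun n hn z hz hz0 => ?_⟩
  let P : Submodule A (Finset ι → M) := Submodule.pi Set.univ fun S => powFamily M K c n S ⊓ Ω S
  suffices z ∈ P.map (koszulD M x) by
    obtain ⟨w, hw, rfl⟩ := this
    exact ⟨w, fun S => hw S trivial, rfl⟩
  have hzB := hB N n hn (x := z) ⟨⟨hz0, fun S _ => (hz S).2⟩, fun S _ => (hz S).1⟩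
  refine Submodule.smul_le.2 (fun a ha z' hz' => ?_) hzB
  obtain ⟨⟨hcycle, hz'Ω⟩, hz'K⟩ := hz'
  let L : Ideal A := (P.map (koszulD M x)).comap (LinearMap.toSpanSingleton A _ z')
  suffices h : multiPow K N ≤ L from h ha
  refine hred.le.trans (sup_le (iSup_le fun j => ?_) fun b hb => ?_)
  · rw [Ideal.span_singleton_mul_le_iff]
    refine fun b hb => ⟨b • koszulHomotopy A j z', fun S _ => ?_, ?_⟩
    · exact koszulHomotopy_mem_powFamily_inf (hred.one_le j) hΩ hb
        (fun S => ⟨hz'K S trivial, hz'Ω S trivial⟩) S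
    · rw [map_smul, koszulD_koszulHomotopy x j hcycle, smul_smul, mul_comm]
      rfl
  · have hbz : b • z' = 0 := funext fun S => Module.mem_annihilator.1 hb _
    change b • z' ∈ P.map (koszulD M x)
    exact hbz ▸ zero_mem (P.map (koszulD M x) : Submodule A (Finset ι → M))

theorem exists_isKoszulExact_span_pow_inf [IsNoetherianRing A] [Module.Finite A M] (x : ι → A)
    {Ω : Finset ι → Submodule A M} (hΩ : Monotone Ω) :
    ∃ B : ℕ, ∀ n, B ≤ n → IsKoszulExact x fun S =>
      Ideal.span (Set.range x) ^ (n - S.card) • (⊤ : Submodule A M) ⊓ Ω S := by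
  let K : Unit → Ideal A := fun _ => Ideal.span (Set.range x)
  have hK : ∀ n, multiPow K n = Ideal.span (Set.range x) ^ n () := fun n => by simp [multiPow, K]
  have hred : IsReductionInDegree M K (fun _ => ()) x 1 := by
    refine ⟨fun _ => le_rfl, le_sup_of_le_left ?_⟩
    rw [hK, Pi.one_apply, pow_one, Ideal.span_le]
    rintro _ ⟨j, rfl⟩
    refine Submodule.mem_iSup_of_mem j ?_
    simp [hK]
  obtain ⟨B, hB⟩ := exists_isKoszulExact_powFamily_inf hred hΩ
  refine ⟨B (), fun n hn => ?_⟩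
  convert hB (fun _ => n) (fun _ => hn) using 2 with S
  simp [powFamily, hK, multiDeg]

end KoszulExact

section IdealReduction

variable {A M : Type*} [CommRing A] [AddCommGroup M] [Module A M]

lemma exists_pow_succ_mem_of_smul_top_le [Module.Finite A M] {a c : Ideal A} (hca : c ≤ a)
    (h : a • (⊤ : Submodule A M) ≤ c • ⊤) {y : A} (hy : y ∈ a) :
    ∃ r, y ^ (r + 1) ∈ c * a ^ r ⊔ Module.annihilator A M := by
  obtain ⟨p, hmonic, -, hcoeff, hroot⟩ :=
    LinearMap.exists_monic_and_natDegree_eq_and_coeff_mem_pow_and_aeval_eq_zero A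
      (algebraMap A (Module.End A M) y) c (by
        rintro _ ⟨m, rfl⟩
        exact h (Submodule.smul_mem_smul hy trivial))
  have hann : y * p.eval y ∈ Module.annihilator A M :=
    Ideal.mul_mem_left _ y (Module.mem_annihilator.2 fun m => by
      simpa [Polynomial.aeval_algebraMap_apply] using LinearMap.congr_fun hroot m)
  have hlow : ∀ i ∈ Finset.range p.natDegree, y * (p.coeff i * y ^ i) ∈ c * a ^ p.natDegree := by
    intro i hi
    obtain ⟨l, hl⟩ := Nat.exists_eq_add_of_lt (Finset.mem_range.1 hi)
    have hci : p.coeff i ∈ c * c ^ l := by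
      rw [← pow_succ']
      convert hcoeff i using 2
      omega
    have hle : a * (c * c ^ l * a ^ i) ≤ c * a ^ p.natDegree := calc
      a * (c * c ^ l * a ^ i) ≤ a * (c * a ^ l * a ^ i) := by gcongr
      _ = c * a ^ p.natDegree := by rw [hl]; ring
    exact hle (Ideal.mul_mem_mul hy (Ideal.mul_mem_mul hci (Ideal.pow_mem_pow hy i)))
  rw [Polynomial.eval_eq_sum_range, Finset.sum_range_succ, hmonic.coeff_natDegree, one_mul, mul_add,
    Finset.mul_sum, ← pow_succ'] at hann
  refine ⟨p.natDegree, ?_⟩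
  exact (Submodule.add_mem_iff_right _ (Ideal.mem_sup_left (Ideal.sum_mem _ hlow))).1
    (Ideal.mem_sup_right hann)

lemma pow_mul_pow_le_of_pow_succ_le {a b c N : Ideal A} (hba : b ≤ a) {G : ℕ}
    (hG : b ^ (G + 1) ≤ c * a ^ G ⊔ N) {u l n : ℕ} (hu : G + 1 ≤ u) (hn : u + l = n + 1) :
    b ^ u * a ^ l ≤ c * a ^ n ⊔ N := by
  obtain ⟨v, rfl⟩ := Nat.exists_eq_add_of_le hu
  obtain rfl : n = G + v + l := by omega
  calc b ^ (G + 1 + v) * a ^ l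
      = b ^ (G + 1) * (b ^ v * a ^ l) := by ring
    _ ≤ (c * a ^ G ⊔ N) * (a ^ v * a ^ l) := by gcongr
    _ = c * a ^ (G + v + l) ⊔ N * (a ^ v * a ^ l) := by
        rw [Ideal.sup_mul]
        congr 1
        ring
    _ ≤ c * a ^ (G + v + l) ⊔ N := sup_le_sup_left Ideal.mul_le_left _

lemma sup_pow_succ_le {a b₁ b₂ c N : Ideal A} (hb₁ : b₁ ≤ a) (hb₂ : b₂ ≤ a) {G₁ G₂ : ℕ}
    (h₁ : b₁ ^ (G₁ + 1) ≤ c * a ^ G₁ ⊔ N) (h₂ : b₂ ^ (G₂ + 1) ≤ c * a ^ G₂ ⊔ N) :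
    (b₁ ⊔ b₂) ^ (G₁ + G₂ + 1 + 1) ≤ c * a ^ (G₁ + G₂ + 1) ⊔ N := by
  rw [← Ideal.add_eq_sup, add_pow]
  refine Finset.sum_induction _ (· ≤ c * a ^ (G₁ + G₂ + 1) ⊔ N) (fun _ _ => sup_le) bot_le
    fun i hi => Ideal.mul_le_left.trans ?_
  have hi' := Finset.mem_range.1 hi
  rcases le_or_gt (G₁ + 1) i with hi₁ | hi₁
  · refine le_trans ?_ (pow_mul_pow_le_of_pow_succ_le (l := G₁ + G₂ + 2 - i) hb₁ h₁ hi₁ (by omega))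
    gcongr
  · refine le_trans ?_ (pow_mul_pow_le_of_pow_succ_le (u := G₁ + G₂ + 2 - i) (l := i) hb₂ h₂
      (by omega) (by omega))
    rw [mul_comm]
    gcongr

theorem exists_pow_succ_le_of_smul_top_le [IsNoetherianRing A] [Module.Finite A M] {a c : Ideal A}
    (hca : c ≤ a) (h : a • (⊤ : Submodule A M) ≤ c • ⊤) :
    ∃ G, a ^ (G + 1) ≤ c * a ^ G ⊔ Module.annihilator A M := by
  suffices ∀ b : Ideal A, b ≤ a → ∃ G, b ^ (G + 1) ≤ c * a ^ G ⊔ Module.annihilator A M from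
    this a le_rfl
  intro b
  refine Submodule.fg_induction (motive := fun (b : Ideal A) _ =>
    b ≤ a → ∃ G, b ^ (G + 1) ≤ c * a ^ G ⊔ Module.annihilator A M)
    (fun y hy => ?_) (fun b₁ b₂ _ _ h₁ h₂ hb => ?_) b (IsNoetherian.noetherian b)
  · obtain ⟨r, hr⟩ :=
      exists_pow_succ_mem_of_smul_top_le hca h (hy (Submodule.mem_span_singleton_self y))
    refine ⟨r, ?_⟩
    change Ideal.span {y} ^ _ ≤ _
    rwa [Ideal.span_singleton_pow, Ideal.span_singleton_le_iff_mem]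
  · have hb₁ := le_sup_left.trans hb
    have hb₂ := le_sup_right.trans hb
    obtain ⟨G₁, h₁⟩ := h₁ hb₁
    obtain ⟨G₂, h₂⟩ := h₂ hb₂
    exact ⟨_, sup_pow_succ_le hb₁ hb₂ h₁ h₂⟩

end IdealReduction

section JointReduction

variable {A M σ : Type*} [DecidableEq σ]

lemma single_one_le {n : σ → ℕ} {i : σ} (hi : 1 ≤ n i) : Pi.single i 1 ≤ n := fun j => by
  rw [Pi.single_apply]
  split_ifs with h
  · rwa [h]
  · exact Nat.zero_le _

variable [CommRing A] [AddCommGroup M] [Module A M] [Fintype σ]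

lemma jointReductionIdeal_le_multiPow {ι : Type*} {K : σ → Ideal A} {c : ι → σ} {x : ι → A}
    (hx : ∀ j, x j ∈ K (c j)) {n : σ → ℕ} (hn : ∀ j, 1 ≤ n (c j)) :
    jointReductionIdeal K c x n ≤ multiPow K n := by
  refine iSup_le fun j => ?_
  have hle : Pi.single (c j) 1 ≤ n := single_one_le (hn j)
  rw [← add_tsub_cancel_of_le hle, multiPow_add, multiPow_single, pow_one, add_tsub_cancel_left]
  exact Ideal.mul_mono_left ((Ideal.span_singleton_le_iff_mem _).2 (hx j))

lemma jointReductionIdeal_mul_multiPow_le {ι : Type*} {K : σ → Ideal A} {c : ι → σ} {x : ι → A}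
    {n : σ → ℕ} (hn : ∀ j, 1 ≤ n (c j)) (m : σ → ℕ) :
    jointReductionIdeal K c x n * multiPow K m ≤ jointReductionIdeal K c x (n + m) := by
  rw [jointReductionIdeal, Ideal.iSup_mul]
  refine iSup_mono fun j => ?_
  rw [mul_assoc, ← multiPow_add, tsub_add_eq_add_tsub (single_one_le (hn j))]

theorem exists_isReductionInDegree [IsNoetherianRing A] [Module.Finite A M] {ι : Type*}
    {K : σ → Ideal A} {c : ι → σ} {x : ι → A} (hx : ∀ j, x j ∈ K (c j)) {N : σ → ℕ}
    (hN : ∀ j, 1 ≤ N (c j))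
    (h : multiPow K N • (⊤ : Submodule A M) ≤ jointReductionIdeal K c x N • ⊤) :
    ∃ N', IsReductionInDegree M K c x N' := by
  obtain ⟨G, hG⟩ := exists_pow_succ_le_of_smul_top_le (jointReductionIdeal_le_multiPow hx hN) h
  refine ⟨N + G • N, fun j => Nat.le_add_right_of_le (hN j), ?_⟩
  rw [multiPow_add, multiPow_nsmul, ← pow_succ']
  refine hG.trans (sup_le_sup_right ?_ _)
  rw [← multiPow_nsmul]
  exact jointReductionIdeal_mul_multiPow_le hN _

/-- The ideal generated by the first `i` members of the sequence `x`. -/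
def initialIdeal {d : ℕ} (x : Fin d → A) (i : ℕ) : Ideal A := Ideal.span (x '' {j | (j : ℕ) < i})

lemma initialIdeal_zero {d : ℕ} (x : Fin d → A) : initialIdeal x 0 = ⊥ := by
  simp [initialIdeal]

lemma initialIdeal_last {d : ℕ} (x : Fin d → A) : initialIdeal x d = Ideal.span (Set.range x) := by
  simp [initialIdeal]

lemma initialIdeal_succ {d : ℕ} (x : Fin d → A) (i : Fin d) :
    initialIdeal x (i + 1) = initialIdeal x i ⊔ Ideal.span {x i} := by
  rw [initialIdeal, initialIdeal, ← Ideal.span_union, ← Set.image_singleton, ← Set.image_union]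
  congr 2
  ext j
  simp [le_iff_eq_or_lt, Fin.ext_iff]

theorem exists_smul_top_le_jointReductionIdeal_smul {d : ℕ} {K : σ → Ideal A} {c : Fin d → σ}
    {x : Fin d → A} (hx : ∀ j, x j ∈ K (c j))
    (hsup : ∀ i : Fin d, ∃ N, ∀ n : σ → ℕ, N ≤ n (c i) →
      initialIdeal x (i + 1) • (⊤ : Submodule A M) ⊓ multiPow K (n + Pi.single (c i) 1) • ⊤ ≤
        (Ideal.span {x i} * multiPow K n) • ⊤ ⊔ initialIdeal x i • ⊤)
    {L : σ → ℕ} (hL : multiPow K L • (⊤ : Submodule A M) ≤ Ideal.span (Set.range x) • ⊤) :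
    ∃ N : σ → ℕ, (∀ j, 1 ≤ N (c j)) ∧
      multiPow K N • (⊤ : Submodule A M) ≤ jointReductionIdeal K c x N • ⊤ := by
  suffices h : ∃ N : σ → ℕ, ∀ n, N ≤ n → multiPow K n • (⊤ : Submodule A M) ≤
      jointReductionIdeal K c x n • ⊤ ⊔ initialIdeal x 0 • ⊤ by
    obtain ⟨N, hN⟩ := h
    refine ⟨N + 1, fun j => Nat.le_add_left _ _, ?_⟩
    simpa [initialIdeal_zero] using hN (N + 1) (le_add_of_nonneg_right zero_le_one)
  refine Nat.decreasingInduction' (n := d) (P := fun i => ∃ N : σ → ℕ, ∀ n, N ≤ n →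
    multiPow K n • (⊤ : Submodule A M) ≤ jointReductionIdeal K c x n • ⊤ ⊔ initialIdeal x i • ⊤)
    (fun i hi _ ih => ?_) d.zero_le ⟨L, fun n hn => ?_⟩
  · obtain ⟨N, hN⟩ := ih
    obtain ⟨N', hN'⟩ := hsup ⟨i, hi⟩
    refine ⟨N ⊔ fun _ => N' + 1, fun n hn => ?_⟩
    have hn' : ∀ i, N' + 1 ≤ n i := le_sup_right.trans hn
    have hsingle : Pi.single (c ⟨i, hi⟩) 1 ≤ n :=
      single_one_le (Nat.le_of_add_left_le (hn' _))
    have hle := jointReductionIdeal_le_multiPow hx (n := n) fun j => Nat.le_of_add_left_le (hn' _)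
    have hmem := hN' (n - Pi.single (c ⟨i, hi⟩) 1) (by simpa using Nat.le_sub_one_of_lt (hn' _))
    rw [tsub_add_cancel_of_le hsingle] at hmem
    rw [← inf_eq_right.2 (hN n (le_sup_left.trans hn)),
      sup_inf_assoc_of_le _ (Submodule.smul_mono_left hle)]
    refine sup_le le_sup_left (hmem.trans (sup_le_sup_right (Submodule.smul_mono_left ?_) _))
    exact span_mul_multiPow_le_jointReductionIdeal K c x n ⟨i, hi⟩
  · rw [initialIdeal_last]
    exact (Submodule.smul_mono_left (multiPow_antitone K hn)).trans (hL.trans le_sup_right)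

end JointReduction

section FiniteDifference

lemma sum_powerset_union {α G : Type*} [DecidableEq α] [AddCommMonoid G] {T U : Finset α}
    (hTU : Disjoint T U) (f : Finset α → G) :
    ∑ S ∈ (T ∪ U).powerset, f S = ∑ V ∈ T.powerset, ∑ W ∈ U.powerset, f (V ∪ W) := by
  induction U using Finset.induction_on generalizing f with
  | empty => simp
  | insert j U hj ih =>
    rw [Finset.disjoint_insert_right] at hTU
    rw [Finset.union_insert, Finset.sum_powerset_insert (by simp [hTU.1, hj]), ih hTU.2,
      ih hTU.2, ← Finset.sum_add_distrib]
    simp only [Finset.sum_powerset_insert hj, Finset.union_insert]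

variable {ι σ G R : Type*} [Fintype σ] [DecidableEq σ] [AddCommMonoid G] [CommRing R]

lemma prod_update_fwdDiff (h : G) (f : σ → G → R) (k : σ) (a : σ → G) :
    ∏ i, Function.update f k (fwdDiff h (f k)) i (a i) =
      ∏ i, f i (Function.update a k (a k + h) i) - ∏ i, f i (a i) := by
  have hprod : ∀ (g : G → R) (b : G), ∏ i, Function.update f k g i (Function.update a k b i) =
      g b * ∏ i ∈ Finset.univ \ {k}, f i (a i) := fun g b => by
    rw [← Finset.prod_update_of_mem (Finset.mem_univ k)]
    refine Finset.prod_congr rfl fun i _ => ?_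
    rcases eq_or_ne i k with rfl | hi
    · simp
    · simp [hi]
  have hdiff := hprod (fwdDiff h (f k)) (a k)
  have hshift := hprod (f k) (a k + h)
  have hself := hprod (f k) (a k)
  rw [Function.update_eq_self] at hdiff hshift hself
  rw [Function.update_eq_self] at hself
  rw [hdiff, hshift, hself, fwdDiff, sub_mul]

theorem sum_powerset_neg_one_pow_card_mul_prod (c : ι → σ) (T : Finset ι) (h : G)
    (f : σ → G → R) (y : σ → G) :
    ∑ S ∈ T.powerset, (-1) ^ S.card * ∏ i, f i (y i + (multiDeg c T i - multiDeg c S i) • h) =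
      ∏ i, ((fwdDiff h)^[multiDeg c T i] (f i)) (y i) := by
  classical
  induction T using Finset.induction_on generalizing f with
  | empty => simp [multiDeg]
  | insert j T hj ih =>
    have hdiff : ∏ i, ((fwdDiff h)^[multiDeg c (insert j T) i] (f i)) (y i) =
        ∏ i, ((fwdDiff h)^[multiDeg c T i]
          (Function.update f (c j) (fwdDiff h (f (c j))) i)) (y i) := by
      refine Finset.prod_congr rfl fun i _ => ?_
      rcases eq_or_ne i (c j) with rfl | hi
      · simp [multiDeg_insert c hj]
      · simp [multiDeg_insert c hj, hi]
    rw [hdiff, ← ih, Finset.sum_powerset_insert hj, ← Finset.sum_add_distrib]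
    refine Finset.sum_congr rfl fun S hS => ?_
    have hST := Finset.mem_powerset.1 hS
    have hjS : j ∉ S := fun h => hj (hST h)
    rw [Finset.card_insert_of_notMem hjS, pow_succ, mul_neg_one, neg_mul, ← sub_eq_add_neg,
      ← mul_sub, prod_update_fwdDiff h f (c j)]
    congr 2 <;> refine Finset.prod_congr rfl fun i _ => congrArg (f i) ?_
    · rcases eq_or_ne i (c j) with rfl | hi
      · simp [multiDeg_insert c hj, add_assoc, ← succ_nsmul,
          Nat.sub_add_comm (multiDeg_mono c hST _)]
      · simp [multiDeg_insert c hj, hi]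
    · rw [multiDeg_insert c hj, multiDeg_insert c hjS, Pi.add_apply, Pi.add_apply,
        Nat.add_sub_add_right]

lemma sum_multiDeg (c : ι → σ) (T : Finset ι) : ∑ i, multiDeg c T i = T.card :=
  (Finset.card_eq_sum_card_fiberwise fun _ _ => Finset.mem_coe.2 (Finset.mem_univ _)).symm

lemma sum_powerset_neg_one_pow_card_mul (T : Finset ι) (h : G) (f : G → R) (y : G) :
    ∑ S ∈ T.powerset, (-1) ^ S.card * f (y + (T.card - S.card) • h) =
      ((fwdDiff h)^[T.card] f) y := by
  simpa [multiDeg] using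
    sum_powerset_neg_one_pow_card_mul_prod (fun _ => ()) T h (fun _ => f) fun _ => y

lemma sum_powerset_neg_one_pow_card_mul_prod_pow (c : ι → σ) (T : Finset ι) {m : σ → ℕ}
    (hm : ∑ i, m i ≤ T.card) (y : σ → R) :
    ∑ S ∈ T.powerset, (-1) ^ S.card * ∏ i, (y i - multiDeg c S i) ^ m i =
      if m = multiDeg c T then ∏ i, ((multiDeg c T i).factorial : R) else 0 := by
  have hsum := sum_powerset_neg_one_pow_card_mul_prod c T 1 (fun i (r : R) => r ^ m i)
    fun i => y i - multiDeg c T i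
  have hcast : ∀ S ∈ T.powerset, ∀ i,
      y i - multiDeg c T i + (multiDeg c T i - multiDeg c S i) • (1 : R) =
        y i - multiDeg c S i := fun S hS i => by
    rw [nsmul_one, Nat.cast_sub (multiDeg_mono c (Finset.mem_powerset.1 hS) i)]
    ring
  refine (Finset.sum_congr rfl fun S hS => ?_).trans (hsum.trans ?_)
  · simp only [hcast S hS]
  split_ifs with heq
  · refine Finset.prod_congr rfl fun i _ => ?_
    rw [heq, fwdDiff_iter_eq_factorial]
    rfl
  · obtain ⟨i, hi⟩ : ∃ i, m i < multiDeg c T i := by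
      by_contra! hle
      rw [← sum_multiDeg c T] at hm
      have := (Finset.sum_eq_sum_iff_of_le fun i _ => hle i).1
        (le_antisymm (Finset.sum_le_sum fun i _ => hle i) hm)
      exact heq (funext fun i => (this i (Finset.mem_univ i)).symm)
    refine Finset.prod_eq_zero (Finset.mem_univ i) ?_
    rw [fwdDiff_iter_pow_eq_zero_of_lt hi]
    rfl

theorem sum_powerset_neg_one_pow_card_mul_mvPolynomial_eval (c : ι → σ) (T : Finset ι)
    {P : MvPolynomial σ R} (hP : P.totalDegree ≤ T.card) (y : σ → R) :
    ∑ S ∈ T.powerset, (-1) ^ S.card * MvPolynomial.eval (fun i => y i - multiDeg c S i) P =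
      P.coeff (Finsupp.equivFunOnFinite.symm (multiDeg c T)) *
        ∏ i, ((multiDeg c T i).factorial : R) := by
  have hmonomial : ∀ m ∈ P.support, ∑ S ∈ T.powerset, (-1) ^ S.card *
      (P.coeff m * ∏ i, (y i - multiDeg c S i) ^ m i) =
      if m = Finsupp.equivFunOnFinite.symm (multiDeg c T) then
        P.coeff m * ∏ i, ((multiDeg c T i).factorial : R) else 0 := by
    intro m hm
    have hdeg : ∑ i, m i ≤ T.card := by
      rw [← Finsupp.sum_fintype m (fun _ e => e) fun _ => rfl]
      exact (MvPolynomial.le_totalDegree hm).trans hP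
    simp only [mul_left_comm _ (P.coeff m), ← Finset.mul_sum, Equiv.eq_symm_apply,
      sum_powerset_neg_one_pow_card_mul_prod_pow c T hdeg,
      mul_ite_zero]
    rfl
  simp only [MvPolynomial.eval_eq', Finset.mul_sum]
  rw [Finset.sum_comm, Finset.sum_congr rfl hmonomial, Finset.sum_ite_eq']
  split_ifs with h
  · rfl
  · rw [MvPolynomial.notMem_support_iff.1 h, zero_mul]

theorem sum_powerset_neg_one_pow_card_mul_polynomial_eval (T : Finset ι) {P : Polynomial R}
    (hP : P.natDegree ≤ T.card) (y : R) :
    ∑ S ∈ T.powerset, (-1) ^ S.card * P.eval (y - S.card) = P.coeff T.card * T.card.factorial := by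
  have hsum := sum_powerset_neg_one_pow_card_mul T 1 P.eval (y - T.card)
  have hcast : ∀ S ∈ T.powerset, y - T.card + (T.card - S.card) • (1 : R) = y - S.card :=
    fun S hS => by
      rw [nsmul_one, Nat.cast_sub (Finset.card_le_card (Finset.mem_powerset.1 hS))]
      ring
  refine (Finset.sum_congr rfl fun S hS => ?_).trans (hsum.trans ?_)
  · rw [hcast S hS]
  rcases hP.lt_or_eq with h | h
  · rw [Polynomial.fwdDiff_iter_eq_zero_of_degree_lt h, Polynomial.coeff_eq_zero_of_natDegree_lt h]
    simp
  · rw [← h, Polynomial.fwdDiff_iter_degree_eq_factorial]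
    simp

end FiniteDifference

section EventuallyPolynomial

open Filter

/-- The integer sequence `H` agrees for large arguments with a rational polynomial of degree at
most `k`, as Hilbert functions do. -/
def EventuallyPolynomial (k : ℕ) (H : ℕ → ℤ) : Prop :=
  ∃ P : Polynomial ℚ, P.natDegree ≤ k ∧ ∀ᶠ n : ℕ in atTop, (H n : ℚ) = P.eval (n : ℚ)

lemma EventuallyPolynomial.mono {k l : ℕ} {H : ℕ → ℤ} (h : EventuallyPolynomial k H) (hkl : k ≤ l) :
    EventuallyPolynomial l H :=
  h.imp fun _ hP => hP.imp_left hkl.trans'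

lemma fwdDiff_iter_eq_zero_of_le {H : ℕ → ℤ} {k l : ℕ} (hkl : k ≤ l) {B : ℕ}
    (h : ∀ n, B ≤ n → ((fwdDiff 1)^[k] H) n = 0) : ∀ n, B ≤ n → ((fwdDiff 1)^[l] H) n = 0 := by
  induction l, hkl using Nat.le_induction with
  | base => exact h
  | succ l _ ih =>
    intro n hn
    rw [Function.iterate_succ_apply', fwdDiff, ih n hn, ih (n + 1) (by omega), sub_self]

lemma apply_add_eq_sum_choose_mul_fwdDiff_iter {H : ℕ → ℤ} {k B : ℕ}
    (h : ∀ n, B ≤ n → ((fwdDiff 1)^[k + 1] H) n = 0) (n : ℕ) :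
    H (B + n) = ∑ l ∈ Finset.range (k + 1), (n.choose l : ℤ) * ((fwdDiff 1)^[l] H) B := by
  have hnewton := shift_eq_sum_fwdDiff_iter 1 H n B
  simp only [nsmul_eq_mul, Nat.cast_id, mul_one] at hnewton
  rw [hnewton]
  rcases le_total n k with hnk | hnk
  · refine Finset.sum_subset (Finset.range_mono (by omega)) fun l _ hl => ?_
    rw [Finset.mem_range, not_lt] at hl
    simp [Nat.choose_eq_zero_of_lt hl]
  · refine (Finset.sum_subset (Finset.range_mono (by omega)) fun l _ hl => ?_).symm
    rw [Finset.mem_range, not_lt] at hl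
    rw [fwdDiff_iter_eq_zero_of_le hl h B le_rfl, mul_zero]

theorem EventuallyPolynomial.of_fwdDiff_iter {H : ℕ → ℤ} {k : ℕ}
    (h : ∀ᶠ n in atTop, ((fwdDiff 1)^[k + 1] H) n = 0) : EventuallyPolynomial k H := by
  obtain ⟨B, hB⟩ := eventually_atTop.1 h
  let Q : Polynomial ℚ := ∑ l ∈ Finset.range (k + 1),
    Polynomial.C ((((fwdDiff 1)^[l] H) B : ℚ) / l.factorial) * descPochhammer ℚ l
  have hQ : Q.natDegree ≤ k := by
    refine Polynomial.natDegree_sum_le_of_forall_le _ _ fun l hl => ?_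
    rw [Finset.mem_range] at hl
    refine (Polynomial.natDegree_C_mul_le _ _).trans ?_
    rw [descPochhammer_natDegree]
    omega
  refine ⟨Q.comp (Polynomial.X - Polynomial.C (B : ℚ)), ?_, eventually_atTop.2 ⟨B, fun n hn => ?_⟩⟩
  · rwa [Polynomial.natDegree_comp, Polynomial.natDegree_X_sub_C, mul_one]
  · obtain ⟨n, rfl⟩ := Nat.exists_eq_add_of_le hn
    rw [apply_add_eq_sum_choose_mul_fwdDiff_iter hB, Int.cast_sum]
    simp only [Q, Polynomial.eval_comp, Polynomial.eval_sub, Polynomial.eval_X, Polynomial.eval_C,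
      Nat.cast_add, add_sub_cancel_left, Polynomial.eval_finsetSum, Polynomial.eval_mul,
      descPochhammer_eval_eq_descFactorial, Nat.descFactorial_eq_factorial_mul_choose]
    refine Finset.sum_congr rfl fun l _ => ?_
    have : (l.factorial : ℚ) ≠ 0 := by positivity
    push_cast
    field_simp

lemma eventually_sum_powerset_eq_coeff {ι : Type*} {H : ℕ → ℤ} {P : Polynomial ℚ} {T : Finset ι}
    (hdeg : P.natDegree ≤ T.card) (hP : ∀ᶠ n : ℕ in atTop, (H n : ℚ) = P.eval (n : ℚ)) :
    ∀ᶠ n in atTop, ((∑ S ∈ T.powerset, (-1) ^ S.card * H (n - S.card) : ℤ) : ℚ) =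
      P.coeff T.card * T.card.factorial := by
  obtain ⟨B, hB⟩ := eventually_atTop.1 hP
  filter_upwards [eventually_ge_atTop (B + T.card)] with n hn
  rw [← sum_powerset_neg_one_pow_card_mul_polynomial_eval T hdeg n]
  push_cast
  refine Finset.sum_congr rfl fun S hS => ?_
  have := Finset.card_le_card (Finset.mem_powerset.1 hS)
  rw [hB _ (by omega), Nat.cast_sub (by omega)]

theorem EventuallyPolynomial.eventually_sum_powerset_eq_zero {ι : Type*} {H : ℕ → ℤ} {k : ℕ}
    (h : EventuallyPolynomial k H) {T : Finset ι} (hT : k < T.card) :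
    ∀ᶠ n in atTop, ∑ S ∈ T.powerset, (-1) ^ S.card * H (n - S.card) = 0 := by
  obtain ⟨P, hdeg, hP⟩ := h
  filter_upwards [eventually_sum_powerset_eq_coeff (hdeg.trans hT.le) hP] with n hn
  rw [Polynomial.coeff_eq_zero_of_natDegree_lt (hdeg.trans_lt hT), zero_mul] at hn
  exact_mod_cast hn

lemma natDegree_le_of_eventually_eval_le {P Q : Polynomial ℚ}
    (h0 : ∀ᶠ n : ℕ in atTop, 0 ≤ P.eval (n : ℚ))
    (h : ∀ᶠ n : ℕ in atTop, P.eval (n : ℚ) ≤ Q.eval (n : ℚ)) : P.natDegree ≤ Q.natDegree := by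
  by_contra! hlt
  have hcast : ∀ (F : Polynomial ℚ) (n : ℕ),
      (F.map (Rat.castHom ℝ)).eval (n : ℝ) = (F.eval (n : ℚ) : ℚ) := fun F n => by
    rw [← Rat.cast_natCast, ← eq_ratCast (Rat.castHom ℝ), Polynomial.eval_map_apply]
    rfl
  have hinj := (Rat.castHom ℝ).injective
  have hdeg : (Q.map (Rat.castHom ℝ)).degree < (P.map (Rat.castHom ℝ)).degree := by
    rw [Polynomial.degree_map_eq_of_injective hinj, Polynomial.degree_map_eq_of_injective hinj]
    exact Polynomial.degree_lt_degree hlt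
  have hlittle := ((Polynomial.isLittleO_atTop_of_degree_lt _ _ hdeg).comp_tendsto
    tendsto_natCast_atTop_atTop).def (one_half_pos (α := ℝ))
  have hne := (tendsto_natCast_atTop_atTop (R := ℝ)).eventually
    (Polynomial.eventually_atTop_not_isRoot (P.map (Rat.castHom ℝ)) fun hP => by
      simp [hP] at hdeg)
  obtain ⟨n, hQP, hPn, hP0, hPQ⟩ := (hlittle.and (hne.and (h0.and h))).exists
  have hP0' : (0 : ℝ) ≤ (P.eval (n : ℚ) : ℚ) := by exact_mod_cast hP0
  have hPQ' : ((P.eval (n : ℚ) : ℚ) : ℝ) ≤ (Q.eval (n : ℚ) : ℚ) := by exact_mod_cast hPQ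
  rw [Polynomial.IsRoot, hcast] at hPn
  rw [Function.comp_apply, Function.comp_apply, hcast, hcast, Real.norm_of_nonneg hP0',
    Real.norm_of_nonneg (hP0'.trans hPQ')] at hQP
  linarith [hP0'.lt_of_ne' hPn]

theorem EventuallyPolynomial.of_le {k r : ℕ} {H H' : ℕ → ℤ} (h : EventuallyPolynomial k H)
    (h' : EventuallyPolynomial r H') {g : ℕ} (hg : 0 < g) (h0 : ∀ n, 0 ≤ H n)
    (hle : ∀ n, H n ≤ H' (g * n)) : EventuallyPolynomial r H := by
  obtain ⟨P, -, hP⟩ := h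
  obtain ⟨Q, hQ, hQev⟩ := h'
  have hQg := (Filter.tendsto_id.const_mul_atTop' hg).eventually hQev
  have hdeg : P.natDegree ≤ (Q.comp (Polynomial.C (g : ℚ) * Polynomial.X)).natDegree := by
    refine natDegree_le_of_eventually_eval_le ?_ ?_
    · filter_upwards [hP] with n hn
      rw [← hn]
      exact_mod_cast h0 n
    · filter_upwards [hP, hQg] with n hn hn'
      rw [id_eq] at hn'
      rw [← hn, Polynomial.eval_comp, Polynomial.eval_C_mul, Polynomial.eval_X, ← Nat.cast_mul,
        ← hn']
      exact_mod_cast hle n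
  refine ⟨P, hdeg.trans (Polynomial.natDegree_comp_le.trans ?_), hP⟩
  exact (Nat.mul_le_mul hQ ((Polynomial.natDegree_C_mul_le _ _).trans
    Polynomial.natDegree_X_le)).trans_eq (mul_one r)

end EventuallyPolynomial

section FiniteLength

variable {A M : Type*} [CommRing A] [IsLocalRing A] [AddCommGroup M] [Module A M]

lemma exists_maximalIdeal_pow_smul_top_le {X : Submodule A M} (h : relLength ⊤ X ≠ ⊤) :
    ∃ g, maximalIdeal A ^ g • (⊤ : Submodule A M) ≤ X := by
  rw [relLength_top, Module.length_ne_top_iff, isFiniteLength_iff_isNoetherian_isArtinian] at h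
  obtain ⟨_, _⟩ := h
  obtain ⟨g, hg⟩ := IsArtinian.monotone_stabilizes
    (⟨fun g => OrderDual.toDual (maximalIdeal A ^ g • (⊤ : Submodule A (M ⧸ X))),
      fun _ _ hab => Submodule.smul_mono_left (Ideal.pow_le_pow_right hab)⟩ :
        ℕ →o (Submodule A (M ⧸ X))ᵒᵈ)
  have hstable : maximalIdeal A ^ g • (⊤ : Submodule A (M ⧸ X)) =
    maximalIdeal A ^ (g + 1) • (⊤ : Submodule A (M ⧸ X)) := hg (g + 1) g.le_succ
  have hbot : maximalIdeal A ^ g • (⊤ : Submodule A (M ⧸ X)) = ⊥ := by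
    refine Submodule.eq_bot_of_le_smul_of_le_jacobson_bot (maximalIdeal A) _
      (IsNoetherian.noetherian _) ?_ (maximalIdeal_le_jacobson _)
    rw [← mul_smul, ← pow_succ', ← hstable]
  refine ⟨g, ?_⟩
  rw [← X.ker_mkQ, LinearMap.le_ker_iff_map, Submodule.map_smul'', Submodule.map_top,
    Submodule.range_mkQ, hbot]

lemma maximalIdeal_pow_mul_smul_top_le {q : Ideal A} {g : ℕ}
    (h : maximalIdeal A ^ g • (⊤ : Submodule A M) ≤ q • ⊤) (n : ℕ) :
    maximalIdeal A ^ (g * n) • (⊤ : Submodule A M) ≤ q ^ n • ⊤ := by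
  induction n with
  | zero => simp
  | succ n ih =>
    rw [mul_add_one, pow_add, mul_smul, pow_succ', mul_smul]
    refine (Submodule.smul_mono le_rfl h).trans ?_
    rw [smul_comm]
    exact Submodule.smul_mono le_rfl ih

variable [IsNoetherianRing A] [Module.Finite A M]

lemma relLength_top_ne_top_of_maximalIdeal_pow_smul_le {X : Submodule A M} {g : ℕ}
    (h : maximalIdeal A ^ g • (⊤ : Submodule A M) ≤ X) : relLength ⊤ X ≠ ⊤ := by
  have hX : maximalIdeal A ^ (g + 1) • (⊤ : Submodule A M) ≤ X :=
    (Submodule.smul_mono_left (Ideal.pow_le_pow_right g.le_succ)).trans h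
  have : IsArtinianRing (A ⧸ maximalIdeal A ^ (g + 1)) :=
    quotient_artinian_of_mem_minimalPrimes_of_isLocalRing _
      ⟨⟨inferInstance, Ideal.pow_le_self g.succ_ne_zero⟩, fun p hp _ => hp.1.le_of_pow_le hp.2⟩
  have : IsArtinian A (M ⧸ maximalIdeal A ^ (g + 1) • (⊤ : Submodule A M)) :=
    isArtinian_of_surjective_algebraMap (R := A ⧸ maximalIdeal A ^ (g + 1))
      Ideal.Quotient.mk_surjective
  refine ne_top_of_le_ne_top ?_ (relLength_mono le_rfl (inf_le_left.trans hX))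
  rw [relLength_top]
  exact Module.length_ne_top

lemma relLength_ne_top_of_maximalIdeal_pow_smul_le {C R : Submodule A M} {g : ℕ}
    (h : maximalIdeal A ^ g • C ≤ R) : relLength C R ≠ ⊤ := by
  have hle : maximalIdeal A ^ g • (⊤ : Submodule A C) ≤ R.submoduleOf C :=
    Submodule.smul_le.2 fun a ha v _ => h (Submodule.smul_mem_smul ha v.2)
  rw [relLength, ← relLength_top]
  exact relLength_top_ne_top_of_maximalIdeal_pow_smul_le hle

lemma relLength_top_pow_smul_ne_top {q : Ideal A}
    (h : relLength (⊤ : Submodule A M) (q • ⊤) ≠ ⊤) (n : ℕ) :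
    relLength (⊤ : Submodule A M) (q ^ n • ⊤) ≠ ⊤ := by
  obtain ⟨g, hg⟩ := exists_maximalIdeal_pow_smul_top_le h
  exact relLength_top_ne_top_of_maximalIdeal_pow_smul_le (maximalIdeal_pow_mul_smul_top_le hg n)

end FiniteLength

section HilbertSamuel

variable {A M ι : Type*} [CommRing A] [IsLocalRing A] [IsNoetherianRing A] [AddCommGroup M]
  [Module A M] [Module.Finite A M] [Fintype ι] [LinearOrder ι]

lemma eventuallyPolynomial_relLengthInt_span_pow_smul {x : ι → A}
    (h : relLength (⊤ : Submodule A M) (Ideal.span (Set.range x) • ⊤) ≠ ⊤) :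
    EventuallyPolynomial (Fintype.card ι)
      fun n => relLengthInt (⊤ : Submodule A M) (Ideal.span (Set.range x) ^ n • ⊤) := by
  set q := Ideal.span (Set.range x)
  set H : ℕ → ℤ := fun n => relLengthInt (⊤ : Submodule A M) (q ^ n • ⊤)
  obtain ⟨B, hB⟩ := exists_isKoszulExact_span_pow_inf (M := M) x monotone_const (Ω := fun _ => ⊤)
  simp only [inf_top_eq] at hB
  refine .of_fwdDiff_iter (Filter.eventually_atTop.2 ⟨B, fun n hn => ?_⟩)
  have hdiff (m : ℕ) : fwdDiff 1 H m = relLengthInt (q ^ m • ⊤ : Submodule A M) (q ^ (m + 1) • ⊤) :=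
    sub_eq_of_eq_add (relLengthInt_add le_top
      (Submodule.smul_mono_left (Ideal.pow_le_pow_right m.le_succ))
      (relLength_top_pow_smul_ne_top h _))
  have hcard (S : Finset ι) :
      n + Fintype.card ι + 1 - S.card = n + (Fintype.card ι - S.card) + 1 := by
    have := S.card_le_univ
    omega
  have hzero := sum_neg_one_pow_card_mul_relLengthInt_eq_zero
    (P := fun S => q ^ (n + Fintype.card ι + 1 - S.card) • (⊤ : Submodule A M))
    (Q := fun S => q ^ (n + Fintype.card ι - S.card) • (⊤ : Submodule A M))
    (fun S => Submodule.smul_mono_left (Ideal.pow_le_pow_right (by omega)))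
    (isKoszulStable_span_pow x _) (isKoszulStable_span_pow x _) (hB _ (by omega)) (hB _ (by omega))
    fun S => ne_top_of_le_ne_top (relLength_top_pow_smul_ne_top h _)
      (relLength_mono le_top inf_le_left)
  rw [Function.iterate_succ_apply, ← Finset.card_univ, ← sum_powerset_neg_one_pow_card_mul, ← hzero,
    Finset.powerset_univ]
  refine Finset.sum_congr rfl fun S _ => ?_
  rw [hdiff, smul_eq_mul, mul_one, hcard, Nat.add_sub_assoc S.card_le_univ, Finset.card_univ]

lemma exists_maximalIdeal_pow_le_span_range_sup {a : Ideal A} {r : ℕ}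
    (h : ringKrullDim (A ⧸ a) ≤ r) :
    ∃ r' ≤ r, ∃ (y : Fin r' → A) (g : ℕ), (∀ j, y j ∈ maximalIdeal A) ∧
      maximalIdeal A ^ g ≤ Ideal.span (Set.range y) ⊔ a := by
  by_cases ha : a = ⊤
  · exact ⟨0, r.zero_le, Fin.elim0, 0, fun j => j.elim0, by simp [ha]⟩
  have : Nontrivial (A ⧸ a) := Ideal.Quotient.nontrivial_iff.2 ha
  have : IsLocalRing (A ⧸ a) :=
    .of_surjective' (Ideal.Quotient.mk a) Ideal.Quotient.mk_surjective
  have hm : (maximalIdeal (A ⧸ a)).comap (Ideal.Quotient.mk a) = maximalIdeal A :=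
    eq_maximalIdeal (Ideal.comap_isMaximal_of_surjective _ Ideal.Quotient.mk_surjective)
  obtain ⟨s, hs, hcard⟩ :=
    Ideal.exists_finset_card_eq_height_of_isNoetherianRing (maximalIdeal (A ⧸ a))
  rw [← maximalIdeal_height_eq_ringKrullDim, ← hcard] at h
  have := quotient_artinian_of_mem_minimalPrimes_of_isLocalRing _ hs
  obtain ⟨g, hg⟩ :=
    exists_maximalIdeal_pow_le_of_isArtinianRing_quotient (Ideal.span (s : Set (A ⧸ a)))
  choose z hz using Ideal.Quotient.mk_surjective (I := a)
  let y : Fin s.card → A := fun j => z (s.equivFin.symm j)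
  have hy :
      (Ideal.span (Set.range y)).map (Ideal.Quotient.mk a) = Ideal.span (s : Set (A ⧸ a)) := by
    have hcomp : (Ideal.Quotient.mk a : A → A ⧸ a) ∘ y = Subtype.val ∘ s.equivFin.symm :=
      funext fun j => hz _
    rw [Ideal.map_span, ← Set.range_comp, hcomp, s.equivFin.symm.surjective.range_comp,
      Subtype.range_coe]
  refine ⟨s.card, by exact_mod_cast h, y, g, fun j => ?_, ?_⟩
  · rw [← hm, Ideal.mem_comap, hz]
    exact hs.1.2 (Ideal.subset_span (s.equivFin.symm j).2)
  · rw [sup_comm, ← Ideal.comap_map_quotientMk, hy, ← Ideal.map_le_iff_le_comap, Ideal.map_pow]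
    exact (Ideal.pow_right_mono (Ideal.map_le_iff_le_comap.2 hm.ge) g).trans hg

theorem eventuallyPolynomial_of_ringKrullDim_le {q : Ideal A} {r : ℕ}
    (h : relLength (⊤ : Submodule A M) (q • ⊤) ≠ ⊤)
    (hr : ringKrullDim (A ⧸ Module.annihilator A M) ≤ r) :
    EventuallyPolynomial r fun n => relLengthInt (⊤ : Submodule A M) (q ^ n • ⊤) := by
  obtain ⟨t, x, rfl⟩ :=
    Submodule.fg_iff_exists_fin_generating_family.1 (IsNoetherian.noetherian q)
  obtain ⟨r', hr', y, g, hy, hg⟩ := exists_maximalIdeal_pow_le_span_range_sup hr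
  have hgM : maximalIdeal A ^ g • (⊤ : Submodule A M) ≤ Ideal.span (Set.range y) • ⊤ := by
    refine (Submodule.smul_mono_left hg).trans ?_
    rw [Submodule.sup_smul, ← Submodule.annihilator_top, Submodule.annihilator_smul, sup_bot_eq]
  have hyfin := relLength_top_ne_top_of_maximalIdeal_pow_smul_le hgM
  obtain ⟨b, hb⟩ := exists_maximalIdeal_pow_smul_top_le h
  have hypoly := eventuallyPolynomial_relLengthInt_span_pow_smul hyfin
  rw [Fintype.card_fin] at hypoly
  refine (eventuallyPolynomial_relLengthInt_span_pow_smul h).of_le (hypoly.mono hr') b.succ_pos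
    (fun n => Int.natCast_nonneg _) fun n => ?_
  have hle : Ideal.span (Set.range y) ^ ((b + 1) * n) ≤ maximalIdeal A ^ (b * n) :=
    (Ideal.pow_right_mono (Ideal.span_le.2 (Set.range_subset_iff.2 hy)) _).trans
      (Ideal.pow_le_pow_right (Nat.mul_le_mul_right n b.le_succ))
  exact Int.ofNat_le.2 (ENat.toNat_le_toNat
    (relLength_mono le_rfl (inf_le_left.trans
      ((Submodule.smul_mono_left hle).trans (maximalIdeal_pow_mul_smul_top_le hb n))))
    (relLength_top_pow_smul_ne_top hyfin _))

end HilbertSamuel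

section Dimension

variable {A B : Type*} [CommRing A] [CommRing B]

lemma idealHeight_add_ringKrullDim_le {f : A →+* B} (hf : Function.Surjective f) {I : Ideal A}
    (hI : I ≤ (RingHom.ker f).radical) :
    (idealHeight A I : WithBot ℕ∞) + ringKrullDim B ≤ ringKrullDim A := by
  cases subsingleton_or_nontrivial B
  · rw [ringKrullDim_eq_bot_of_subsingleton, WithBot.add_bot]
    exact bot_le
  let φ := PrimeSpectrum.comap f
  have hφ : StrictMono φ := Monotone.strictMono_of_injective
    (fun _ _ hpq => Ideal.comap_mono hpq) (PrimeSpectrum.comap_injective_of_surjective f hf)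
  have hheight (p : PrimeSpectrum B) : idealHeight A I ≤ Order.height (φ p) :=
    iInf₂_le (φ p) (hI.trans ((φ p).isPrime.radical_le_iff.2 (Ideal.ker_le_comap f)))
  have : Nonempty (PrimeSpectrum A) := Nonempty.map φ inferInstance
  rw [ringKrullDim, ringKrullDim, Order.krullDim_eq_iSup_coheight_of_nonempty,
    Order.krullDim_eq_iSup_height_add_coheight_of_nonempty, ← WithBot.coe_add, WithBot.coe_le_coe,
    ENat.add_iSup]
  exact iSup_le fun p => le_iSup_of_le (φ p)
    (add_le_add (hheight p) (Order.coheight_le_coheight_apply_of_strictMono φ hφ p))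

lemma ringKrullDim_quotient_le_of_le_idealHeight {a b I : Ideal A} {r h : ℕ} (hab : a ≤ b)
    (hI : I ≤ b.radical) (ha : ringKrullDim (A ⧸ a) ≤ (h + r : ℕ))
    (hh : (h : ℕ∞) ≤ idealHeight (A ⧸ a) (I.map (Ideal.Quotient.mk a))) :
    ringKrullDim (A ⧸ b) ≤ r := by
  have hker : I.map (Ideal.Quotient.mk a) ≤ (RingHom.ker (Ideal.Quotient.factor hab)).radical := by
    rw [Ideal.Quotient.factor_ker]
    exact (Ideal.map_mono hI).trans (Ideal.map_radical_le _)
  have hle := (add_le_add_left (WithBot.coe_le_coe.2 hh) _).trans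
    ((idealHeight_add_ringKrullDim_le (Ideal.Quotient.factor_surjective hab) hker).trans ha)
  generalize ringKrullDim (A ⧸ b) = D at hle ⊢
  cases D with
  | bot => exact bot_le
  | coe D => exact WithBot.coe_le_coe.2 ((ENat.add_le_add_iff_left (ENat.natCast_ne_top h)).1
      (WithBot.coe_le_coe.1 hle))

lemma ringKrullDim_quotient_annihilator_quotient_le {M : Type*} [AddCommGroup M] [Module A M]
    {b I : Ideal A} {r h : ℕ} (hI : I ≤ b.radical) (hM : modDim A M ≤ (h + r : ℕ))
    (hh : (h : ℕ∞) ≤ idealHeight (A ⧸ Module.annihilator A M)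
      (I.map (Ideal.Quotient.mk (Module.annihilator A M)))) :
    ringKrullDim (A ⧸ Module.annihilator A (M ⧸ b • (⊤ : Submodule A M))) ≤ r := by
  refine ringKrullDim_quotient_le_of_le_idealHeight
    ((Submodule.mkQ _).annihilator_le_of_surjective (Submodule.mkQ_surjective _))
    (hI.trans (Ideal.radical_mono ?_)) hM hh
  intro a ha
  refine Module.mem_annihilator.2 fun v => ?_
  obtain ⟨v, rfl⟩ := Submodule.mkQ_surjective _ v
  rw [← map_smul]
  exact (Submodule.Quotient.mk_eq_zero _).2 (Submodule.smul_mem_smul ha trivial)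

end Dimension

section AlternatingLengthSum

open Filter

variable {A M ι σ : Type*} [CommRing A] [AddCommGroup M] [Module A M]

lemma eventually_inf_pow_smul_top_le [IsNoetherianRing A] [Module.Finite A M] {p q : Ideal A}
    (hq : q ≤ p) {b : ℕ} {C R : Submodule A M} (h : p ^ b • C ≤ R) :
    ∀ᶠ m in atTop, C ⊓ q ^ m • ⊤ ≤ R := by
  obtain ⟨k, hk⟩ := Ideal.exists_pow_inf_eq_pow_smul q C
  filter_upwards [eventually_ge_atTop (k + b)] with m hm
  rw [inf_comm, hk m (by omega)]
  exact (Submodule.smul_mono ((Ideal.pow_right_mono hq _).trans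
    (Ideal.pow_le_pow_right (by omega))) inf_le_right).trans h

variable [DecidableEq σ] [Fintype σ] {K : σ → Ideal A} {c : ι → σ} {o : σ}

lemma powFamily_eq_pow_smul (n : σ → ℕ) (S : Finset ι) :
    powFamily M K c n S =
      K o ^ (n o - multiDeg c S o) • powFamily M K c (Function.update n o 0) S := by
  rw [powFamily, powFamily, ← mul_smul, ← multiPow_single, ← multiPow_add]
  congr 2
  ext i
  by_cases hi : i = o
  · subst hi
    simp
  · simp [hi]

lemma powFamily_union_eq [DecidableEq ι] {n : σ → ℕ} (hn : n o = 0) (V : Finset ι) {W : Finset ι}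
    (hW : ∀ j ∈ W, c j = o) : powFamily M K c n (V ∪ W) = powFamily M K c n V := by
  rw [powFamily, powFamily]
  congr 2
  ext i
  by_cases hi : i = o
  · subst hi
    simp [hn]
  · have hempty : W.filter (fun j => c j = i) = ∅ :=
      Finset.filter_eq_empty_iff.2 fun j hj hji => hi (hji.symm.trans (hW j hj))
    simp only [Pi.sub_apply, multiDeg, Finset.filter_union, hempty, Finset.union_empty]

lemma powFamily_le_powFamily_update (n : σ → ℕ) (S : Finset ι) :
    powFamily M K c n S ≤ powFamily M K c (Function.update n o 0) S := by
  rw [powFamily_eq_pow_smul (o := o)]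
  exact Submodule.smul_le_right

variable [IsNoetherianRing A]

lemma exists_pow_smul_powFamily_update_le {p : Ideal A} (hJ : p ≤ (K o).radical) (n : σ → ℕ) :
    ∃ b, ∀ S : Finset ι,
      p ^ b • powFamily M K c (Function.update n o 0) S ≤ powFamily M K c n S := by
  obtain ⟨b, hb⟩ := Ideal.exists_pow_le_of_le_radical_of_fg hJ (IsNoetherian.noetherian _)
  refine ⟨b * n o, fun S => ?_⟩
  rw [powFamily_eq_pow_smul (o := o) n S, pow_mul]
  exact Submodule.smul_mono_left ((Ideal.pow_right_mono hb _).trans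
    (Ideal.pow_le_pow_right (Nat.sub_le _ _)))

variable [IsLocalRing A] [Module.Finite A M] [LinearOrder ι] [Fintype ι] {x : ι → A}

lemma eventually_sum_relLengthInt_pow_sup_powFamily_eq_zero {r : ℕ}
    (hfin : relLength (⊤ : Submodule A M) (Ideal.span (Set.range x) • ⊤) ≠ ⊤)
    (hr : r < multiDeg c Finset.univ o)
    (hdim : ∀ n : σ → ℕ, n o = 0 →
      ringKrullDim (A ⧸ Module.annihilator A (M ⧸ multiPow K n • (⊤ : Submodule A M))) ≤ r)
    {n : σ → ℕ} (hn : n o = 0) :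
    ∀ᶠ m in atTop, ∑ S : Finset ι, (-1) ^ S.card * relLengthInt (⊤ : Submodule A M)
      (Ideal.span (Set.range x) ^ (m - S.card) • ⊤ ⊔ powFamily M K c n S) = 0 := by
  set H : Finset ι → ℕ → ℤ := fun S m => relLengthInt (⊤ : Submodule A M)
    (Ideal.span (Set.range x) ^ m • ⊤ ⊔ powFamily M K c n S)
  have hpoly (S : Finset ι) : EventuallyPolynomial r (H S) := by
    have hquot := eventuallyPolynomial_of_ringKrullDim_le (M := M ⧸ powFamily M K c n S)
      (q := Ideal.span (Set.range x))
      (by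
        rw [relLength_top_smul_quotient]
        exact ne_top_of_le_ne_top hfin (relLength_mono le_rfl (inf_le_left.trans le_sup_left)))
      (hdim (n - multiDeg c S) (by simp [hn]))
    simpa only [H, relLengthInt, relLength_top_smul_quotient] using hquot
  set T : Finset ι := Finset.univ.filter fun j => ¬ c j = o
  set U : Finset ι := Finset.univ.filter fun j => c j = o
  have hdisj : Disjoint T U := (Finset.disjoint_filter_filter_not _ _ _).symm
  have hunion : T ∪ U = Finset.univ := by
    rw [Finset.union_comm]
    exact Finset.filter_union_filter_not_eq _ _
  have hzero (V : Finset ι) : ∀ᶠ m in atTop,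
      ∑ W ∈ U.powerset, (-1) ^ W.card * H V (m - V.card - W.card) = 0 :=
    (tendsto_sub_atTop_nat V.card).eventually ((hpoly V).eventually_sum_powerset_eq_zero hr)
  filter_upwards [eventually_all.2 hzero] with m hm
  rw [← Finset.powerset_univ, ← hunion, sum_powerset_union hdisj]
  refine Finset.sum_eq_zero fun V hV => ?_
  rw [← mul_zero ((-1) ^ V.card), ← hm V, Finset.mul_sum]
  refine Finset.sum_congr rfl fun W hW => ?_
  rw [Finset.mem_powerset] at hV hW
  rw [powFamily_union_eq hn V fun j hj => (Finset.mem_filter.1 (hW hj)).2,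
    Finset.card_union_of_disjoint (hdisj.mono hV hW), ← Nat.sub_sub, pow_add, mul_assoc]

theorem eventually_sum_relLengthInt_pow_eq {r : ℕ} {N : σ → ℕ}
    (hJ : maximalIdeal A ≤ (K o).radical) (hxm : ∀ j, x j ∈ maximalIdeal A)
    (hx : ∀ j, x j ∈ K (c j)) (hred : IsReductionInDegree M K c x N)
    (hfin : relLength (⊤ : Submodule A M) (Ideal.span (Set.range x) • ⊤) ≠ ⊤)
    (hr : r < multiDeg c Finset.univ o)
    (hdim : ∀ n : σ → ℕ, n o = 0 →
      ringKrullDim (A ⧸ Module.annihilator A (M ⧸ multiPow K n • (⊤ : Submodule A M))) ≤ r) :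
    ∀ᶠ n : σ → ℕ in atTop, ∀ᶠ m in atTop,
      ∑ S : Finset ι, (-1) ^ S.card *
        relLengthInt (⊤ : Submodule A M) (Ideal.span (Set.range x) ^ (m - S.card) • ⊤) =
      ∑ S : Finset ι, (-1) ^ S.card *
        relLengthInt (powFamily M K c (Function.update n o 0) S) (powFamily M K c n S) := by
  obtain ⟨B, hB⟩ := exists_isKoszulExact_powFamily_inf hred monotone_const (Ω := fun _ => ⊤)
  simp only [inf_top_eq] at hB
  filter_upwards [eventually_ge_atTop B] with n hn
  set q := Ideal.span (Set.range x)
  set R := powFamily M K c n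
  set C := powFamily M K c (Function.update n o 0)
  obtain ⟨b, hb⟩ := exists_pow_smul_powFamily_update_le (M := M) (c := c) hJ n
  have hqm : q ≤ maximalIdeal A := Ideal.span_le.2 (Set.range_subset_iff.2 hxm)
  have hinf (S : Finset ι) : ∀ᶠ m in atTop, C S ⊓ q ^ (m - S.card) • ⊤ ≤ R S :=
    (tendsto_sub_atTop_nat S.card).eventually (eventually_inf_pow_smul_top_le hqm (hb S))
  obtain ⟨B', hB'⟩ := exists_isKoszulExact_span_pow_inf x (monotone_powFamily (M := M) K c n)
  filter_upwards [eventually_ge_atTop B', eventually_all.2 hinf,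
    eventually_sum_relLengthInt_pow_sup_powFamily_eq_zero hfin hr hdim
      (Function.update_self o 0 n)] with m hm hCR hzero
  have hfinR (S : Finset ι) : relLength (R S) (q ^ (m - S.card) • ⊤ ⊓ R S) ≠ ⊤ :=
    ne_top_of_le_ne_top (relLength_top_pow_smul_ne_top hfin _) (relLength_mono le_top le_rfl)
  have hkoszul := sum_neg_one_pow_card_mul_relLengthInt_eq_zero (fun S => inf_le_right)
    ((isKoszulStable_span_pow x m).inf (isKoszulStable_powFamily hx n))
    (isKoszulStable_powFamily hx n) (hB' m hm) (hB n hn) hfinR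
  simp only [relLengthInt_top_eq_add_add (powFamily_le_powFamily_update n _) (hCR _)
    (relLength_top_pow_smul_ne_top hfin _), mul_add, Finset.sum_add_distrib]
  rw [hkoszul, hzero, add_zero, add_zero]

end AlternatingLengthSum

section MixedDifference

open Filter

variable {A M ι σ : Type*} [CommRing A] [IsNoetherianRing A] [IsLocalRing A] [AddCommGroup M]
  [Module A M] [Module.Finite A M] [LinearOrder ι] [Fintype ι] [DecidableEq σ] [Fintype σ]
  {K : σ → Ideal A} {c : ι → σ} {o : σ}

lemma sum_relLengthInt_powFamily_update_eq (hJ : maximalIdeal A ≤ (K o).radical) {j : ι}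
    (hj : c j = o) (n : σ → ℕ) :
    ∑ S : Finset ι, (-1) ^ S.card *
        relLengthInt (powFamily M K c (Function.update n o 0) S) (powFamily M K c n S) =
      ∑ S ∈ (Finset.univ.erase j).powerset, (-1) ^ S.card *
        relLengthInt (powFamily M K c n (insert j S)) (powFamily M K c n S) := by
  obtain ⟨b, hb⟩ := exists_pow_smul_powFamily_update_le (M := M) (c := c) hJ n
  rw [← Finset.powerset_univ, ← Finset.insert_erase (Finset.mem_univ j),
    Finset.sum_powerset_insert (Finset.notMem_erase j _), Finset.erase_insert_eq_erase,
    Finset.erase_idem, ← Finset.sum_add_distrib]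
  refine Finset.sum_congr rfl fun S hS => ?_
  have hjS : j ∉ S := fun h => Finset.notMem_erase j _ (Finset.mem_powerset.1 hS h)
  have hupdate : powFamily M K c (Function.update n o 0) (insert j S) =
      powFamily M K c (Function.update n o 0) S := by
    rw [Finset.insert_eq, Finset.union_comm]
    exact powFamily_union_eq (Function.update_self o 0 n) S fun i hi => by
      rw [Finset.mem_singleton.1 hi, hj]
  rw [relLengthInt_add (hupdate ▸ powFamily_le_powFamily_update n (insert j S))
    (monotone_powFamily K c n (Finset.subset_insert j S))
    (relLength_ne_top_of_maximalIdeal_pow_smul_le (hb S)), hupdate,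
    Finset.card_insert_of_notMem hjS]
  ring

theorem eventually_sum_relLengthInt_powFamily_eq (hJ : maximalIdeal A ≤ (K o).radical)
    {κ : σ → ℕ} (hκ : multiDeg c Finset.univ = κ + Pi.single o 1) {P : MvPolynomial σ ℚ}
    (hdeg : P.totalDegree ≤ ∑ i, κ i)
    (hP : ∀ᶠ n : σ → ℕ in atTop, (relLengthInt (multiPow K n • (⊤ : Submodule A M))
      (multiPow K (n + Pi.single o 1) • ⊤) : ℚ) = MvPolynomial.eval (fun i => (n i : ℚ)) P) :
    ∀ᶠ n : σ → ℕ in atTop, ((∑ S : Finset ι, (-1) ^ S.card * relLengthInt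
        (powFamily M K c (Function.update n o 0) S) (powFamily M K c n S) : ℤ) : ℚ) =
      P.coeff (Finsupp.equivFunOnFinite.symm κ) * ∏ i, ((κ i).factorial : ℚ) := by
  obtain ⟨j, hj⟩ : ∃ j, c j = o := by
    obtain ⟨j, hj⟩ := Finset.card_pos.1
      (show 0 < multiDeg c Finset.univ o by rw [hκ]; simp)
    exact ⟨j, (Finset.mem_filter.1 hj).2⟩
  set T : Finset ι := Finset.univ.erase j
  have hT : multiDeg c T = κ := by
    rw [← Finset.insert_erase (Finset.mem_univ j), multiDeg_insert c (Finset.notMem_erase _ _),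
      hj] at hκ
    exact add_right_cancel hκ
  obtain ⟨B, hB⟩ := eventually_atTop.1 hP
  filter_upwards [eventually_ge_atTop (B + κ + Pi.single o 1)] with n hn
  obtain ⟨n, rfl⟩ := exists_add_of_le hn
  set y : σ → ℕ := B + κ + n
  have hy : B + κ + Pi.single o 1 + n = y + Pi.single o 1 := add_right_comm _ _ _
  have hdiff := sum_powerset_neg_one_pow_card_mul_mvPolynomial_eval c T
    (by rwa [← sum_multiDeg c T, hT]) (fun i => (y i : ℚ))
  rw [hT] at hdiff
  rw [← hdiff, sum_relLengthInt_powFamily_update_eq hJ hj, hy]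
  push_cast
  refine Finset.sum_congr rfl fun S hS => ?_
  have hjS : j ∉ S := fun h => Finset.notMem_erase j _ (Finset.mem_powerset.1 hS h)
  have hS' : multiDeg c S ≤ κ := hT ▸ multiDeg_mono c (Finset.mem_powerset.1 hS)
  have hSy : multiDeg c S ≤ y := hS'.trans (le_add_right le_add_self)
  have hBy : B ≤ y - multiDeg c S :=
    le_tsub_of_add_le_right ((add_le_add_right hS' B).trans le_self_add)
  have hval := hB (y - multiDeg c S) hBy
  rw [tsub_add_eq_add_tsub hSy] at hval
  rw [powFamily, powFamily, multiDeg_insert c hjS, hj, add_tsub_add_eq_tsub_right, hval]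
  congr 3
  ext i
  exact Nat.cast_sub (hSy i)

theorem coeff_mul_prod_factorial_eq_coeff_mul_factorial {x : ι → A} {N κ : σ → ℕ}
    (hJ : maximalIdeal A ≤ (K o).radical) (hxm : ∀ j, x j ∈ maximalIdeal A)
    (hx : ∀ j, x j ∈ K (c j)) (hred : IsReductionInDegree M K c x N)
    (hfin : relLength (⊤ : Submodule A M) (Ideal.span (Set.range x) • ⊤) ≠ ⊤)
    (hκ : multiDeg c Finset.univ = κ + Pi.single o 1)
    (hdim : ∀ n : σ → ℕ, n o = 0 →
      ringKrullDim (A ⧸ Module.annihilator A (M ⧸ multiPow K n • (⊤ : Submodule A M))) ≤ κ o)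
    {P : MvPolynomial σ ℚ} (hPdeg : P.totalDegree ≤ ∑ i, κ i)
    (hP : ∀ᶠ n : σ → ℕ in atTop, (relLengthInt (multiPow K n • (⊤ : Submodule A M))
      (multiPow K (n + Pi.single o 1) • ⊤) : ℚ) = MvPolynomial.eval (fun i => (n i : ℚ)) P)
    {Q : Polynomial ℚ} (hQdeg : Q.natDegree ≤ Fintype.card ι)
    (hQ : ∀ᶠ n : ℕ in atTop, (relLengthInt (⊤ : Submodule A M)
      (Ideal.span (Set.range x) ^ n • ⊤) : ℚ) = Q.eval (n : ℚ)) :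
    P.coeff (Finsupp.equivFunOnFinite.symm κ) * ∏ i, ((κ i).factorial : ℚ) =
      Q.coeff (Fintype.card ι) * (Fintype.card ι).factorial := by
  have hr : κ o < multiDeg c Finset.univ o := by simp [hκ]
  obtain ⟨n, hn, hPn⟩ := ((eventually_sum_relLengthInt_pow_eq hJ hxm hx hred hfin hr hdim).and
    (eventually_sum_relLengthInt_powFamily_eq hJ hκ hPdeg hP)).exists
  obtain ⟨m, hm, hQm⟩ :=
    (hn.and (eventually_sum_powerset_eq_coeff (T := Finset.univ) hQdeg hQ)).exists
  rw [← hPn, ← Finset.card_univ, ← hQm, Finset.powerset_univ, hm]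

end MixedDifference

section ReesSuperficial

variable {A M : Type*} [CommRing A] [AddCommGroup M] [Module A M] {d s : ℕ}

lemma isReesSuperficialSeq_equiv_comp {t : ℕ} {e : Fin s ≃ Fin t} {K : Fin t → Ideal A}
    {x : Fin d → A} {c : Fin d → Fin s} (h : IsReesSuperficialSeq A M (K ∘ e) x c) :
    IsReesSuperficialSeq A M K x (e ∘ c) := fun i => by
  obtain ⟨hx, N, hN⟩ := h i
  refine ⟨hx, N, fun n hn => ?_⟩
  rw [← Equiv.prod_comp e, ← Equiv.prod_comp e fun j => K j ^ n j]
  simpa [e.injective.eq_iff] using hN (n ∘ e) hn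

lemma multiDeg_univ_equiv_comp {t : ℕ} {e : Fin s ≃ Fin t} {k : Fin t → ℕ} {c : Fin d → Fin s}
    (h : OfTypeCount c (k ∘ e)) : multiDeg (e ∘ c) Finset.univ = k := by
  funext i
  simpa [multiDeg, Equiv.eq_symm_apply] using h (e.symm i)

lemma cons_add_one (a : ℕ) (k : Fin s → ℕ) :
    (Fin.cons (a + 1) k : Fin (s + 1) → ℕ) = Fin.cons a k + Pi.single 0 1 := by
  funext i
  cases i using Fin.cases <;> simp

lemma card_eq_of_multiDeg_univ_eq {c : Fin d → Fin s} {κ : Fin s → ℕ} {o : Fin s}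
    (h : multiDeg c Finset.univ = κ + Pi.single o 1) : d = ∑ i, κ i + 1 := by
  rw [← Fintype.card_fin d, ← Finset.card_univ, ← sum_multiDeg c, h]
  simp [Finset.sum_add_distrib]

lemma comap_mkQ_smul_top (X : Submodule A M) (b : Ideal A) :
    (b • (⊤ : Submodule A (M ⧸ X))).comap X.mkQ = b • ⊤ ⊔ X := by
  rw [← X.range_mkQ, ← Submodule.map_top, ← Submodule.map_smul'', Submodule.comap_map_mkQ, sup_comm]

lemma initialIdeal_smul_inf_multiPow_smul_le {K : Fin s → Ideal A} {x : Fin d → A}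
    {c : Fin d → Fin s} (h : IsReesSuperficialSeq A M K x c) (i : Fin d) :
    ∃ N, ∀ n : Fin s → ℕ, N ≤ n (c i) →
      initialIdeal x (i + 1) • (⊤ : Submodule A M) ⊓ multiPow K (n + Pi.single (c i) 1) • ⊤ ≤
        (Ideal.span {x i} * multiPow K n) • ⊤ ⊔ initialIdeal x i • ⊤ := by
  obtain ⟨-, N, hN⟩ := h i
  refine ⟨N, fun n hn => ?_⟩
  let X : Submodule A M := initialIdeal x i • ⊤
  have hprod :
      ∏ j, K j ^ (n j + if j = c i then 1 else 0) = multiPow K (n + Pi.single (c i) 1) := by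
    simp [multiPow, Pi.single_apply]
  have hinf : Ideal.span {x i} • (⊤ : Submodule A (M ⧸ X)) ⊓
      multiPow K (n + Pi.single (c i) 1) • ⊤ = (Ideal.span {x i} * multiPow K n) • ⊤ := by
    rw [mul_smul, ← hprod]
    exact hN n hn
  have hcomap := congrArg (Submodule.comap X.mkQ) hinf
  rw [Submodule.comap_inf, comap_mkQ_smul_top, comap_mkQ_smul_top, comap_mkQ_smul_top] at hcomap
  rw [initialIdeal_succ, sup_comm, Submodule.sup_smul]
  exact (inf_le_inf_left _ le_sup_left).trans hcomap.le

theorem exists_isReductionInDegree_of_isReesSuperficialSeq [IsNoetherianRing A] [IsLocalRing A]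
    [Module.Finite A M] {K : Fin s → Ideal A} {x : Fin d → A} {c : Fin d → Fin s}
    (h : IsReesSuperficialSeq A M K x c) {o : Fin s} (ho : K o ≤ maximalIdeal A)
    (hfin : relLength (⊤ : Submodule A M) (Ideal.span (Set.range x) • ⊤) ≠ ⊤) :
    ∃ N, IsReductionInDegree M K c x N := by
  have hx : ∀ j, x j ∈ K (c j) := fun j => (h j).1
  obtain ⟨g, hg⟩ := exists_maximalIdeal_pow_smul_top_le hfin
  have hL : multiPow K (Pi.single o g) • (⊤ : Submodule A M) ≤ Ideal.span (Set.range x) • ⊤ := by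
    rw [multiPow_single]
    exact (Submodule.smul_mono_left (Ideal.pow_right_mono ho g)).trans hg
  obtain ⟨N, hN, hle⟩ := exists_smul_top_le_jointReductionIdeal_smul hx
    (initialIdeal_smul_inf_multiPow_smul_le h) hL
  exact exists_isReductionInDegree hx hN hle

end ReesSuperficial

section Multiplicity

open Filter

variable {A M : Type*} [CommRing A] [AddCommGroup M] [Module A M]

lemma lenNat_eq_toNat_length (N : Type*) [AddCommGroup N] [Module A N] :
    lenNat A N = (Module.length A N).toNat := by
  rw [Module.length_eq_height]
  rfl

lemma exists_polynomial_of_isHSMult {q : Ideal A} {d e : ℕ} (h : IsHSMult A M q d e) :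
    ∃ P : Polynomial ℚ, P.natDegree ≤ d ∧
      (∀ᶠ n : ℕ in atTop,
        (relLengthInt (⊤ : Submodule A M) (q ^ n • ⊤) : ℚ) = P.eval (n : ℚ)) ∧
      (e : ℚ) = P.coeff d * d.factorial := by
  obtain ⟨P, hdeg, ⟨N, hN⟩, he⟩ := h
  refine ⟨P, hdeg, eventually_atTop.2 ⟨N, fun n hn => ?_⟩, he⟩
  rw [← (hN n hn).2, lenNat_eq_toNat_length, relLengthInt, relLength_top, Int.cast_natCast]

lemma multiPow_cons {s : ℕ} (J : Ideal A) (I : Fin s → Ideal A) (n : Fin (s + 1) → ℕ) :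
    multiPow (Fin.cons J I : Fin (s + 1) → Ideal A) n = J ^ n 0 * multiPow I fun i => n i.succ := by
  simp [multiPow, Fin.prod_univ_succ]

lemma ringKrullDim_quotient_annihilator_multiPow_cons_le {s h r : ℕ} {J : Ideal A}
    {I : Fin s → Ideal A} (hM : modDim A M ≤ (h + r : ℕ))
    (hh : (h : ℕ∞) ≤ idealHeight (A ⧸ Module.annihilator A M)
      (Ideal.map (Ideal.Quotient.mk (Module.annihilator A M)) (∏ i, I i)))
    {n : Fin (s + 1) → ℕ} (hn : n 0 = 0) :
    ringKrullDim (A ⧸ Module.annihilator A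
      (M ⧸ multiPow (Fin.cons J I : Fin (s + 1) → Ideal A) n • (⊤ : Submodule A M))) ≤ r := by
  rw [multiPow_cons, hn, pow_zero, one_mul]
  exact ringKrullDim_quotient_annihilator_quotient_le (prod_le_radical_multiPow I _) hM hh

lemma exists_mvPolynomial_of_isMixedMult {s : ℕ} {J : Ideal A} {I : Fin s → Ideal A} {k0 : ℕ}
    {k : Fin s → ℕ} {e : ℕ} (h : IsMixedMult A M J I k0 k e) :
    let K : Fin (s + 1) → Ideal A := Fin.cons J I
    let κ : Fin (s + 1) → ℕ := Fin.cons k0 k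
    ∃ P : MvPolynomial (Fin (s + 1)) ℚ, P.totalDegree ≤ ∑ i, κ i ∧
      (∀ᶠ n : Fin (s + 1) → ℕ in atTop, (relLengthInt (multiPow K n • (⊤ : Submodule A M))
        (multiPow K (n + Pi.single 0 1) • ⊤) : ℚ) = MvPolynomial.eval (fun i => (n i : ℚ)) P) ∧
      (e : ℚ) = P.coeff (Finsupp.equivFunOnFinite.symm κ) * ∏ i, ((κ i).factorial : ℚ) := by
  obtain ⟨P, hdeg, ⟨N, hN⟩, he⟩ := h
  refine ⟨P, by simpa [Fin.sum_univ_succ] using hdeg,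
    eventually_atTop.2 ⟨fun _ => N, fun n hn => ?_⟩, by simpa [Fin.prod_univ_succ] using he⟩
  rw [← (hN n hn).2, lenNat_eq_toNat_length, relLengthInt, Int.cast_natCast, multiPow_cons,
    multiPow_cons, Pi.add_apply, Pi.single_eq_same]
  simp only [Pi.add_apply, Pi.single_eq_of_ne (Fin.succ_ne_zero _), add_zero]
  rfl

end Multiplicity

end MixedMultiplicity

open MixedMultiplicity in
theorem mixedMult_eq_multiplicity_of_reesSuperficialSeq_general
    (A : Type*) [CommRing A] [IsNoetherianRing A] [IsLocalRing A]
    (M : Type*) [AddCommGroup M] [Module A M] [Module.Finite A M]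
    {s : ℕ} (J : Ideal A) (hJ : J.radical = maximalIdeal A)
    (I : Fin s → Ideal A) (d k0 : ℕ) (k : Fin s → ℕ)
    (hht : ((∑ i, k i : ℕ) : ℕ∞) < idealHeight (A ⧸ Module.annihilator A M)
        (Ideal.map (Ideal.Quotient.mk (Module.annihilator A M)) (∏ i, I i)))
    (x : Fin d → A) (c : Fin d → Fin (s + 1))
    (hseq : IsReesSuperficialSeq A M (Fin.snoc I J) x c)
    (htype : OfTypeCount c (Fin.snoc k (k0 + 1)))
    (hsop : IsSOP A M x) (e₁ e₂ : ℕ) (he₁ : IsMixedMult A M J I k0 k e₁)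
    (he₂ : IsHSMult A M (Ideal.span (Set.range x)) d e₂) : e₁ = e₂ := by
  obtain ⟨hdim, hxm, hlen⟩ := hsop
  have hfin : relLength (⊤ : Submodule A M) (Ideal.span (Set.range x) • ⊤) ≠ ⊤ := by
    rwa [relLength_top, Module.length_ne_top_iff]
  rw [Fin.snoc_eq_cons_rotate] at hseq htype
  have hseq' := isReesSuperficialSeq_equiv_comp hseq
  have hκ := (multiDeg_univ_equiv_comp htype).trans (cons_add_one k0 k)
  have hd : d = ∑ i, k i + 1 + k0 := by
    rw [card_eq_of_multiDeg_univ_eq hκ, Fin.sum_univ_succ]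
    exact (add_assoc k0 _ 1).trans (add_comm k0 _)
  obtain ⟨N, hred⟩ := exists_isReductionInDegree_of_isReesSuperficialSeq hseq' (o := 0)
    (Ideal.le_radical.trans hJ.le) hfin
  obtain ⟨P, hPdeg, hP, heP⟩ := exists_mvPolynomial_of_isMixedMult he₁
  obtain ⟨Q, hQdeg, hQ, heQ⟩ := exists_polynomial_of_isHSMult he₂
  have hcoeff := coeff_mul_prod_factorial_eq_coeff_mul_factorial hJ.ge hxm
    (fun j => (hseq' j).1) hred hfin hκ
    (fun n hn => ringKrullDim_quotient_annihilator_multiPow_cons_le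
      (hdim.trans (congrArg Nat.cast hd)).le (Order.add_one_le_of_lt hht) hn)
    hPdeg hP (hQdeg.trans_eq (Fintype.card_fin d).symm) hQ
  rw [Fintype.card_fin, ← heP, ← heQ] at hcoeff
  exact_mod_cast hcoeff

/-- Remark 3.4.  If `ht((I + Ann_A M)/Ann_A M) = h > 0`,
`k 0 + k 1 + ⋯ + k s = d - 1`, `k 1 + ⋯ + k s < h`, and `x 1, …, x d` is a Rees superficial
sequence of `(I 1, …, I s, J)` with respect to `M` of type `(k 1, …, k s, k 0 + 1)` which
is a system of parameters for `M`, then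
`e_A(J^{[k 0 + 1]}, I 1^{[k 1]}, …, I s^{[k s]}; M) = e_A(x 1, …, x d; M)`. -/
theorem mixedMult_eq_multiplicity_of_reesSuperficialSeq
    (A : Type*) [CommRing A] [IsNoetherianRing A] [IsLocalRing A]
    [Infinite (ResidueField A)]
    (M : Type*) [AddCommGroup M] [Module A M] [Module.Finite A M]
    {s : ℕ} (J : Ideal A) (hJ : J.radical = maximalIdeal A)
    (I : Fin s → Ideal A)
    (d : ℕ) (hd : 0 < d) (hdim : modDim A M = (d : WithBot ℕ∞))
    (h : ℕ) (hh : 0 < h)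
    (hht : idealHeight (A ⧸ Module.annihilator A M)
        (Ideal.map (Ideal.Quotient.mk (Module.annihilator A M)) (∏ i, I i)) = (h : ℕ∞))
    (k0 : ℕ) (k : Fin s → ℕ)
    (hsum : k0 + ∑ i, k i = d - 1) (hlt : ∑ i, k i < h)
    (x : Fin d → A) (c : Fin d → Fin (s + 1))
    (hseq : IsReesSuperficialSeq A M (Fin.snoc I J) x c)
    (htype : OfTypeCount c (Fin.snoc k (k0 + 1)))
    (hsop : IsSOP A M x) :
    ∀ e₁ e₂ : ℕ, IsMixedMult A M J I k0 k e₁ →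
      IsHSMult A M (Ideal.span (Set.range x)) d e₂ → e₁ = e₂ := by
  intro e₁ e₂ he₁ he₂
  exact mixedMult_eq_multiplicity_of_reesSuperficialSeq_general A M J hJ I d k0 k
    (by rw [hht]; exact_mod_cast hlt) x c hseq htype hsop e₁ e₂ he₁ he₂
end

section
/- Let (A, m) be a noetherian local ring with infinite residue field, M a finitely generated A-module with dim M = d > 0, and I_1, ..., I_s m-primary ideals of A. Assume k_1, ..., k_s are non-negative integers with k_1 + ··· + k_s = d, and let R be a joint reduction of (I_1, ..., I_s) with respect to M of the type (k_1, ..., k_s). Then e_A(I_1^{[k_1]}, ..., I_s^{[k_s]}, M) = e_A(R, M), i.e., the mixed multiplicity of (I_1, ..., I_s) with respect to M of type (k_1, ..., k_s) equals the Hilbert–Samuel multiplicity of the parameter ideal generated by R on M. -/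
open IsLocalRing

/-! Both multiplicities equal the multiplicity symbol `e(x₁, …, x_d | M)`. The mixed multiplicity is
the iterated difference of `n ↦ ℓ(M / I ^ n M)`, with one difference in direction `c j` for each
`j`. If `P` is a filtration of `M` with which multiplication by `x_j` is compatible, the difference
in direction `c j` of `ℓ(M / P)` is the corresponding length for the filtration induced on
`M / x_j M`, minus that for the filtration induced on `0 :_M x_j`, minus an error term, the length
of `(x_j M ∩ P (n + c_j)) / x_j P n`. Stability of `P` passes to kernels by a multigraded
Artin–Rees lemma, so this can be repeated without any superficiality of the `x_j`. The error term
does not contribute: the joint reduction equation, which only has to hold up to the annihilator of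
`M`, makes the remaining iterated differences of lengths of subquotients on which `x_j` acts
trivially vanish eventually. The Hilbert–Samuel multiplicity of `(x₁, …, x_d)` is the case of one
ideal, for which the generators are trivially a joint reduction. -/

section MultiRees

open MvPolynomial

variable {A σ : Type*} [CommRing A]

/-- The product `∏ i, I i ^ n i` of the ideals of a family, for a multi-index `n`. -/
noncomputable def idealPow (I : σ → Ideal A) (n : σ →₀ ℕ) : Ideal A :=
  n.prod fun i k => I i ^ k

variable (I : σ → Ideal A)

theorem idealPow_zero : idealPow I 0 = ⊤ := by
  simp [idealPow]

theorem idealPow_add (m n : σ →₀ ℕ) : idealPow I (m + n) = idealPow I m * idealPow I n :=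
  Finsupp.prod_add_index' (fun _ => pow_zero _) fun _ _ _ => pow_add _ _ _

theorem idealPow_single (i : σ) (k : ℕ) : idealPow I (Finsupp.single i k) = I i ^ k :=
  Finsupp.prod_single_index (pow_zero _)

theorem idealPow_eq_prod [Fintype σ] (n : σ →₀ ℕ) : idealPow I n = ∏ i, I i ^ n i :=
  Finsupp.prod_fintype _ _ fun _ => pow_zero _

theorem idealPow_nsmul (q : ℕ) (n : σ →₀ ℕ) : idealPow I (q • n) = idealPow I n ^ q := by
  induction q with
  | zero => simp [idealPow_zero]
  | succ q ih => rw [succ_nsmul, idealPow_add, ih, pow_succ]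

theorem idealPow_le_of_mul_le {J : (σ →₀ ℕ) → Ideal A} (J_zero : J 0 = ⊤)
    (J_mul : ∀ m n, J m * J n ≤ J (m + n)) (h : ∀ i, I i ≤ J (Finsupp.single i 1)) (n : σ →₀ ℕ) :
    idealPow I n ≤ J n := by
  have pow_le (i k) : I i ^ k ≤ J (Finsupp.single i k) := by
    induction k with
    | zero => simp [J_zero]
    | succ k ih =>
      rw [pow_succ, Finsupp.single_add]
      exact (Ideal.mul_mono ih (h i)).trans (J_mul _ _)
  induction n using Finsupp.induction_linear with
  | zero => simp [J_zero]
  | add m n hm hn =>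
    rw [idealPow_add]
    exact (Ideal.mul_mono hm hn).trans (J_mul _ _)
  | single i k =>
    rw [idealPow_single]
    exact pow_le i k

/-- The multi-Rees algebra `⨁ n, I ^ n T ^ n` of a family of ideals, realised as the subalgebra of
the polynomials in `T` whose coefficient at each multi-index `n` lies in `I ^ n`. -/
noncomputable def multiReesAlgebra : Subalgebra A (MvPolynomial σ A) where
  carrier := {f | ∀ m, coeff m f ∈ idealPow I m}
  mul_mem' := by
    classical
    intro f g hf hg m
    rw [coeff_mul]
    refine Ideal.sum_mem _ fun p hp => ?_
    rw [← Finset.HasAntidiagonal.mem_antidiagonal.mp hp, idealPow_add]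
    exact Ideal.mul_mem_mul (hf _) (hg _)
  add_mem' hf hg m := by
    rw [coeff_add]
    exact Ideal.add_mem _ (hf m) (hg m)
  algebraMap_mem' a m := by
    classical
    rw [algebraMap_eq, coeff_C]
    split_ifs with h
    · simp [← h, idealPow_zero]
    · exact Ideal.zero_mem _

theorem monomial_mem_multiReesAlgebra {m : σ →₀ ℕ} {a : A} (ha : a ∈ idealPow I m) :
    monomial m a ∈ multiReesAlgebra I := by
  classical
  intro l
  rw [coeff_monomial]
  split_ifs with h
  · exact h ▸ ha
  · exact Ideal.zero_mem _

theorem multiReesAlgebra_eq_adjoin (S : σ → Set A) (hS : ∀ i, Ideal.span (S i) = I i) :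
    multiReesAlgebra I =
      Algebra.adjoin A (⋃ i, monomial (Finsupp.single i 1) '' S i) := by
  set R := Algebra.adjoin A (⋃ i, monomial (Finsupp.single i 1) '' S i)
  refine le_antisymm (fun f hf => ?_) (Algebra.adjoin_le ?_)
  · let J (m : σ →₀ ℕ) : Ideal A :=
      R.toSubmodule.comap (monomial m : A →ₗ[A] MvPolynomial σ A)
    have mem_J {m a} : a ∈ J m ↔ monomial m a ∈ R := Iff.rfl
    have J_zero : J 0 = ⊤ := (Ideal.eq_top_iff_one _).mpr R.one_mem
    have J_mul (m n) : J m * J n ≤ J (m + n) := Ideal.mul_le.mpr fun a ha b hb => by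
      rw [mem_J, ← monomial_mul]
      exact R.mul_mem ha hb
    have le_J_single (i) : I i ≤ J (Finsupp.single i 1) := by
      rw [← hS i, Ideal.span_le]
      exact fun a ha => Algebra.subset_adjoin (Set.mem_iUnion.mpr ⟨i, a, ha, rfl⟩)
    rw [f.as_sum]
    exact R.sum_mem fun m _ => idealPow_le_of_mul_le I J_zero J_mul le_J_single m (hf m)
  · rintro _ hf
    obtain ⟨i, a, ha, rfl⟩ := Set.mem_iUnion.mp hf
    refine monomial_mem_multiReesAlgebra I ?_
    rw [idealPow_single, pow_one, ← hS i]
    exact Ideal.subset_span ha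

instance isNoetherianRing_multiReesAlgebra [Finite σ] [IsNoetherianRing A] :
    IsNoetherianRing (multiReesAlgebra I) := by
  choose S hS using fun i => (isNoetherianRing_iff_ideal_fg A).mp inferInstance (I i)
  refine isNoetherianRing_of_fg (Subalgebra.fg_def.mpr ⟨_, ?_,
    (multiReesAlgebra_eq_adjoin I (fun i => S i) hS).symm⟩)
  exact Set.finite_iUnion fun i => (S i).finite_toSet.image _

end MultiRees

/-- A family of submodules of `M` indexed by multi-indices and compatible with multiplication by
the ideals `I i`. Unlike `Ideal.Filtration` it need not be decreasing: this lets kernels and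
colon submodules be treated on the same footing as the powers `I ^ n M`. -/
@[ext]
structure MultiFiltration {A σ : Type*} [CommRing A] (I : σ → Ideal A) (M : Type*)
    [AddCommGroup M] [Module A M] where
  toFun : (σ →₀ ℕ) → Submodule A M
  smul_le : ∀ m n, idealPow I m • toFun n ≤ toFun (n + m)

namespace MultiFiltration

variable {A σ : Type*} [CommRing A] {I : σ → Ideal A}
variable {M M' : Type*} [AddCommGroup M] [Module A M] [AddCommGroup M'] [Module A M']

instance : CoeFun (MultiFiltration I M) fun _ => (σ →₀ ℕ) → Submodule A M := ⟨toFun⟩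

instance : LE (MultiFiltration I M) := ⟨fun F G => ∀ n, F n ≤ G n⟩

theorem smul_mem (F : MultiFiltration I M) {i : σ} {a : A} (ha : a ∈ I i) {n : σ →₀ ℕ} {v : M}
    (hv : v ∈ F n) : a • v ∈ F (n + Finsupp.single i 1) :=
  F.smul_le _ n (Submodule.smul_mem_smul (by rwa [idealPow_single, pow_one]) hv)

variable (I M) in
/-- The filtration `n ↦ I ^ n M`. -/
noncomputable def adic : MultiFiltration I M where
  toFun n := idealPow I n • ⊤
  smul_le m n := by rw [add_comm, idealPow_add, mul_smul]

/-- The filtration with its multi-index translated by `e`. -/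
noncomputable def shift (F : MultiFiltration I M) (e : σ →₀ ℕ) : MultiFiltration I M where
  toFun n := F (n + e)
  smul_le m n := by
    rw [add_right_comm]
    exact F.smul_le m (n + e)

/-- The image of a filtration under a linear map. -/
def map (F : MultiFiltration I M) (f : M →ₗ[A] M') : MultiFiltration I M' where
  toFun n := (F n).map f
  smul_le m n := by
    rw [← Submodule.map_smul'']
    exact Submodule.map_mono (F.smul_le m n)

/-- The preimage of a filtration under a linear map. -/
def comap (F : MultiFiltration I M') (f : M →ₗ[A] M') : MultiFiltration I M where
  toFun n := (F n).comap f
  smul_le m n := by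
    rw [← Submodule.map_le_iff_le_comap, Submodule.map_smul'']
    exact (Submodule.smul_mono le_rfl (Submodule.map_comap_le _ _)).trans (F.smul_le m n)

instance : Min (MultiFiltration I M) where
  min F G :=
    { toFun n := F n ⊓ G n
      smul_le m n := le_inf
        ((Submodule.smul_mono le_rfl inf_le_left).trans (F.smul_le m n))
        ((Submodule.smul_mono le_rfl inf_le_right).trans (G.smul_le m n)) }

instance : Top (MultiFiltration I M) where
  top :=
    { toFun _ := ⊤
      smul_le _ _ := le_top }

instance : Max (MultiFiltration I M) where
  max F G :=
    { toFun n := F n ⊔ G n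
      smul_le m n := by
        rw [Submodule.smul_sup]
        exact sup_le_sup (F.smul_le m n) (G.smul_le m n) }

/-- The filtration generated by the terms of `F` of multi-index at most `D`. -/
noncomputable def generatedBelow (F : MultiFiltration I M) (D : σ →₀ ℕ) : MultiFiltration I M where
  toFun n := ⨆ (b) (_ : b ≤ D) (l) (_ : b + l = n), idealPow I l • F b
  smul_le m n := by
    simp only [Submodule.smul_iSup]
    refine iSup₂_le fun b hb => iSup₂_le fun l hl => ?_
    refine le_iSup₂_of_le b hb (le_iSup₂_of_le (m + l) ?_ ?_)
    · rw [← hl]; abel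
    · rw [idealPow_add, mul_smul]

theorem le_generatedBelow (F : MultiFiltration I M) {n D : σ →₀ ℕ} (h : n ≤ D) :
    F n ≤ F.generatedBelow D n := by
  refine le_iSup₂_of_le n h (le_iSup₂_of_le 0 (add_zero n) ?_)
  rw [idealPow_zero, Submodule.top_smul]

theorem generatedBelow_le (F : MultiFiltration I M) (D : σ →₀ ℕ) : F.generatedBelow D ≤ F :=
  fun _ => iSup₂_le fun b _ => iSup₂_le fun l hl => hl ▸ F.smul_le l b

theorem generatedBelow_mono (F : MultiFiltration I M) {D D' : σ →₀ ℕ} (h : D ≤ D') :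
    F.generatedBelow D ≤ F.generatedBelow D' :=
  fun _ => iSup_mono fun _ => iSup_mono' fun hb => ⟨hb.trans h, le_rfl⟩

/-- A filtration is stable if, from some multi-index on, each term generates all later ones. -/
def Stable (F : MultiFiltration I M) : Prop :=
  ∃ D, ∀ n, D ≤ n → ∀ m, F (n + m) ≤ idealPow I m • F n

theorem stable_adic : (adic I M).Stable :=
  ⟨0, fun n _ m => by simp only [adic]; rw [add_comm, idealPow_add, mul_smul]⟩

theorem Stable.eventually_le_smul {F : MultiFiltration I M} (hF : F.Stable) (t : σ →₀ ℕ) :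
    ∀ᶠ n in Filter.atTop, ∃ m, n = m + t ∧ F n ≤ idealPow I t • F m := by
  obtain ⟨D, hD⟩ := hF
  filter_upwards [Filter.eventually_ge_atTop (D + t)] with n hn
  obtain ⟨u, rfl⟩ := exists_add_of_le hn
  rw [add_right_comm]
  exact ⟨D + u, rfl, hD (D + u) le_self_add t⟩

theorem Stable.shift {F : MultiFiltration I M} (hF : F.Stable) (e : σ →₀ ℕ) :
    (F.shift e).Stable := by
  obtain ⟨D, hD⟩ := hF
  refine ⟨D, fun n hn m => ?_⟩
  have := hD (n + e) (hn.trans le_self_add) m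
  rwa [add_right_comm] at this

theorem Stable.map {F : MultiFiltration I M} (hF : F.Stable) (f : M →ₗ[A] M') :
    (F.map f).Stable := by
  obtain ⟨D, hD⟩ := hF
  refine ⟨D, fun n hn m => ?_⟩
  have := Submodule.map_mono (f := f) (hD n hn m)
  rwa [Submodule.map_smul''] at this

theorem stable_of_le_generatedBelow {F : MultiFiltration I M} {D : σ →₀ ℕ}
    (h : F ≤ F.generatedBelow D) : F.Stable := by
  refine ⟨D, fun n hn m => (h _).trans ?_⟩
  refine iSup₂_le fun b hb => iSup₂_le fun l hl => ?_
  obtain ⟨u, rfl⟩ := exists_add_of_le (hb.trans hn)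
  obtain rfl : l = m + u := by
    rw [add_assoc] at hl
    rw [add_left_cancel hl, add_comm]
  rw [idealPow_add, mul_smul]
  exact Submodule.smul_mono le_rfl (F.smul_le u b)

section ArtinRees

open MvPolynomial

variable {ι : Type*}

/-- The homogeneous submodule `⨁ n, F n T ^ n` of a finite free module over the multi-Rees
algebra, for a filtration `F` of a finite free `A`-module. -/
noncomputable def reesSubmodule (F : MultiFiltration I (ι → A)) :
    Submodule (multiReesAlgebra I) (ι → multiReesAlgebra I) where
  carrier := {f | ∀ m, (fun i => coeff m (f i : MvPolynomial σ A)) ∈ F m}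
  add_mem' hf hg m := (F m).add_mem (hf m) (hg m)
  zero_mem' m := (F m).zero_mem
  smul_mem' := by
    classical
    intro a f hf m
    have coeff_smul : (fun i => coeff m ((a • f) i : MvPolynomial σ A)) =
        ∑ p ∈ Finset.HasAntidiagonal.antidiagonal m,
          coeff p.1 (a : MvPolynomial σ A) • fun i => coeff p.2 (f i : MvPolynomial σ A) := by
      ext i
      simp [coeff_mul]
    rw [coeff_smul]
    refine (F m).sum_mem fun p hp => ?_
    rw [← Finset.HasAntidiagonal.mem_antidiagonal.mp hp, add_comm]
    exact F.smul_le p.1 p.2 (Submodule.smul_mem_smul (a.2 _) (hf _))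

theorem reesSubmodule_mono {F G : MultiFiltration I (ι → A)} (h : F ≤ G) :
    F.reesSubmodule ≤ G.reesSubmodule :=
  fun _ hf m => h m (hf m)

theorem apply_mem_of_mem_smul_top {J : Ideal A} {v : ι → A}
    (hv : v ∈ J • (⊤ : Submodule A (ι → A))) (i : ι) : v i ∈ J := by
  induction hv using Submodule.smul_induction_on' with
  | smul a ha w _ => exact J.mul_mem_right _ ha
  | add v _ w _ hv hw => exact J.add_mem hv hw

theorem le_of_reesSubmodule_le {F G : MultiFiltration I (ι → A)} {k : σ →₀ ℕ}
    (hF : F k ≤ adic I (ι → A) k) (h : F.reesSubmodule ≤ G.reesSubmodule) : F k ≤ G k := by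
  classical
  intro v hv
  let f (i : ι) : multiReesAlgebra I :=
    ⟨monomial k (v i), monomial_mem_multiReesAlgebra I (apply_mem_of_mem_smul_top (hF hv) i)⟩
  have coeff_f (m) : (fun i => coeff m (f i : MvPolynomial σ A)) = if k = m then v else 0 := by
    ext i
    simp only [f, coeff_monomial]
    split_ifs <;> rfl
  have hf : f ∈ F.reesSubmodule := fun m => by
    rw [coeff_f]
    split_ifs with hkm
    · exact hkm ▸ hv
    · exact (F m).zero_mem
  simpa [coeff_f] using h hf k

theorem exists_le_generatedBelow [Finite σ] [IsNoetherianRing A] [Finite ι]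
    {F : MultiFiltration I (ι → A)} (hF : F ≤ adic I (ι → A)) :
    ∃ D, F ≤ F.generatedBelow D := by
  obtain ⟨_, ⟨D, rfl⟩, hD⟩ := wellFounded_gt.has_min
    (Set.range fun D => (F.generatedBelow D).reesSubmodule) (Set.range_nonempty _)
  refine ⟨D, fun k => (F.le_generatedBelow (le_sup_right : k ≤ D ⊔ k)).trans ?_⟩
  refine le_of_reesSubmodule_le ((F.generatedBelow_le _ k).trans (hF k)) ?_
  exact (eq_of_le_of_not_lt (reesSubmodule_mono (F.generatedBelow_mono le_sup_left))
    (hD _ ⟨D ⊔ k, rfl⟩)).ge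

theorem stable_of_le_adic [Finite σ] [IsNoetherianRing A] [Module.Finite A M]
    {F : MultiFiltration I M} (hF : F ≤ adic I M) : F.Stable := by
  obtain ⟨r, π, hπ⟩ := Module.Finite.exists_fin' A M
  let G := F.comap π ⊓ adic I (Fin r → A)
  have map_G : G.map π = F := by
    refine MultiFiltration.ext (funext fun n => le_antisymm ?_ fun y hy => ?_)
    · rintro _ ⟨v, hv, rfl⟩
      exact hv.1
    · have : y ∈ idealPow I n • ⊤ := hF n hy
      rw [← LinearMap.range_eq_top.mpr hπ, LinearMap.range_eq_map,
        ← Submodule.map_smul''] at this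
      obtain ⟨v, hv, rfl⟩ := this
      exact ⟨v, ⟨hy, hv⟩, rfl⟩
  obtain ⟨D, hD⟩ := exists_le_generatedBelow (F := G) fun n => inf_le_right
  exact map_G ▸ (stable_of_le_generatedBelow hD).map π

/-- A multigraded version of the Artin–Rees lemma. -/
theorem Stable.of_le [Finite σ] [IsNoetherianRing A] [Module.Finite A M]
    {F G : MultiFiltration I M} (hG : G.Stable) (hFG : F ≤ G) : F.Stable := by
  obtain ⟨D, hD⟩ := hG
  have hF : F.shift D ≤ adic I M := fun n => by
    refine (hFG _).trans ?_
    rw [add_comm]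
    exact (hD D le_rfl n).trans (Submodule.smul_mono le_rfl le_top)
  obtain ⟨D', hD'⟩ := stable_of_le_adic hF
  refine ⟨D' + D, fun n hn m => ?_⟩
  obtain ⟨u, rfl⟩ := exists_add_of_le hn
  have := hD' (D' + u) le_self_add m
  rwa [show D' + D + u = D' + u + D by abel, add_right_comm (D' + u)]

theorem Stable.comap_of_injective [Finite σ] [IsNoetherianRing A] [Module.Finite A M']
    {F : MultiFiltration I M'} (hF : F.Stable) {f : M →ₗ[A] M'} (hf : Function.Injective f) :
    (F.comap f).Stable := by
  obtain ⟨D, hD⟩ := hF.of_le (F := (F.comap f).map f) fun n => Submodule.map_comap_le _ _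
  refine ⟨D, fun n hn m => ?_⟩
  rw [← Submodule.map_le_map_iff_of_injective hf, Submodule.map_smul'']
  exact hD n hn m

end ArtinRees

end MultiFiltration

section RelativeLength

variable {A N N' : Type*} [Ring A] [AddCommGroup N] [Module A N] [AddCommGroup N'] [Module A N']

theorem length_eq_length_map_add_length_inf_ker (f : N →ₗ[A] N') (W : Submodule A N) :
    Module.length A W =
      Module.length A (W.map f) + Module.length A ↥(W ⊓ LinearMap.ker f) := by
  rw [add_comm]
  refine Module.length_eq_add_of_exact (Submodule.inclusion inf_le_left) (f.submoduleMap W)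
    (Submodule.inclusion_injective _) (f.submoduleMap_surjective W) fun v => ?_
  constructor
  · exact fun hv => ⟨⟨v, v.2, congrArg Subtype.val hv⟩, rfl⟩
  · rintro ⟨w, rfl⟩
    exact Subtype.ext w.2.2

/-- The length of `(P + Q) / Q`, the image of `P` in `N / Q`; for `Q ≤ P` it is the length of the
quotient `P / Q`. -/
noncomputable def relLength (P Q : Submodule A N) : ℕ∞ :=
  Module.length A (P.map Q.mkQ)

theorem relLength_top (Q : Submodule A N) : relLength ⊤ Q = Module.length A (N ⧸ Q) := by
  rw [relLength, Submodule.map_top, Submodule.range_mkQ, Module.length_top]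

theorem relLength_eq_zero {P Q : Submodule A N} (h : P ≤ Q) : relLength P Q = 0 := by
  rw [relLength, LinearMap.le_ker_iff_map.mp (h.trans Q.ker_mkQ.ge), Module.length_bot]

theorem relLength_sup_right (P Q : Submodule A N) : relLength (P ⊔ Q) Q = relLength P Q := by
  rw [relLength, Submodule.map_sup, Submodule.mkQ_map_self, sup_bot_eq, relLength]

theorem relLength_mono {P P' : Submodule A N} (h : P ≤ P') (Q : Submodule A N) :
    relLength P Q ≤ relLength P' Q :=
  Module.length_le_of_injective _ (Submodule.inclusion_injective (Submodule.map_mono h))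

theorem length_map_eq_relLength_ker (f : N →ₗ[A] N') (P : Submodule A N) :
    Module.length A (P.map f) = relLength P (LinearMap.ker f) := by
  have map_liftQ : (P.map (LinearMap.ker f).mkQ).map ((LinearMap.ker f).liftQ f le_rfl) =
      P.map f := by
    rw [← Submodule.map_comp, Submodule.liftQ_mkQ]
  rw [← map_liftQ]
  exact (Submodule.equivMapOfInjective _ (LinearMap.ker_eq_bot.mp
    (Submodule.ker_liftQ_eq_bot' _ f rfl)) _).length_eq.symm

theorem relLength_map (f : N →ₗ[A] N') (P : Submodule A N) (Q : Submodule A N') :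
    relLength (P.map f) Q = relLength P (Q.comap f) := by
  rw [relLength, ← Submodule.map_comp, length_map_eq_relLength_ker, LinearMap.ker_comp,
    Submodule.ker_mkQ]

theorem relLength_eq_add (P : Submodule A N) {Q R : Submodule A N} (h : R ≤ Q) :
    relLength P R = relLength P Q + relLength (P ⊓ Q) R := by
  have map_inf_ker : P.map R.mkQ ⊓ LinearMap.ker (Submodule.factor h) = (P ⊓ Q).map R.mkQ := by
    rw [Submodule.map_inf_eq_map_inf_comap, ← LinearMap.ker_comp, Submodule.factor_comp_mk,
      Submodule.ker_mkQ]
  rw [relLength, length_eq_length_map_add_length_inf_ker (Submodule.factor h), map_inf_ker,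
    ← Submodule.map_comp, Submodule.factor_comp_mk, relLength, relLength]

theorem relLength_anti (P : Submodule A N) {Q R : Submodule A N} (h : R ≤ Q) :
    relLength P Q ≤ relLength P R :=
  (relLength_eq_add P h).ge.trans' le_self_add

theorem relLength_map_map_le (f : N →ₗ[A] N') (P Q : Submodule A N) :
    relLength (P.map f) (Q.map f) ≤ relLength P Q := by
  rw [relLength_map]
  exact relLength_anti P (Submodule.le_comap_map f Q)

theorem relLength_add_relLength_inf_comap (f : N →ₗ[A] N') {P Q : Submodule A N}
    {P' Q' : Submodule A N'} (hQ' : Q' ≤ P') (hP : P.map f ≤ P') (hQ : Q.map f ≤ Q') :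
    relLength P' Q' + relLength (P ⊓ Q'.comap f) Q =
      relLength P' (P.map f ⊔ Q') + relLength P Q := by
  have hP' : relLength P' Q' = relLength P' (P.map f ⊔ Q') + relLength P (Q'.comap f) := by
    rw [relLength_eq_add P' (le_sup_right : Q' ≤ P.map f ⊔ Q'), inf_eq_right.mpr (sup_le hP hQ'),
      relLength_sup_right, relLength_map]
  rw [hP', add_assoc, ← relLength_eq_add P (Submodule.map_le_iff_le_comap.mp hQ)]

theorem relLength_top_add_relLength (f : N →ₗ[A] N') {P : Submodule A N} {P' : Submodule A N'}
    (h : P.map f ≤ P') :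
    relLength ⊤ P' + relLength ((P'.comap f).map f) (P.map f) + relLength (LinearMap.ker f) P =
      relLength ⊤ (LinearMap.range f ⊔ P') + relLength ⊤ P := by
  have comap_length : relLength (P'.comap f) P =
      relLength ((P'.comap f).map f) (P.map f) + relLength (LinearMap.ker f) P := by
    have hker : LinearMap.ker f ⊔ P ≤ P'.comap f :=
      sup_le (LinearMap.ker_le_comap f) (Submodule.map_le_iff_le_comap.mp h)
    rw [relLength_eq_add _ (le_sup_right : P ≤ LinearMap.ker f ⊔ P), inf_eq_right.mpr hker,
      relLength_sup_right, relLength_map, Submodule.comap_map_eq, sup_comm P]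
  have := relLength_add_relLength_inf_comap f (P := ⊤) le_top le_top h
  rw [top_inf_eq, Submodule.map_top] at this
  rw [← this, comap_length, add_assoc]

theorem relLength_top_map_mkQ (K P : Submodule A N) :
    relLength ⊤ (P.map K.mkQ) = relLength ⊤ (K ⊔ P) := by
  rw [← Submodule.comap_map_mkQ, ← relLength_map, Submodule.map_top, Submodule.range_mkQ]

theorem relLength_top_comap_subtype (K P : Submodule A N) :
    relLength ⊤ (P.comap K.subtype) = relLength K P := by
  rw [← relLength_map, Submodule.map_top, Submodule.range_subtype]

theorem toNat_sub_toNat_eq {a b c d : ℕ∞} (h : a + b = c + d) (ha : a ≠ ⊤) (hb : b ≠ ⊤)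
    (hc : c ≠ ⊤) (hd : d ≠ ⊤) : (a.toNat : ℤ) - d.toNat = c.toNat - b.toNat := by
  lift a to ℕ using ha
  lift b to ℕ using hb
  lift c to ℕ using hc
  lift d to ℕ using hd
  norm_cast at h
  simp only [ENat.toNat_natCast]
  lia

end RelativeLength

section MixedDifference

open Filter

variable {σ G : Type*} [AddCommGroup G]

/-- The iterated forward difference of a function of several variables, with one difference in the
`i`-th variable for each entry `i` of the list. -/
noncomputable def mixedDiff : List σ → ((σ →₀ ℕ) → G) → (σ →₀ ℕ) → G
  | [], F => F
  | i :: l, F => mixedDiff l (fwdDiff (Finsupp.single i 1) F)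

theorem mixedDiff_sub (l : List σ) (F F' : (σ →₀ ℕ) → G) :
    mixedDiff l (F - F') = mixedDiff l F - mixedDiff l F' := by
  induction l generalizing F F' with
  | nil => rfl
  | cons i l ih =>
    simp only [mixedDiff]
    rw [← ih]
    congr 1
    ext n
    exact sub_sub_sub_comm ..

theorem eventually_shift {p : (σ →₀ ℕ) → Prop} (h : ∀ᶠ n in atTop, p n) (e : σ →₀ ℕ) :
    ∀ᶠ n in atTop, p (n + e) :=
  (tendsto_atTop_mono (fun _ => le_self_add) tendsto_id).eventually h

theorem mixedDiff_congr (l : List σ) {F F' : (σ →₀ ℕ) → G} (h : F =ᶠ[atTop] F') :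
    mixedDiff l F =ᶠ[atTop] mixedDiff l F' := by
  induction l generalizing F F' with
  | nil => exact h
  | cons i _ ih =>
    refine ih ?_
    filter_upwards [h, eventually_shift h (Finsupp.single i 1)] with n hn hn'
    simp only [fwdDiff, hn, hn']

end MixedDifference

section MixedDifferencePolynomial

variable {σ G H : Type*} [AddCommGroup G] [AddCommGroup H]

theorem mixedDiff_map (φ : G →+ H) (l : List σ) (F : (σ →₀ ℕ) → G) (n : σ →₀ ℕ) :
    mixedDiff l (fun n => φ (F n)) n = φ (mixedDiff l F n) := by
  induction l generalizing F with
  | nil => rfl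
  | cons i l ih =>
    simp only [mixedDiff]
    rw [← ih]
    congr 1
    ext n
    simp [fwdDiff]

theorem mixedDiff_sum {ι : Type*} (l : List σ) (T : Finset ι) (F : ι → (σ →₀ ℕ) → G) :
    mixedDiff l (∑ j ∈ T, F j) = ∑ j ∈ T, mixedDiff l (F j) := by
  induction l generalizing F with
  | nil => rfl
  | cons i l ih => simp only [mixedDiff, fwdDiff_finsetSum, ih]

variable [Fintype σ] [DecidableEq σ] {R : Type*} [CommRing R]

theorem fwdDiff_single_prod (i : σ) (f : σ → R → R) :
    fwdDiff (Finsupp.single i 1) (fun n : σ →₀ ℕ => ∏ j, f j (n j)) =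
      fun n => ∏ j, Function.update f i (fwdDiff 1 (f i)) j (n j) := by
  ext n
  have prod_shift : ∏ j ∈ {i}ᶜ, f j ((n + Finsupp.single i 1 : σ →₀ ℕ) j) =
      ∏ j ∈ {i}ᶜ, f j (n j) := by
    refine Finset.prod_congr rfl fun j hj => ?_
    rw [Finsupp.add_apply, Finsupp.single_eq_of_ne (by simpa using hj), add_zero]
  have prod_update : ∏ j ∈ {i}ᶜ, Function.update f i (fwdDiff 1 (f i)) j (n j) =
      ∏ j ∈ {i}ᶜ, f j (n j) := by
    refine Finset.prod_congr rfl fun j hj => ?_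
    rw [Function.update_of_ne (by simpa using hj)]
  simp only [fwdDiff, Fintype.prod_eq_mul_prod_compl i]
  rw [prod_shift, prod_update, ← sub_mul]
  simp [fwdDiff]

theorem mixedDiff_prod (l : List σ) (f : σ → R → R) (n : σ →₀ ℕ) :
    mixedDiff l (fun n => ∏ j, f j (n j)) n =
      ∏ j, ((fwdDiff 1)^[l.count j] (f j)) (n j) := by
  induction l generalizing f with
  | nil => rfl
  | cons i l ih =>
    rw [mixedDiff, fwdDiff_single_prod, ih]
    refine Finset.prod_congr rfl fun j _ => ?_
    rcases eq_or_ne j i with rfl | hj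
    · simp
    · rw [Function.update_of_ne hj, List.count_cons_of_ne hj.symm]

theorem mixedDiff_monomial {l : List σ} {k : σ →₀ ℕ} (hl : ∀ i, l.count i = k i) {m : σ →₀ ℕ}
    (hm : m.degree ≤ k.degree) (n : σ →₀ ℕ) :
    mixedDiff l (fun n => ∏ j, (n j : R) ^ m j) n =
      if m = k then ((∏ j, (k j).factorial : ℕ) : R) else 0 := by
  rw [mixedDiff_prod l fun j r => r ^ m j]
  simp only [hl]
  split_ifs with h
  · simp [h, fwdDiff_iter_eq_factorial]
  · obtain ⟨j, hj⟩ : ∃ j, m j < k j := by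
      by_contra! hkm
      obtain ⟨u, rfl⟩ := exists_add_of_le (Finsupp.le_def.mpr hkm)
      have : u = 0 := (Finsupp.degree_eq_zero_iff u).mp (by simpa using hm)
      exact h (by simp [this])
    exact Finset.prod_eq_zero (Finset.mem_univ j) (by simp [fwdDiff_iter_pow_eq_zero_of_lt hj])

theorem mixedDiff_eval {l : List σ} {k : σ →₀ ℕ} (hl : ∀ i, l.count i = k i)
    {P : MvPolynomial σ R} (hP : P.totalDegree ≤ k.degree) (n : σ →₀ ℕ) :
    mixedDiff l (fun n => P.eval fun i => (n i : R)) n =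
      P.coeff k * ((∏ i, (k i).factorial : ℕ) : R) := by
  have eval_eq : (fun n : σ →₀ ℕ => P.eval fun i => (n i : R)) =
      ∑ m ∈ P.support, fun n => AddMonoidHom.mulLeft (P.coeff m) (∏ j, (n j : R) ^ m j) := by
    ext n
    simp [MvPolynomial.eval_eq']
  have monomial_term (m) (hm : m ∈ P.support) :
      mixedDiff l (fun n => AddMonoidHom.mulLeft (P.coeff m) (∏ j, (n j : R) ^ m j)) n =
        if m = k then P.coeff m * ((∏ i, (k i).factorial : ℕ) : R) else 0 := by
    rw [mixedDiff_map, mixedDiff_monomial hl ((MvPolynomial.le_totalDegree hm).trans hP)]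
    simp
  rw [eval_eq, mixedDiff_sum, Finset.sum_apply, Finset.sum_congr rfl monomial_term,
    Finset.sum_ite_eq']
  split_ifs with hk
  · rfl
  · rw [MvPolynomial.notMem_support_iff.mp hk, zero_mul]

end MixedDifferencePolynomial

namespace MultiFiltration

open Filter

variable {A σ : Type*} [CommRing A] {I : σ → Ideal A}
variable {M M' : Type*} [AddCommGroup M] [Module A M] [AddCommGroup M'] [Module A M']

/-- The function `n ↦ ℓ (P n / Q n)`, with value `0` where the length is infinite. -/
noncomputable def quotLength (P Q : MultiFiltration I M) (n : σ →₀ ℕ) : ℤ :=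
  (relLength (P n) (Q n)).toNat

/-- The quotients `P n / Q n` have finite length for all large `n`. -/
def HasFiniteQuotients (P Q : MultiFiltration I M) : Prop :=
  ∀ᶠ n in atTop, relLength (P n) (Q n) ≠ ⊤

theorem HasFiniteQuotients.shift {P Q : MultiFiltration I M} (h : P.HasFiniteQuotients Q)
    (e : σ →₀ ℕ) : (P.shift e).HasFiniteQuotients (Q.shift e) :=
  eventually_shift h e

theorem HasFiniteQuotients.mono {P P' Q Q' : MultiFiltration I M} (h : P.HasFiniteQuotients Q)
    (hP : P' ≤ P) (hQ : Q ≤ Q') : P'.HasFiniteQuotients Q' :=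
  Eventually.mono h fun n hn => ne_top_of_le_ne_top hn
    ((relLength_mono (hP n) _).trans (relLength_anti _ (hQ n)))

theorem HasFiniteQuotients.map {P Q : MultiFiltration I M} (h : P.HasFiniteQuotients Q)
    (f : M →ₗ[A] M') : (P.map f).HasFiniteQuotients (Q.map f) :=
  Eventually.mono h fun _ hn => ne_top_of_le_ne_top hn (relLength_map_map_le f _ _)

theorem HasFiniteQuotients.top_map_mkQ {P : MultiFiltration I M}
    (h : (⊤ : MultiFiltration I M).HasFiniteQuotients P) (K : Submodule A M) :
    (⊤ : MultiFiltration I (M ⧸ K)).HasFiniteQuotients (P.map K.mkQ) :=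
  Eventually.mono h fun _ hn => ne_top_of_le_ne_top hn
    ((relLength_top_map_mkQ K _).trans_le (relLength_anti ⊤ le_sup_right))

theorem HasFiniteQuotients.top_comap_subtype {P : MultiFiltration I M}
    (h : (⊤ : MultiFiltration I M).HasFiniteQuotients P) (K : Submodule A M) :
    (⊤ : MultiFiltration I K).HasFiniteQuotients (P.comap K.subtype) :=
  Eventually.mono h fun _ hn => ne_top_of_le_ne_top hn
    ((relLength_top_comap_subtype K _).trans_le (relLength_mono le_top _))

theorem fwdDiff_quotLength {P Q : MultiFiltration I M} (hQP : Q ≤ P)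
    (hfin : P.HasFiniteQuotients Q) {f : M →ₗ[A] M} {e : σ →₀ ℕ} (hP : P.map f ≤ P.shift e)
    (hQ : Q.map f ≤ Q.shift e) :
    fwdDiff e (P.quotLength Q) =ᶠ[atTop]
      (P.shift e).quotLength (P.map f ⊔ Q.shift e) -
        (P ⊓ (Q.shift e).comap f).quotLength Q := by
  filter_upwards [hfin, hfin.shift e,
    (hfin.shift e).mono (fun _ => le_rfl) (Q' := P.map f ⊔ Q.shift e) (fun _ => le_sup_right),
    hfin.mono (P' := P ⊓ (Q.shift e).comap f) (fun _ => inf_le_left) (fun _ => le_rfl)]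
    with n h₁ h₂ h₃ h₄
  exact toNat_sub_toNat_eq
    (relLength_add_relLength_inf_comap f (hQP (n + e)) (hP n) (hQ n)) h₂ h₄ h₃ h₁

theorem fwdDiff_quotLength_top {P : MultiFiltration I M}
    (hfin : (⊤ : MultiFiltration I M).HasFiniteQuotients P) {f : M →ₗ[A] M} {e : σ →₀ ℕ}
    (hP : P.map f ≤ P.shift e) :
    fwdDiff e (quotLength ⊤ P) =ᶠ[atTop]
      quotLength ⊤ ((P.map (LinearMap.range f).mkQ).shift e) -
        quotLength ⊤ (P.comap (LinearMap.ker f).subtype) -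
        (((P.shift e).comap f).map f).quotLength (P.map f) := by
  have hfin_coker := (hfin.top_map_mkQ (LinearMap.range f)).shift e
  have hfin_ker := hfin.top_comap_subtype (LinearMap.ker f)
  have hfin_image := (hfin.mono (P' := (P.shift e).comap f) (fun _ => le_top) fun _ => le_rfl).map f
  filter_upwards [hfin, hfin.shift e, hfin_coker, hfin_ker, hfin_image] with n h₁ h₂ h₃ h₄ h₅
  have length_eq := relLength_top_add_relLength f (hP n)
  rw [← relLength_top_map_mkQ (LinearMap.range f), ← relLength_top_comap_subtype (LinearMap.ker f),
    add_assoc,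
    add_comm (relLength _ (Submodule.map f _))] at length_eq
  refine (toNat_sub_toNat_eq length_eq h₂ (WithTop.add_ne_top.mpr ⟨h₄, h₅⟩) h₃ h₁).trans ?_
  refine (congrArg (fun j : ℕ => _ - (j : ℤ)) (ENat.toNat_add h₄ h₅)).trans ?_
  rw [Nat.cast_add, ← sub_sub]
  rfl

end MultiFiltration

section ReesIdeal

variable {A σ : Type*} [CommRing A]

/-- The degree `t` part of the ideal generated by `p.1 T_i`, with `i = p.2`, in the multi-Rees
algebra. -/
noncomputable def principalReesIdeal (I : σ → Ideal A) (p : A × σ) (t : σ →₀ ℕ) : Ideal A :=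
  ⨆ (u) (_ : u + Finsupp.single p.2 1 = t), Ideal.span {p.1} * idealPow I u

/-- The degree `t` part of the ideal generated by the elements `p.1 T_i`, with `i = p.2` and `p`
in the list `L`, in the multi-Rees algebra. -/
noncomputable def reesIdeal (I : σ → Ideal A) (L : List (A × σ)) (t : σ →₀ ℕ) : Ideal A :=
  ⨆ p ∈ L, principalReesIdeal I p t

theorem reesIdeal_nil (I : σ → Ideal A) (t : σ →₀ ℕ) : reesIdeal I [] t = ⊥ := by
  simp [reesIdeal]

theorem reesIdeal_cons (I : σ → Ideal A) (p : A × σ) (L : List (A × σ)) (t : σ →₀ ℕ) :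
    reesIdeal I (p :: L) t = principalReesIdeal I p t ⊔ reesIdeal I L t := by
  simp [reesIdeal, iSup_or, iSup_sup_eq]

theorem principalReesIdeal_le_span (I : σ → Ideal A) (p : A × σ) (t : σ →₀ ℕ) :
    principalReesIdeal I p t ≤ Ideal.span {p.1} :=
  iSup₂_le fun _ _ => Ideal.mul_le_left

theorem principalReesIdeal_mul_le (I : σ → Ideal A) (p : A × σ) (t u : σ →₀ ℕ) :
    principalReesIdeal I p t * idealPow I u ≤ principalReesIdeal I p (t + u) := by
  rw [principalReesIdeal]
  simp only [Ideal.iSup_mul]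
  refine iSup₂_le fun w hw => ?_
  rw [mul_assoc, ← idealPow_add]
  exact le_iSup₂_of_le (w + u) (by rw [← hw, add_right_comm]) le_rfl

theorem reesIdeal_mul_le (I : σ → Ideal A) (L : List (A × σ)) (t u : σ →₀ ℕ) :
    reesIdeal I L t * idealPow I u ≤ reesIdeal I L (t + u) := by
  simp only [reesIdeal, Ideal.iSup_mul]
  exact iSup₂_mono fun p _ => principalReesIdeal_mul_le I p t u

theorem reesIdeal_le_idealPow {I : σ → Ideal A} {L : List (A × σ)}
    (hL : ∀ p ∈ L, p.1 ∈ I p.2) (t : σ →₀ ℕ) : reesIdeal I L t ≤ idealPow I t := by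
  refine iSup₂_le fun p hp => iSup₂_le fun u hu => ?_
  rw [← hu, idealPow_add, idealPow_single, pow_one, mul_comm]
  exact Ideal.mul_mono le_rfl ((Ideal.span_singleton_le_iff_mem _).mpr (hL p hp))

end ReesIdeal

namespace MultiFiltration

open Filter

variable {A σ : Type*} [CommRing A] {I : σ → Ideal A}
variable {M : Type*} [AddCommGroup M] [Module A M]

theorem map_lsmul_le_shift (F : MultiFiltration I M) {a : A} {i : σ} (ha : a ∈ I i) :
    F.map (LinearMap.lsmul A M a) ≤ F.shift (Finsupp.single i 1) := by
  rintro n _ ⟨v, hv, rfl⟩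
  exact F.smul_mem ha hv

theorem principalReesIdeal_smul_le {F G : MultiFiltration I M} {p : A × σ}
    (h : F.map (LinearMap.lsmul A M p.1) ≤ G.shift (Finsupp.single p.2 1)) (n t : σ →₀ ℕ) :
    principalReesIdeal I p t • F n ≤ G (n + t) := by
  simp only [principalReesIdeal, Submodule.iSup_smul]
  refine iSup₂_le fun u hu => ?_
  have span_smul_le : Ideal.span {p.1} • F n ≤ G (n + Finsupp.single p.2 1) := by
    rw [Submodule.ideal_span_singleton_smul]
    exact h n
  rw [mul_comm, mul_smul, ← hu, add_comm u, ← add_assoc]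
  exact (Submodule.smul_mono le_rfl span_smul_le).trans (G.smul_le u _)

theorem mixedDiff_quotLength_eventuallyEq_zero [Finite σ] [IsNoetherianRing A] [Module.Finite A M]
    {L : List (A × σ)} (hL : ∀ p ∈ L, p.1 ∈ I p.2) {t : σ →₀ ℕ} {B : Ideal A}
    (ht : idealPow I t ≤ reesIdeal I L t ⊔ B) {P Q : MultiFiltration I M} (hP : P.Stable)
    (hQP : Q ≤ P) (hB : ∀ n, B • P n ≤ Q (n + t)) (hfin : P.HasFiniteQuotients Q) :
    mixedDiff (L.map Prod.snd) (P.quotLength Q) =ᶠ[atTop] 0 := by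
  induction L generalizing P Q B with
  | nil =>
    rw [reesIdeal_nil, bot_sup_eq] at ht
    filter_upwards [hP.eventually_le_smul t] with n ⟨m, hn, hm⟩
    have P_le_Q : P n ≤ Q n := hn ▸ (hn ▸ hm).trans ((Submodule.smul_mono ht le_rfl).trans (hB m))
    simp [mixedDiff, quotLength, relLength_eq_zero P_le_Q]
  | cons p L ih =>
    obtain ⟨hp, hL⟩ := List.forall_mem_cons.mp hL
    rw [reesIdeal_cons, sup_comm (principalReesIdeal I p t), sup_assoc] at ht
    set e := Finsupp.single p.2 1
    set f := LinearMap.lsmul A M p.1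
    have hQ : Q.map f ≤ Q.shift e := Q.map_lsmul_le_shift hp
    have coker_eq_zero : mixedDiff (L.map Prod.snd)
        ((P.shift e).quotLength (P.map f ⊔ Q.shift e)) =ᶠ[atTop] 0 := by
      refine ih hL ht (hP.shift e)
        (fun n => sup_le (P.map_lsmul_le_shift hp n) (hQP (n + e))) (fun n => ?_)
        ((hfin.shift e).mono (fun _ => le_rfl) fun _ => le_sup_right)
      rw [Submodule.sup_smul]
      refine sup_le (principalReesIdeal_smul_le (fun m => le_sup_left) n t)
        (le_sup_of_le_right ?_)
      exact (hB (n + e)).trans_eq (congrArg Q (add_right_comm n e t))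
    have ker_eq_zero : mixedDiff (L.map Prod.snd)
        ((P ⊓ (Q.shift e).comap f).quotLength Q) =ᶠ[atTop] 0 := by
      refine ih hL ht (hP.of_le fun _ => inf_le_left)
        (fun n => le_inf (hQP n) (Submodule.map_le_iff_le_comap.mp (hQ n))) (fun n => ?_)
        (hfin.mono (fun _ => inf_le_left) fun _ => le_rfl)
      rw [Submodule.sup_smul]
      exact sup_le
        (principalReesIdeal_smul_le (fun m => Submodule.map_le_iff_le_comap.mpr inf_le_right) n t)
        ((Submodule.smul_mono le_rfl inf_le_left).trans (hB n))
    have fwdDiff_eq := mixedDiff_congr (L.map Prod.snd)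
      (fwdDiff_quotLength hQP hfin (P.map_lsmul_le_shift hp) hQ)
    rw [mixedDiff_sub] at fwdDiff_eq
    exact fwdDiff_eq.trans (by simpa using coker_eq_zero.sub ker_eq_zero)

end MultiFiltration

/-- The multiplicity symbol `e(a₁, …, aᵣ | N)` of Auslander–Buchsbaum and Wright, defined by
`e(a₁, …, aᵣ | N) = e(a₂, …, aᵣ | N / a₁ N) - e(a₂, …, aᵣ | 0 :_N a₁)` and `e(∅ | N) = ℓ(N)`. Here
`ℓ(N)` is read as `0` where infinite. -/
noncomputable def multiplicitySymbol {A : Type*} [CommRing A] :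
    List A → (N : Type*) → [AddCommGroup N] → [Module A N] → ℤ
  | [], N, _, _ => (Module.length A N).toNat
  | a :: l, N, _, _ =>
    multiplicitySymbol l (N ⧸ LinearMap.range (LinearMap.lsmul A N a)) -
      multiplicitySymbol l (LinearMap.ker (LinearMap.lsmul A N a))

theorem annihilator_smul_eq_bot {A N : Type*} [CommRing A] [AddCommGroup N] [Module A N]
    (P : Submodule A N) : Module.annihilator A N • P = ⊥ := by
  refine le_bot_iff.mp ((Submodule.smul_mono le_rfl le_top).trans ?_)
  rw [← Submodule.annihilator_top, Submodule.annihilator_smul]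

theorem span_singleton_le_annihilator_coker {A N : Type*} [CommRing A] [AddCommGroup N]
    [Module A N] (a : A) :
    Ideal.span {a} ≤ Module.annihilator A (N ⧸ LinearMap.range (LinearMap.lsmul A N a)) := by
  rw [Ideal.span_singleton_le_iff_mem, Module.mem_annihilator]
  rintro ⟨v⟩
  exact (Submodule.Quotient.mk_eq_zero _).mpr ⟨v, rfl⟩

theorem span_singleton_le_annihilator_ker {A N : Type*} [CommRing A] [AddCommGroup N]
    [Module A N] (a : A) :
    Ideal.span {a} ≤ Module.annihilator A (LinearMap.ker (LinearMap.lsmul A N a)) := by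
  rw [Ideal.span_singleton_le_iff_mem, Module.mem_annihilator]
  exact fun v => Subtype.ext v.2

namespace MultiFiltration

open Filter

variable {A σ : Type*} [CommRing A] {I : σ → Ideal A}

variable {M : Type*} [AddCommGroup M] [Module A M]

theorem mixedDiff_quotLength_map_comap_eventuallyEq_zero [Finite σ] [IsNoetherianRing A]
    [Module.Finite A M] {L : List (A × σ)} (hL : ∀ p ∈ L, p.1 ∈ I p.2) {p : A × σ}
    (hp : p.1 ∈ I p.2) {t : σ →₀ ℕ}
    (ht : idealPow I t ≤ reesIdeal I L t ⊔ (principalReesIdeal I p t ⊔ Module.annihilator A M))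
    {P : MultiFiltration I M} (hP : P.Stable)
    (hfin : (⊤ : MultiFiltration I M).HasFiniteQuotients P) :
    mixedDiff (L.map Prod.snd)
      ((((P.shift (Finsupp.single p.2 1)).comap (LinearMap.lsmul A M p.1)).map
        (LinearMap.lsmul A M p.1)).quotLength (P.map (LinearMap.lsmul A M p.1))) =ᶠ[atTop] 0 := by
  refine mixedDiff_quotLength_eventuallyEq_zero hL ht
    ((hP.shift _).of_le fun _ => Submodule.map_comap_le _ _)
    (fun n => Submodule.map_mono
      (Submodule.map_le_iff_le_comap.mp (P.map_lsmul_le_shift hp n))) (fun n => ?_)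
    ((hfin.mono (fun _ => le_top) fun _ => le_rfl).map _)
  rw [Submodule.sup_smul, annihilator_smul_eq_bot, sup_bot_eq]
  exact principalReesIdeal_smul_le
    (fun m => Submodule.map_mono (Submodule.map_comap_le _ _)) n t

theorem mixedDiff_quotLength_top [Finite σ] [IsNoetherianRing A] {L : List (A × σ)}
    (hL : ∀ p ∈ L, p.1 ∈ I p.2) {t : σ →₀ ℕ}
    [Module.Finite A M] (ht : idealPow I t ≤ reesIdeal I L t ⊔ Module.annihilator A M)
    {P : MultiFiltration I M} (hP : P.Stable)
    (hfin : (⊤ : MultiFiltration I M).HasFiniteQuotients P) :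
    ∀ᶠ n in atTop, mixedDiff (L.map Prod.snd) (quotLength ⊤ P) n =
      multiplicitySymbol (L.map Prod.fst) M := by
  induction L generalizing M with
  | nil =>
    rw [reesIdeal_nil, bot_sup_eq] at ht
    filter_upwards [hP.eventually_le_smul t] with n ⟨_, _, hn⟩
    have P_eq_bot : P n = ⊥ := le_bot_iff.mp <|
      hn.trans ((Submodule.smul_mono ht le_rfl).trans (annihilator_smul_eq_bot _).le)
    change ((relLength ⊤ (P _)).toNat : ℤ) = (Module.length A M).toNat
    rw [P_eq_bot, relLength_top, (Submodule.quotEquivOfEqBot ⊥ rfl).length_eq]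
  | cons p L ih =>
    obtain ⟨hp, hL⟩ := List.forall_mem_cons.mp hL
    rw [reesIdeal_cons, sup_comm (principalReesIdeal I p t), sup_assoc] at ht
    have ann_le {N : Type _} [AddCommGroup N] [Module A N]
        (hann : Module.annihilator A M ≤ Module.annihilator A N)
        (hspan : Ideal.span {p.1} ≤ Module.annihilator A N) :
        idealPow I t ≤ reesIdeal I L t ⊔ Module.annihilator A N :=
      ht.trans (sup_le_sup le_rfl (sup_le ((principalReesIdeal_le_span I p t).trans hspan) hann))
    set e := Finsupp.single p.2 1
    set f := LinearMap.lsmul A M p.1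
    have hPe : P.map f ≤ P.shift e := P.map_lsmul_le_shift hp
    have coker_eq := ih hL (ann_le (LinearMap.annihilator_le_of_surjective _
      (Submodule.mkQ_surjective (LinearMap.range f))) (span_singleton_le_annihilator_coker _))
      ((hP.map _).shift e) ((hfin.top_map_mkQ (LinearMap.range f)).shift e)
    have ker_eq := ih hL (ann_le (LinearMap.annihilator_le_of_injective _
      (LinearMap.ker f).subtype_injective) (span_singleton_le_annihilator_ker _))
      (hP.comap_of_injective (LinearMap.ker f).subtype_injective) (hfin.top_comap_subtype _)
    have image_eq_zero := mixedDiff_quotLength_map_comap_eventuallyEq_zero hL hp ht hP hfin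
    have fwdDiff_eq := mixedDiff_congr (L.map Prod.snd) (fwdDiff_quotLength_top hfin hPe)
    simp only [mixedDiff_sub] at fwdDiff_eq
    filter_upwards [coker_eq, ker_eq, image_eq_zero, fwdDiff_eq] with n h₁ h₂ h₃ h₄
    simp only [List.map_cons, mixedDiff, multiplicitySymbol]
    rw [h₄, Pi.sub_apply, Pi.sub_apply, h₁, h₂, h₃, Pi.zero_apply, sub_zero]

end MultiFiltration

section JointReduction

variable {A σ M : Type*} [CommRing A] [AddCommGroup M] [Module A M]

theorem smul_top_pi_le {ι : Type*} [Finite ι] {J K : Ideal A}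
    (h : J • (⊤ : Submodule A M) ≤ K • ⊤) : J • (⊤ : Submodule A (ι → M)) ≤ K • ⊤ := by
  classical
  cases nonempty_fintype ι
  refine Submodule.smul_le.mpr fun a ha w _ => ?_
  rw [← Finset.univ_sum_single (a • w)]
  refine Submodule.sum_mem _ fun i _ => ?_
  have mem_map : LinearMap.single A (fun _ : ι => M) i (a • w i) ∈
      (K • (⊤ : Submodule A M)).map (LinearMap.single A _ i) :=
    ⟨_, h (Submodule.smul_mem_smul ha Submodule.mem_top), rfl⟩
  rw [Submodule.map_smul''] at mem_map
  exact Submodule.smul_mono le_rfl le_top mem_map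

theorem exists_ker_toSpanSingleton_eq_annihilator (A M : Type*) [CommRing A] [AddCommGroup M]
    [Module A M] [Module.Finite A M] :
    ∃ (r : ℕ) (v : Fin r → M),
      LinearMap.ker (LinearMap.toSpanSingleton A (Fin r → M) v) = Module.annihilator A M := by
  obtain ⟨r, v, hv⟩ := Module.Finite.exists_fin (R := A) (M := M)
  refine ⟨r, v, Ideal.ext fun a => ?_⟩
  rw [← Submodule.annihilator_top, ← hv, Submodule.mem_annihilator_span]
  simp [funext_iff]

theorem smul_top_pow_le {J K : Ideal A} (h : J • (⊤ : Submodule A M) ≤ K • ⊤) (n : ℕ) :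
    J ^ n • (⊤ : Submodule A M) ≤ K ^ n • ⊤ := by
  induction n with
  | zero => simp
  | succ n ih =>
    rw [pow_succ', mul_smul, pow_succ, mul_smul]
    refine (Submodule.smul_mono le_rfl ih).trans ?_
    rw [← mul_smul, mul_comm, mul_smul]
    exact Submodule.smul_mono le_rfl h

/-- Modulo the annihilator, the powers `J ^ n` embed into a power of `M` as a filtration contained
in the stable one `K ^ n • ⊤`, so that they form a stable `K`-filtration themselves. -/
theorem exists_pow_succ_le_mul_pow_sup_annihilator [IsNoetherianRing A] [Module.Finite A M]
    {J K : Ideal A} (hKJ : K ≤ J) (h : J • (⊤ : Submodule A M) ≤ K • ⊤) :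
    ∃ q : ℕ, J ^ (q + 1) ≤ K * J ^ q ⊔ Module.annihilator A M := by
  obtain ⟨r, v, hv⟩ := exists_ker_toSpanSingleton_eq_annihilator A M
  set φ := LinearMap.toSpanSingleton A (Fin r → M) v
  have smul_pi_le := smul_top_pi_le (ι := Fin r) h
  have map_le (n : ℕ) : Submodule.map φ (J ^ n : Ideal A) ≤ K ^ n • ⊤ := by
    refine le_trans ?_ (smul_top_pow_le smul_pi_le n)
    rintro _ ⟨a, ha, rfl⟩
    rw [LinearMap.toSpanSingleton_apply]
    exact Submodule.smul_mem_smul ha Submodule.mem_top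
  let F : K.Filtration (Fin r → M) :=
    { N n := Submodule.map φ (J ^ n : Ideal A)
      mono n := Submodule.map_mono (Ideal.pow_le_pow_right n.le_succ)
      smul_le n := by
        rw [← Submodule.map_smul'', pow_succ']
        exact Submodule.map_mono (Ideal.mul_mono_left hKJ) }
  obtain ⟨q, hq⟩ := (K.stableFiltration_stable ⊤).of_le (show F ≤ _ from map_le)
  refine ⟨q, ?_⟩
  have map_eq : Submodule.map φ (K * J ^ q : Ideal A) =
      Submodule.map φ (J ^ (q + 1) : Ideal A) := by
    rw [← smul_eq_mul, Submodule.map_smul'']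
    exact hq q le_rfl
  rw [← hv, ← Submodule.comap_map_eq, map_eq]
  exact Submodule.le_comap_map _ _

theorem exists_idealPow_le_reesIdeal_sup_annihilator [IsNoetherianRing A]
    [Module.Finite A M] {I : σ → Ideal A} {L : List (A × σ)} (hL : ∀ p ∈ L, p.1 ∈ I p.2)
    {t : σ →₀ ℕ} (h : idealPow I t • (⊤ : Submodule A M) ≤ reesIdeal I L t • ⊤) :
    ∃ t', idealPow I t' ≤ reesIdeal I L t' ⊔ Module.annihilator A M := by
  obtain ⟨q, hq⟩ := exists_pow_succ_le_mul_pow_sup_annihilator (reesIdeal_le_idealPow hL t) h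
  refine ⟨t + q • t, ?_⟩
  rw [← succ_nsmul', idealPow_nsmul, succ_nsmul']
  refine hq.trans (sup_le_sup ?_ le_rfl)
  rw [← idealPow_nsmul]
  exact reesIdeal_mul_le I L t (q • t)

theorem jrIdeal_mul_le_reesIdeal {s d : ℕ} (I : Fin s → Ideal A) (x : Fin d → A)
    (c : Fin d → Fin s) (i : Fin s) (u : Fin s →₀ ℕ) :
    jrIdeal A x c i * idealPow I u ≤
      reesIdeal I (List.ofFn fun j => (x j, c j)) (u + Finsupp.single i 1) := by
  rw [jrIdeal, Ideal.span, Submodule.span_eq_iSup_of_singleton_spans]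
  simp only [Ideal.iSup_mul]
  refine iSup₂_le ?_
  rintro _ ⟨j, rfl, rfl⟩
  refine le_iSup₂_of_le (x j, c j) (List.mem_ofFn.mpr ⟨j, rfl⟩) ?_
  exact le_iSup₂_of_le (f := fun w _ => Ideal.span {x j} * idealPow I w) u rfl le_rfl

theorem IsJointReductionEq.exists_smul_top_le {s d : ℕ} {I : Fin s → Ideal A} {x : Fin d → A}
    {c : Fin d → Fin s} (h : IsJointReductionEq A M I x c) :
    ∃ t, idealPow I t • (⊤ : Submodule A M) ≤
      reesIdeal I (List.ofFn fun j => (x j, c j)) t • ⊤ := by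
  obtain ⟨N, hN⟩ := h.2
  let τ : Fin s →₀ ℕ := Finsupp.equivFunOnFinite.symm fun _ => N + 1
  let τ' (i : Fin s) : Fin s →₀ ℕ :=
    Finsupp.equivFunOnFinite.symm fun j => N + if j = i then 0 else 1
  have τ'_add_single (i) : τ' i + Finsupp.single i 1 = τ := by
    ext j
    rcases eq_or_ne j i with rfl | hj <;> simp [τ, τ', *]
  have idealPow_eq : idealPow I τ = ∏ i, I i ^ (N + 1) :=
    idealPow_eq_prod I τ
  refine ⟨τ, ?_⟩
  rw [idealPow_eq, hN (fun _ => N) fun _ => le_rfl]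
  refine Finset.sum_induction _ (· ≤ reesIdeal I _ τ • (⊤ : Submodule A M))
    (fun _ _ => sup_le) bot_le fun i _ => ?_
  have prod_eq : ∏ j, I j ^ (N + if j = i then 0 else 1) = idealPow I (τ' i) :=
    (idealPow_eq_prod I (τ' i)).symm
  rw [prod_eq, ← mul_smul, ← τ'_add_single i]
  exact Submodule.smul_mono (jrIdeal_mul_le_reesIdeal I x c i (τ' i)) le_rfl

end JointReduction

section MixedMultiplicity

open Filter

variable {A M : Type*} [CommRing A] [AddCommGroup M] [Module A M]

theorem lenNat_quotient_eq_relLength (Q : Submodule A M) :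
    lenNat A (M ⧸ Q) = (relLength ⊤ Q).toNat := by
  rw [relLength_top, lenNat, modLength, Module.length_eq_height]

theorem OfTypeCount.count_ofFn {s d : ℕ} {c : Fin d → Fin s} {k : Fin s → ℕ}
    (h : OfTypeCount c k) (i : Fin s) : (List.ofFn c).count i = k i := by
  rw [← h i, ← Multiset.coe_count, ← Fin.univ_val_map, Multiset.count_map]
  simp only [eq_comm]
  rfl

theorem IsMixedMultPrimary.eq_multiplicitySymbol [IsNoetherianRing A] [Module.Finite A M]
    {s d : ℕ} {I : Fin s → Ideal A} {k : Fin s → ℕ} {e : ℕ} (he : IsMixedMultPrimary A M I k e)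
    {x : Fin d → A} {c : Fin d → Fin s} (hjr : IsJointReduction A M I x c k) :
    (e : ℤ) = multiplicitySymbol (List.ofFn x) M := by
  obtain ⟨P, hP, ⟨N, hN⟩, e_eq⟩ := he
  have eventually_le : ∀ᶠ n : Fin s →₀ ℕ in atTop, ∀ i, N ≤ n i :=
    eventually_ge_atTop (Finsupp.equivFunOnFinite.symm fun _ => N)
  have adic_eq (n) : MultiFiltration.adic I M n = (∏ i, I i ^ n i) • ⊤ :=
    congrArg (· • ⊤) (idealPow_eq_prod I n)
  have hfin : (⊤ : MultiFiltration I M).HasFiniteQuotients (MultiFiltration.adic I M) := by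
    filter_upwards [eventually_le] with n hn
    rw [adic_eq]
    exact (relLength_top _).trans_ne (Module.length_ne_top_iff.mpr (hN n hn).1)
  have quotLength_eq : (fun n => Int.castAddHom ℚ (MultiFiltration.quotLength ⊤
      (MultiFiltration.adic I M) n)) =ᶠ[atTop] fun n => P.eval fun i => (n i : ℚ) := by
    filter_upwards [eventually_le] with n hn
    rw [← (hN n hn).2, lenNat_quotient_eq_relLength, ← adic_eq]
    rfl
  have mem : ∀ p ∈ List.ofFn fun j => (x j, c j), p.1 ∈ I p.2 := by
    simpa [List.forall_mem_ofFn_iff] using hjr.1.1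
  obtain ⟨t, ht⟩ := hjr.1.exists_smul_top_le
  obtain ⟨t', ht'⟩ := exists_idealPow_le_reesIdeal_sup_annihilator mem ht
  obtain ⟨n, symbol_eq, diff_eq⟩ :=
    ((MultiFiltration.mixedDiff_quotLength_top mem ht' MultiFiltration.stable_adic hfin).and
      (mixedDiff_congr (List.ofFn c) quotLength_eq)).exists
  rw [List.map_ofFn, List.map_ofFn] at symbol_eq
  rw [mixedDiff_map, mixedDiff_eval (k := Finsupp.equivFunOnFinite.symm k) hjr.2.count_ofFn
    (by simpa [Finsupp.degree_eq_sum] using hP)] at diff_eq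
  exact_mod_cast e_eq.trans (diff_eq.symm.trans (congrArg Int.cast symbol_eq))

theorem isJointReduction_span_range {d : ℕ} (x : Fin d → A) :
    IsJointReduction A M (fun _ : Fin 1 => Ideal.span (Set.range x)) x (fun _ => 0)
      fun _ => d := by
  refine ⟨⟨fun j => Ideal.subset_span ⟨j, rfl⟩, 0, fun n _ => ?_⟩, fun i => ?_⟩
  · simp [jrIdeal, pow_succ', mul_smul]
  · simp [Subsingleton.elim 0 i]

theorem IsHSMult.isMixedMultPrimary {q : Ideal A} {d e : ℕ} (h : IsHSMult A M q d e) :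
    IsMixedMultPrimary A M (fun _ : Fin 1 => q) (fun _ => d) e := by
  obtain ⟨P, hP, ⟨N, hN⟩, he⟩ := h
  refine ⟨(MvPolynomial.uniqueAlgEquiv ℚ (Fin 1)).symm P, ?_, ⟨N, fun n hn => ?_⟩, ?_⟩
  · refine Finset.sup_le fun m hm => ?_
    rw [MvPolynomial.mem_support_iff, MvPolynomial.coeff_uniqueAlgEquiv_symm] at hm
    simpa [Finsupp.sum_fintype] using (Polynomial.le_natDegree_of_ne_zero hm).trans hP
  · rw [Fin.prod_univ_one, ← MvPolynomial.eval₂_id, MvPolynomial.eval₂_uniqueAlgEquiv_symm]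
    exact hN (n 0) (hn 0)
  · rw [MvPolynomial.coeff_uniqueAlgEquiv_symm, Fin.prod_univ_one]
    exact he

end MixedMultiplicity

theorem rees_mixedMult_eq_multiplicity_of_jointReduction_general {A M : Type*} [CommRing A]
    [IsNoetherianRing A] [AddCommGroup M] [Module A M] [Module.Finite A M] {s d : ℕ}
    {I : Fin s → Ideal A} {k : Fin s → ℕ} {x : Fin d → A} {c : Fin d → Fin s}
    (hjr : IsJointReduction A M I x c k) {e₁ e₂ : ℕ} (he₁ : IsMixedMultPrimary A M I k e₁)
    (he₂ : IsHSMult A M (Ideal.span (Set.range x)) d e₂) : e₁ = e₂ := by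
  have symbol_eq₁ := he₁.eq_multiplicitySymbol hjr
  have symbol_eq₂ := he₂.isMixedMultPrimary.eq_multiplicitySymbol (isJointReduction_span_range x)
  exact_mod_cast symbol_eq₁.trans symbol_eq₂.symm

/-- Corollary 3.6; Rees's theorem.  If `I 1, …, I s` are `m`-primary,
`k 1 + ⋯ + k s = d`, and `R` is a joint reduction of `(I 1, …, I s)` with respect to `M` of
type `(k 1, …, k s)`, then `e_A(I 1^{[k 1]}, …, I s^{[k s]}; M) = e_A(R; M)`. -/
theorem rees_mixedMult_eq_multiplicity_of_jointReduction
    (A : Type*) [CommRing A] [IsNoetherianRing A] [IsLocalRing A]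
    [Infinite (ResidueField A)]
    (M : Type*) [AddCommGroup M] [Module A M] [Module.Finite A M]
    {s : ℕ} (I : Fin s → Ideal A)
    (hprim : ∀ i, (I i).radical = maximalIdeal A)
    (d : ℕ) (hd : 0 < d) (hdim : modDim A M = (d : WithBot ℕ∞))
    (k : Fin s → ℕ) (hsum : ∑ i, k i = d)
    (x : Fin d → A) (c : Fin d → Fin s)
    (hjr : IsJointReduction A M I x c k) :
    ∀ e₁ e₂ : ℕ, IsMixedMultPrimary A M I k e₁ →
      IsHSMult A M (Ideal.span (Set.range x)) d e₂ → e₁ = e₂ := by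
  exact fun _ _ => rees_mixedMult_eq_multiplicity_of_jointReduction_general hjr
end
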